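/- Let Σ be a non-singular fan in ℝ^n satisfying conditions (2.9.1) and (2.9.2), and let D = (d_1,…,d_r) be positive integers with ∑_k d_k n_k ≠ 0. Choose D* = (d*_1,…,d*_r) as in (2.9.1) and m_0 ∈ ℕ with d_k < m_0·d*_k for all k, set D_0 = (m_0 d*_1,…,m_0 d*_r), let j_{D_0} : Pol*_{D_0}(S¹,X_Σ) → ΩU(K_Σ) be a continuous lift of i_{D_0} (note ∑_k m_0 d*_k n_k = 0), and define j_D = j_{D_0} ∘ s_{D,D_0} : Pol*_D(S¹,X_Σ) → ΩU(K_Σ). Then j_D is a homotopy equivalence through dimension d(D,Σ) = 2(r_min(Σ)−1)·d_min − 2. -/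

import Mathlib

open scoped BigOperators
attribute [local instance] Classical.propDecidable

noncomputable section

namespace Toric


/-! ### Cones and fans -/

/-- The real vector associated to an integer vector. -/
def zr {n : ℕ} (v : Fin n → ℤ) : Fin n → ℝ := fun i => (v i : ℝ)

/-- A convex rational polyhedral cone in `ℝ^n`. -/
def IsRatCone {n : ℕ} (σ : Set (Fin n → ℝ)) : Prop :=
  ∃ s : Finset (Fin n → ℤ),
    σ = {x | ∃ lam : (Fin n → ℤ) → ℝ, (∀ v, 0 ≤ lam v) ∧ x = ∑ v ∈ s, lam v • zr v}

/-- A cone is strongly convex if `σ ∩ (-σ) = {0}`. -/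
def StronglyConvex {n : ℕ} (σ : Set (Fin n → ℝ)) : Prop := σ ∩ (-σ) = {0}

/-- `τ` is a face of `σ`, cut out by a linear form nonnegative on `σ`. -/
def IsFaceOf {n : ℕ} (τ σ : Set (Fin n → ℝ)) : Prop :=
  ∃ L : (Fin n → ℝ) →ₗ[ℝ] ℝ, (∀ x ∈ σ, 0 ≤ L x) ∧ τ = σ ∩ {x | L x = 0}

/-- A fan in `ℝ^n`: a finite collection of strongly convex rational polyhedral cones,
closed under taking faces, such that the intersection of two cones is a face of each;
we also require that it strictly contains `{0}`. -/
structure Fan (n : ℕ) where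
  cones : Set (Set (Fin n → ℝ))
  finite : cones.Finite
  ratCone : ∀ σ ∈ cones, IsRatCone σ
  stronglyConvex : ∀ σ ∈ cones, StronglyConvex σ
  face_mem : ∀ σ ∈ cones, ∀ τ, IsFaceOf τ σ → τ ∈ cones
  inter_face : ∀ σ ∈ cones, ∀ τ ∈ cones, IsFaceOf (σ ∩ τ) σ
  zero_mem : ({0} : Set (Fin n → ℝ)) ∈ cones
  nontrivial : cones ≠ {({0} : Set (Fin n → ℝ))}

/-- A fan is complete if its cones cover `ℝ^n`. -/
def Fan.Complete {n : ℕ} (F : Fan n) : Prop := ⋃₀ F.cones = Set.univ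

/-- A fan is non-singular if each of its cones is spanned by part of a `ℤ`-basis of `ℤ^n`. -/
def Fan.NonSingular {n : ℕ} (F : Fan n) : Prop :=
  ∀ σ ∈ F.cones, ∃ (b : Module.Basis (Fin n) ℤ (Fin n → ℤ)) (s : Finset (Fin n)),
    σ = {x | ∃ lam : Fin n → ℝ, (∀ i, 0 ≤ lam i) ∧ x = ∑ i ∈ s, lam i • zr (b i)}

/-- The ray (one-dimensional cone) generated by a vector. -/
def ray {n : ℕ} (v : Fin n → ℝ) : Set (Fin n → ℝ) := {x | ∃ t : ℝ, 0 ≤ t ∧ x = t • v}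

/-- The cone spanned by the vectors `n_i`, `i ∈ s`. -/
def coneIdx {n r : ℕ} (N : Fin r → Fin n → ℤ) (s : Finset (Fin r)) : Set (Fin n → ℝ) :=
  {x | ∃ lam : Fin r → ℝ, (∀ i, 0 ≤ lam i) ∧ x = ∑ i ∈ s, lam i • zr (N i)}

/-- A point of `ℝ^n` lying in the lattice `ℤ^n`. -/
def IsLatticePoint {n : ℕ} (x : Fin n → ℝ) : Prop := ∀ i, ∃ m : ℤ, x i = (m : ℝ)

/-- `N 1, …, N r` is the (complete, repetition-free) list of primitive generators of the
one-dimensional cones of the fan `F`. -/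
structure IsPrimGens {n r : ℕ} (F : Fan n) (N : Fin r → Fin n → ℤ) : Prop where
  ray_mem : ∀ k, ray (zr (N k)) ∈ F.cones
  ne_zero : ∀ k, N k ≠ 0
  primitive : ∀ k, ray (zr (N k)) ∩ {x | IsLatticePoint x}
      = {x | ∃ c : ℕ, x = (c : ℝ) • zr (N k)}
  inj : Function.Injective N
  complete : ∀ σ ∈ F.cones, Module.finrank ℝ (Submodule.span ℝ σ) = 1 →
      ∃ k, σ = ray (zr (N k))

/-- Condition (2.9.1): a positive integral relation among the primitive generators. -/
def Cond1 {n r : ℕ} (N : Fin r → Fin n → ℤ) : Prop :=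
  ∃ d : Fin r → ℕ, (∀ k, 0 < d k) ∧ ∑ k, (d k : ℤ) • N k = 0

/-- Condition (2.9.2): the primitive generators span `ℤ^n` over `ℤ`. -/
def Cond2 {n r : ℕ} (N : Fin r → Fin n → ℤ) : Prop :=
  Submodule.span ℤ (Set.range N) = ⊤

/-- The underlying simplicial complex `K_Σ` of a fan. -/
def KC {n r : ℕ} (F : Fan n) (N : Fin r → Fin n → ℤ) : Set (Finset (Fin r)) :=
  {s | coneIdx N s ∈ F.cones}

/-- A primitive set: it spans no cone of the fan, but every proper subset does. -/
def PrimitiveSet {r : ℕ} (K : Set (Finset (Fin r))) (s : Finset (Fin r)) : Prop :=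
  s ∉ K ∧ ∀ t ⊂ s, t ∈ K

/-- `r_min`: the minimal cardinality of a primitive set. -/
def rmin {r : ℕ} (K : Set (Finset (Fin r))) : ℕ :=
  sInf {m | ∃ s : Finset (Fin r), PrimitiveSet K s ∧ s.card = m}

/-- `d_min = min {d_1, …, d_r}`. -/
def dmin {r : ℕ} (D : Fin r → ℕ) : ℕ := sInf (Set.range D)

/-- The stability dimension `d(D,Σ) = 2(r_min − 1) d_min − 2`. -/
def dBound {r : ℕ} (K : Set (Finset (Fin r))) (D : Fin r → ℕ) : ℤ :=
  2 * ((rmin K : ℤ) - 1) * (dmin D : ℤ) - 2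

/-- The connectivity bound `C_D(Σ) = 2(r_min − 1) d_min − 1`. -/
def CBound {r : ℕ} (K : Set (Finset (Fin r))) (D : Fin r → ℕ) : ℤ :=
  2 * ((rmin K : ℤ) - 1) * (dmin D : ℤ) - 1

/-! ### Coordinate subspaces, `U(K)`, `G_Σ` and the toric quotient -/

/-- The coordinate subspace `L_σ ⊆ ℂ^r`. -/
def LSub {r : ℕ} (σ : Finset (Fin r)) : Set (Fin r → ℂ) := {x | ∀ i ∈ σ, x i = 0}

/-- The complement `U(K)` of the coordinate subspace arrangement of type `K`. -/
def UK {r : ℕ} (K : Set (Finset (Fin r))) : Set (Fin r → ℂ) :=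
  (⋃ σ ∈ {s : Finset (Fin r) | s ∉ K}, LSub σ)ᶜ

lemma mem_UK {r : ℕ} {K : Set (Finset (Fin r))} {x : Fin r → ℂ} :
    x ∈ UK K ↔ ∀ σ : Finset (Fin r), σ ∉ K → ∃ i ∈ σ, x i ≠ 0 := by
  constructor
  · intro h σ hσ
    by_contra hc
    push_neg at hc
    exact h (Set.mem_biUnion hσ (fun i hi => hc i hi))
  · intro h hx
    rcases Set.mem_iUnion₂.1 hx with ⟨σ, hσ, hxσ⟩
    rcases h σ hσ with ⟨i, hi, hne⟩
    exact hne (hxσ i hi)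

/-- The group `G_Σ` (as a subset of `ℂ^r`). -/
def GSet {n r : ℕ} (N : Fin r → Fin n → ℤ) : Set (Fin r → ℂ) :=
  {μ | (∀ k, μ k ≠ 0) ∧ ∀ m : Fin n → ℤ, ∏ k, μ k ^ (∑ j, N k j * m j) = 1}

/-- The orbit relation of the `G_Σ`-action on `U(K_Σ)`. -/
def toricRel {n r : ℕ} (N : Fin r → Fin n → ℤ) (K : Set (Finset (Fin r)))
    (x y : ↥(UK K)) : Prop :=
  ∃ μ ∈ GSet N, (fun i => μ i * (x : Fin r → ℂ) i) = (y : Fin r → ℂ)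

/-- The toric variety `X_Σ = U(K_Σ)/G_Σ`, as a topological quotient. -/
def XS {n r : ℕ} (N : Fin r → Fin n → ℤ) (K : Set (Finset (Fin r))) : Type :=
  Quot (toricRel N K)

instance {n r : ℕ} (N : Fin r → Fin n → ℤ) (K : Set (Finset (Fin r))) :
    TopologicalSpace (XS N K) :=
  instTopologicalSpaceQuot

/-- The quotient map `q_Σ : U(K_Σ) → X_Σ`. -/
def qmap {n r : ℕ} (N : Fin r → Fin n → ℤ) (K : Set (Finset (Fin r))) :
    ↥(UK K) → XS N K :=
  Quot.mk (toricRel N K)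

/-- `q_Σ` as a continuous map. -/
def qCont {n r : ℕ} (N : Fin r → Fin n → ℤ) (K : Set (Finset (Fin r))) :
    C(↥(UK K), XS N K) :=
  ⟨qmap N K, continuous_quot_mk⟩

lemma coneIdx_empty {n r : ℕ} (N : Fin r → Fin n → ℤ) :
    coneIdx N (∅ : Finset (Fin r)) = ({0} : Set (Fin n → ℝ)) := by
  ext x
  constructor
  · rintro ⟨lam, -, hx⟩
    simpa using hx
  · intro hx
    exact ⟨0, fun i => le_refl 0, by simpa using hx⟩

lemma empty_mem_KC {n r : ℕ} (F : Fan n) (N : Fin r → Fin n → ℤ) :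
    (∅ : Finset (Fin r)) ∈ KC F N := by
  show coneIdx N ∅ ∈ F.cones
  rw [coneIdx_empty]
  exact F.zero_mem

/-- The point `(1,…,1)`. -/
def onesC {r : ℕ} : Fin r → ℂ := fun _ => 1

lemma ones_mem_UK {r : ℕ} {K : Set (Finset (Fin r))} (h : (∅ : Finset (Fin r)) ∈ K) :
    (onesC : Fin r → ℂ) ∈ UK K := by
  rw [mem_UK]
  intro σ hσ
  rcases Finset.nonempty_iff_ne_empty.2 (fun he : σ = ∅ => hσ (by rw [he]; exact h)) with ⟨i, hi⟩
  exact ⟨i, hi, one_ne_zero⟩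

/-- The base point `(1,…,1)` of `U(K_Σ)`. -/
def onesUK {r : ℕ} {K : Set (Finset (Fin r))} (h : (∅ : Finset (Fin r)) ∈ K) : ↥(UK K) :=
  ⟨onesC, ones_mem_UK h⟩

/-- The base point `[1,…,1]` of `X_Σ`. -/
def baseX {n r : ℕ} (N : Fin r → Fin n → ℤ) (K : Set (Finset (Fin r)))
    (h : (∅ : Finset (Fin r)) ∈ K) : XS N K :=
  qmap N K (onesUK h)



/-! ### Spaces of tuples of monic polynomials -/

/-- The monic polynomial `z^d + a_{d-1} z^{d-1} + ⋯ + a_0` with coefficient data `a`. -/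
def toPoly {d : ℕ} (a : Fin d → ℂ) : Polynomial ℂ :=
  Polynomial.X ^ d + ∑ i : Fin d, Polynomial.C (a i) * Polynomial.X ^ (i : ℕ)

/-- The space `Pol*_D(S¹, X_Σ)` of `r`-tuples of monic polynomials of multidegree `D`
(in coefficient coordinates) such that for every `σ ∉ K` the polynomials `{f_i : i ∈ σ}`
have no common real root. -/
def PolSp {r : ℕ} (K : Set (Finset (Fin r))) (D : Fin r → ℕ) :
    Set (∀ k : Fin r, Fin (D k) → ℂ) :=
  {f | ∀ σ : Finset (Fin r), σ ∉ K → ∀ t : ℝ,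
        ∃ k ∈ σ, (toPoly (f k)).eval (t : ℂ) ≠ 0}

lemma polEval_mem_UK {r : ℕ} {K : Set (Finset (Fin r))} {D : Fin r → ℕ}
    (f : ↥(PolSp K D)) (t : ℝ) :
    (fun k => (toPoly (f.1 k)).eval (t : ℂ)) ∈ UK K :=
  mem_UK.2 fun σ hσ => f.2 σ hσ t

/-! ### Loop spaces and induced maps on homotopy groups -/

/-- The loop space `Ω X = Map*(S¹, X)` with `S¹ = ℝ ∪ {∞}` (the one-point
compactification of `ℝ`), based at `x₀`. -/
def Loop (X : Type*) [TopologicalSpace X] (x₀ : X) : Type _ :=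
  {γ : C(OnePoint ℝ, X) // γ OnePoint.infty = x₀}

instance {X : Type*} [TopologicalSpace X] (x₀ : X) : TopologicalSpace (Loop X x₀) :=
  instTopologicalSpaceSubtype

/-- The constant loop, base point of `Ω X`. -/
def Loop.const {X : Type*} [TopologicalSpace X] (x₀ : X) : Loop X x₀ :=
  ⟨ContinuousMap.const _ x₀, rfl⟩

/-- A based continuous map induces a continuous map of loop spaces. -/
def loopMap {X Y : Type*} [TopologicalSpace X] [TopologicalSpace Y] {x₀ : X} {y₀ : Y}
    (f : C(X, Y)) (hf : f x₀ = y₀) : C(Loop X x₀, Loop Y y₀) where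
  toFun γ := ⟨f.comp γ.1, by simp [γ.2, hf]⟩
  continuous_toFun := by
    apply Continuous.subtype_mk
    exact (ContinuousMap.continuous_postcomp f).comp continuous_subtype_val

/-- The map induced by a continuous map on homotopy groups (`π_q`). -/
def piMap (q : ℕ) {X Y : Type*} [TopologicalSpace X] [TopologicalSpace Y]
    (f : C(X, Y)) (x : X) :
    HomotopyGroup (Fin q) X x → HomotopyGroup (Fin q) Y (f x) :=
  Quotient.map
    (fun p => ⟨f.comp p.1, fun y hy => by
      show f (p.1 y) = f x
      rw [p.2 y hy]⟩)
    (fun p₁ p₂ h => h.elim fun H => ⟨H.compContinuousMap f⟩)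

/-- `f` is a homotopy equivalence through dimension `d`: it induces isomorphisms on
`π_k` for all `k ≤ d` (at every base point). -/
def HomotopyEquivThrough {X Y : Type*} [TopologicalSpace X] [TopologicalSpace Y]
    (f : C(X, Y)) (d : ℤ) : Prop :=
  ∀ (x : X) (k : ℕ), (k : ℤ) ≤ d → Function.Bijective (piMap k f x)

/-- A genuine homotopy equivalence. -/
def IsHtpyEquiv {X Y : Type*} [TopologicalSpace X] [TopologicalSpace Y]
    (f : C(X, Y)) : Prop :=
  ∃ g : C(Y, X), (f.comp g).Homotopic (ContinuousMap.id Y) ∧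
    (g.comp f).Homotopic (ContinuousMap.id X)

/-! ### `i_D`, lifts, and stabilization maps -/

/-- `j : Pol*_D → Ω U(K_Σ)` is a lift of `i_D` through `Ω q_Σ`, i.e. `Ω q_Σ ∘ j = i_D`:
for every tuple `f` and real `t`, the loop `j f` at time `t` lies over the point
`[f_1(t), …, f_r(t)]` of `X_Σ` (and at `∞` over `[1,…,1]`, automatically). -/
def IsLiftOfID {n r : ℕ} (N : Fin r → Fin n → ℤ) (K : Set (Finset (Fin r)))
    (hE : (∅ : Finset (Fin r)) ∈ K) (D : Fin r → ℕ)
    (j : ↥(PolSp K D) → Loop ↥(UK K) (onesUK hE)) : Prop :=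
  ∀ (f : ↥(PolSp K D)) (t : ℝ),
    qmap N K ((j f).1 (t : OnePoint ℝ)) =
      qmap N K ⟨fun k => (toPoly (f.1 k)).eval (t : ℂ), polEval_mem_UK f t⟩

/-- `i : Pol*_D → Ω X_Σ` is the map `i_D` given by evaluation. -/
def IsID {n r : ℕ} (N : Fin r → Fin n → ℤ) (K : Set (Finset (Fin r)))
    (hE : (∅ : Finset (Fin r)) ∈ K) (D : Fin r → ℕ)
    (i : ↥(PolSp K D) → Loop (XS N K) (baseX N K hE)) : Prop :=
  ∀ (f : ↥(PolSp K D)) (t : ℝ),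
    (i f).1 (t : OnePoint ℝ) =
      qmap N K ⟨fun k => (toPoly (f.1 k)).eval (t : ℂ), polEval_mem_UK f t⟩

/-- `φ` is an admissible parameter for the stabilization maps: a homeomorphism of `ℂ`
onto the half plane `{Re < bound}` carrying `ℝ` onto `(-∞, bound)`. -/
def AdmissiblePhi (bound : ℝ) (φ : ℂ → ℂ) : Prop :=
  Continuous φ ∧ Function.Injective φ ∧ IsOpenMap φ ∧
    Set.range φ = {w : ℂ | w.re < bound} ∧
    φ '' {z : ℂ | z.im = 0} = {z : ℂ | z.im = 0 ∧ z.re < bound}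

/-- The defining property of the stabilization map
`s_{D,D'}(f)_k = φ(f_k) · (z - x_k)^{d'_k - d_k}`, where `φ(f)` denotes the monic
polynomial whose roots are the images under `φ` of the roots of `f`. -/
def StabSpec {r : ℕ} (K : Set (Finset (Fin r))) (φ : ℂ → ℂ) (xpt : Fin r → ℂ)
    (D D' : Fin r → ℕ) (s : ↥(PolSp K D) → ↥(PolSp K D')) : Prop :=
  ∀ (f : ↥(PolSp K D)) (k : Fin r),
    toPoly ((s f).1 k) =
      (((toPoly (f.1 k)).roots.map φ).map
        fun α => Polynomial.X - Polynomial.C α).prod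
        * (Polynomial.X - Polynomial.C (xpt k)) ^ (D' k - D k)

/-- The general defining property of the map `j_D : Pol*_D → Ω U(K_Σ)`:
when `∑ d_k n_k = 0` it is a lift of `i_D` through `Ω q_Σ`, and otherwise it is the
composite `j_{D₀} ∘ s_{D,D₀}` for a suitable `D₀ = m₀ D*` as in condition (2.9.1). -/
def IsJD {n r : ℕ} (N : Fin r → Fin n → ℤ) (K : Set (Finset (Fin r)))
    (hE : (∅ : Finset (Fin r)) ∈ K) (D : Fin r → ℕ)
    (j : C(↥(PolSp K D), Loop ↥(UK K) (onesUK hE))) : Prop :=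
  ((∑ k, (D k : ℤ) • N k = 0) ∧ IsLiftOfID N K hE D j) ∨
  ((∑ k, (D k : ℤ) • N k ≠ 0) ∧
    ∃ (dstar : Fin r → ℕ) (m₀ : ℕ),
      (∀ k, 0 < dstar k) ∧ (∑ k, (dstar k : ℤ) • N k = 0) ∧
      (∀ k, D k < m₀ * dstar k) ∧
      ∃ (φ : ℂ → ℂ) (xpt : Fin r → ℂ),
        AdmissiblePhi ((∑ k, D k : ℕ) : ℝ) φ ∧
        (∀ k, ((∑ k, D k : ℕ) : ℝ) < (xpt k).re) ∧ Function.Injective xpt ∧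
        ∃ (j₀ : C(↥(PolSp K fun k => m₀ * dstar k), Loop ↥(UK K) (onesUK hE)))
          (s₀ : C(↥(PolSp K D), ↥(PolSp K fun k => m₀ * dstar k))),
          IsLiftOfID N K hE _ j₀ ∧ StabSpec K φ xpt D _ s₀ ∧ j = j₀.comp s₀)

/-! ### Stabilized (colimit) spaces -/

/-- The multidegree `D + t·e`. -/
def Dt {r : ℕ} (D : Fin r → ℕ) (t : ℕ) : Fin r → ℕ := fun k => D k + t

/-- Carrier of the stabilized space: the disjoint union of the `Pol*_{D+te}`. -/
def ColCar {r : ℕ} (K : Set (Finset (Fin r))) (D : Fin r → ℕ) : Type :=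
  Σ t : ℕ, ↥(PolSp K (Dt D t))

instance {r : ℕ} (K : Set (Finset (Fin r))) (D : Fin r → ℕ) :
    TopologicalSpace (ColCar K D) := by
  unfold ColCar; infer_instance

/-- The identifications generating the colimit along the stabilization maps. -/
def ColRel {r : ℕ} (K : Set (Finset (Fin r))) (D : Fin r → ℕ)
    (s : ∀ t : ℕ, ↥(PolSp K (Dt D t)) → ↥(PolSp K (Dt D (t + 1)))) :
    ColCar K D → ColCar K D → Prop :=
  fun a b => b = ⟨a.1 + 1, s a.1 a.2⟩

/-- The stabilized space `Pol^Σ_{D+∞} = colim_t Pol*_{D+te}(S¹, X_Σ)`. -/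
def PolColim {r : ℕ} (K : Set (Finset (Fin r))) (D : Fin r → ℕ)
    (s : ∀ t : ℕ, ↥(PolSp K (Dt D t)) → ↥(PolSp K (Dt D (t + 1)))) : Type :=
  Quot (ColRel K D s)

instance {r : ℕ} (K : Set (Finset (Fin r))) (D : Fin r → ℕ)
    (s : ∀ t : ℕ, ↥(PolSp K (Dt D t)) → ↥(PolSp K (Dt D (t + 1)))) :
    TopologicalSpace (PolColim K D s) :=
  instTopologicalSpaceQuot

/-- Admissibility of a family of stabilization maps `s_{D+te}`. -/
def AdmissibleStabFamily {r : ℕ} (K : Set (Finset (Fin r))) (D : Fin r → ℕ)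
    (s : ∀ t : ℕ, ↥(PolSp K (Dt D t)) → ↥(PolSp K (Dt D (t + 1)))) : Prop :=
  ∀ t : ℕ, ∃ (φ : ℂ → ℂ) (xpt : Fin r → ℂ),
    AdmissiblePhi ((∑ k, Dt D t k : ℕ) : ℝ) φ ∧
    (∀ k, ((∑ k, Dt D t k : ℕ) : ℝ) < (xpt k).re) ∧ Function.Injective xpt ∧
    StabSpec K φ xpt (Dt D t) (Dt D (t + 1)) (s t)


section ModT1a
open scoped Topology

lemma dimH_transv_local {Y V Z : Type*} [NormedAddCommGroup Y] [NormedSpace ℝ Y] [FiniteDimensional ℝ Y]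
    [NormedAddCommGroup V] [NormedSpace ℝ V] [FiniteDimensional ℝ V]
    [NormedAddCommGroup Z] [NormedSpace ℝ Z] [FiniteDimensional ℝ Z]
    (A : Y → V →L[ℝ] Z) (b : Y → Z) (hA : ContDiff ℝ 1 A) (hb : ContDiff ℝ 1 b)
    (y0 : Y) (hy0 : Function.Surjective (A y0)) :
    ∃ W : Set Y, IsOpen W ∧ y0 ∈ W ∧
      dimH {u : V | ∃ y ∈ W, A y u + b y = 0} ≤
        ((Module.finrank ℝ Y + Module.finrank ℝ V - Module.finrank ℝ Z : ℕ) : ENNReal) := by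
  have : CompleteSpace Z := FiniteDimensional.complete ℝ Z
  have : CompleteSpace V := FiniteDimensional.complete ℝ V
  obtain ⟨g, hg⟩ := (A y0 : V →ₗ[ℝ] Z).exists_rightInverse_of_surjective
    (LinearMap.range_eq_top.2 hy0)
  let s0 : Z →L[ℝ] V := LinearMap.toContinuousLinearMap g
  have hs0 : ∀ z, A y0 (s0 z) = z := fun z => by
    have := LinearMap.congr_fun hg z
    exact this
  let B : Y → (Z →L[ℝ] Z) := fun y => (A y).comp s0
  have hB : ContDiff ℝ 1 B := hA.clm_comp contDiff_const
  let W : Set Y := B ⁻¹' {x | IsUnit x}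
  have hW : IsOpen W := Units.isOpen.preimage hB.continuous
  have hy0W : y0 ∈ W := by
    show IsUnit (B y0)
    have : B y0 = 1 := by
      ext z; simp [B, hs0]
    rw [this]; exact isUnit_one
  refine ⟨W, hW, hy0W, ?_⟩
  let Kr := LinearMap.ker (A y0 : V →ₗ[ℝ] Z)
  let Φ : Y × Kr → V := fun p => (p.2 : V) - s0 (Ring.inverse (B p.1) (A p.1 (p.2 : V) + b p.1))
  have hsub : {u : V | ∃ y ∈ W, A y u + b y = 0} ⊆ Φ '' (W ×ˢ Set.univ) := by
    rintro u ⟨y, hy, hu⟩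
    have hk : u - s0 (A y0 u) ∈ Kr := by
      simp [Kr, hs0]
    refine ⟨(y, ⟨u - s0 (A y0 u), hk⟩), ⟨hy, trivial⟩, ?_⟩
    simp only [Φ]
    have h1 : A y (u - s0 (A y0 u)) + b y = - (B y (A y0 u)) := by
      simp only [map_sub, B, ContinuousLinearMap.comp_apply]
      rw [sub_add_eq_add_sub, hu, zero_sub]
    rw [h1, map_neg]
    have h2 : Ring.inverse (B y) (B y (A y0 u)) = A y0 u := by
      have := Ring.inverse_mul_cancel (B y) hy
      exact DFunLike.congr_fun this (A y0 u)
    rw [h2]; simp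
  have hcd : ∀ x ∈ (W ×ˢ Set.univ : Set (Y × Kr)), ContDiffAt ℝ 1 Φ x := by
    rintro ⟨y, κ⟩ ⟨hy, -⟩
    have hκ : ContDiffAt ℝ 1 (fun p : Y × Kr => (p.2 : V)) (y, κ) :=
      (Kr.subtypeL.contDiff.contDiffAt).comp (y, κ) contDiffAt_snd
    have hA' : ContDiffAt ℝ 1 (fun p : Y × Kr => A p.1) (y, κ) :=
      (hA.comp contDiff_fst).contDiffAt
    have hB' : ContDiffAt ℝ 1 (fun p : Y × Kr => Ring.inverse (B p.1)) (y, κ) := by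
      obtain ⟨un, hun⟩ : IsUnit (B y) := hy
      have h := contDiffAt_ringInverse ℝ (n := 1) un
      rw [hun] at h
      exact ContDiffAt.comp (y, κ) (g := Ring.inverse) (f := fun p : Y × Kr => B p.1) h
        ((hB.comp contDiff_fst).contDiffAt)
    have hb' : ContDiffAt ℝ 1 (fun p : Y × Kr => b p.1) (y, κ) :=
      (hb.comp contDiff_fst).contDiffAt
    exact hκ.sub ((contDiffAt_const (c := s0)).clm_apply
      (hB'.clm_apply ((hA'.clm_apply hκ).add hb')))
  refine (dimH_mono hsub).trans ?_
  refine (dimH_image_le_of_locally_lipschitzOn (fun x hx => ?_)).trans ?_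
  · obtain ⟨C, t, ht, hC⟩ := (hcd x hx).exists_lipschitzOnWith
    exact ⟨C, t, mem_nhdsWithin_of_mem_nhds ht, hC⟩
  · refine (dimH_mono (Set.subset_univ _)).trans ?_
    rw [Real.dimH_univ_eq_finrank]
    have h1 : Module.finrank ℝ (Y × Kr) = Module.finrank ℝ Y + Module.finrank ℝ Kr :=
      Module.finrank_prod
    have h2 := LinearMap.finrank_range_add_finrank_ker (A y0 : V →ₗ[ℝ] Z)
    rw [LinearMap.range_eq_top.2 hy0, finrank_top] at h2
    rw [h1]
    norm_cast
    show _ + Module.finrank ℝ (LinearMap.ker (A y0 : V →ₗ[ℝ] Z)) ≤ _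
    omega

/-- Parametric transversality: Hausdorff dimension version. -/
lemma dimH_transv {Y V Z : Type*} [NormedAddCommGroup Y] [NormedSpace ℝ Y] [FiniteDimensional ℝ Y]
    [NormedAddCommGroup V] [NormedSpace ℝ V] [FiniteDimensional ℝ V]
    [NormedAddCommGroup Z] [NormedSpace ℝ Z] [FiniteDimensional ℝ Z]
    (A : Y → V →L[ℝ] Z) (b : Y → Z) (hA : ContDiff ℝ 1 A) (hb : ContDiff ℝ 1 b)
    (hdim : Module.finrank ℝ Y < Module.finrank ℝ Z) (hV : 0 < Module.finrank ℝ V) :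
    dimH {u : V | ∃ y, Function.Surjective (A y) ∧ A y u + b y = 0} < Module.finrank ℝ V := by
  have hlt : ((Module.finrank ℝ Y + Module.finrank ℝ V - Module.finrank ℝ Z : ℕ) : ENNReal)
      < Module.finrank ℝ V := by
    norm_cast; omega
  refine lt_of_le_of_lt ?_ hlt
  let Su : Set Y := {y | Function.Surjective (A y)}
  choose! W hWo hyW hWd using fun (y0 : Y) (h : y0 ∈ Su) => dimH_transv_local A b hA hb y0 h
  have : ProperSpace Y := FiniteDimensional.proper ℝ Y
  obtain ⟨t, htS, htc, ht⟩ := TopologicalSpace.countable_cover_nhdsWithin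
    (f := W) (s := Su) (fun x hx => mem_nhdsWithin_of_mem_nhds ((hWo x hx).mem_nhds (hyW x hx)))
  have hsub : {u : V | ∃ y, Function.Surjective (A y) ∧ A y u + b y = 0} ⊆
      ⋃ y0 ∈ t, {u : V | ∃ y ∈ W y0, A y u + b y = 0} := by
    rintro u ⟨y, hy, hu⟩
    obtain ⟨y0, hy0, hyy⟩ := Set.mem_iUnion₂.1 (ht hy)
    exact Set.mem_iUnion₂.2 ⟨y0, hy0, y, hyy, hu⟩
  refine (dimH_mono hsub).trans ?_
  rw [dimH_bUnion htc]
  exact iSup₂_le fun y0 h => hWd y0 (htS h)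

lemma dense_compl_iUnion_dimH {V ι : Type*} [NormedAddCommGroup V] [NormedSpace ℝ V]
    [FiniteDimensional ℝ V] [Finite ι] (S : ι → Set V)
    (h : ∀ i, dimH (S i) < Module.finrank ℝ V) (hV : 0 < Module.finrank ℝ V) :
    Dense (⋃ i, S i)ᶜ := by
  apply dense_compl_of_dimH_lt_finrank
  rw [dimH_iUnion]
  cases isEmpty_or_nonempty ι
  · simp; exact_mod_cast hV
  · obtain ⟨i, hi⟩ := exists_eq_ciSup_of_finite (f := fun i => dimH (S i))
    rw [← hi]; exact h i
end ModT1a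

section ModT1b
open scoped Topology

lemma mem_convexHull_fin {E : Type*} [NormedAddCommGroup E] [NormedSpace ℝ E] [FiniteDimensional ℝ E]
    {s : Set E} {x : E} (hx : x ∈ convexHull ℝ s) :
    ∃ (m : ℕ) (z : Fin m → E) (w : Fin m → ℝ), m ≤ Module.finrank ℝ E + 1 ∧
      (∀ i, z i ∈ s) ∧ Function.Injective z ∧ (∀ i, 0 < w i) ∧ ∑ i, w i = 1 ∧
      ∑ i, w i • z i = x := by
  obtain ⟨ι, _, z, w, hz, haff, hw, hw1, hsum⟩ := eq_pos_convex_span_of_mem_convexHull hx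
  have hc := haff.card_le_finrank_succ
  have e : Fin (Fintype.card ι) ≃ ι := (Fintype.equivFin ι).symm
  refine ⟨Fintype.card ι, z ∘ e, w ∘ e, ?_, fun i => hz ⟨_, rfl⟩, haff.injective.comp e.injective,
    fun i => hw _, ?_, ?_⟩
  · exact hc.trans (Nat.succ_le_succ (Submodule.finrank_le _))
  · rw [← hw1]; exact e.sum_comp w
  · rw [← hsum]; exact e.sum_comp (fun i => w i • z i)

lemma isCompact_convexHull_fd {E : Type*} [NormedAddCommGroup E] [NormedSpace ℝ E]
    [FiniteDimensional ℝ E] {s : Set E} (hs : IsCompact s) : IsCompact (convexHull ℝ s) := by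
  rcases s.eq_empty_or_nonempty with rfl | ⟨x0, hx0⟩
  · simp
  set M := Module.finrank ℝ E + 1
  let Φ : (Fin M → ℝ) × (Fin M → E) → E := fun p => ∑ i, p.1 i • p.2 i
  have hΦ : Continuous Φ := by fun_prop
  have hcomp : IsCompact (stdSimplex ℝ (Fin M) ×ˢ (Set.univ.pi fun _ : Fin M => s)) :=
    (isCompact_stdSimplex ℝ (Fin M)).prod (isCompact_univ_pi fun _ => hs)
  have : convexHull ℝ s = Φ '' (stdSimplex ℝ (Fin M) ×ˢ (Set.univ.pi fun _ : Fin M => s)) := by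
    apply Set.Subset.antisymm
    · intro x hx
      obtain ⟨m, z, w, hm, hz, -, hw, hw1, hsum⟩ := mem_convexHull_fin hx
      let e := Fin.castLEEmb hm
      refine ⟨(fun j => if h : ∃ i, e i = j then w h.choose else 0,
        fun j => if h : ∃ i, e i = j then z h.choose else x0), ⟨⟨?_, ?_⟩, ?_⟩, ?_⟩
      · intro j
        dsimp only
        split_ifs with h
        · exact (hw _).le
        · exact le_rfl
      · rw [← hw1]
        symm
        refine Finset.sum_of_injOn e (fun a _ b _ h => e.injective h) (by simp) ?_ ?_
        · intro j _ hj
          dsimp only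
          rw [dif_neg]
          rintro ⟨i, hi⟩; exact hj ⟨i, by simp, hi⟩
        · intro i _
          have h : ∃ i', e i' = e i := ⟨i, rfl⟩
          dsimp only
          rw [dif_pos h, e.injective h.choose_spec]
      · intro j _
        dsimp only
        split_ifs with h
        · exact hz _
        · exact hx0
      · rw [← hsum]
        symm
        refine Finset.sum_of_injOn e (fun a _ b _ h => e.injective h) (by simp) ?_ ?_
        · intro j _ hj
          dsimp only
          rw [dif_neg, zero_smul]
          rintro ⟨i, hi⟩; exact hj ⟨i, by simp, hi⟩
        · intro i _
          have h : ∃ i', e i' = e i := ⟨i, rfl⟩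
          dsimp only
          rw [dif_pos h, dif_pos h, e.injective h.choose_spec]
    · rintro _ ⟨⟨w, z⟩, ⟨hw, hz⟩, rfl⟩
      exact (convex_convexHull ℝ s).sum_mem (fun i _ => hw.1 i) hw.2
        (fun i _ => subset_convexHull ℝ s (hz i trivial))
  rw [this]
  exact hcomp.image hΦ

/-- Either a strictly positive functional exists, or zero is a positive combination. -/
lemma cone_dichotomy {d : ℕ} (v : ℝ → Fin d → ℂ) (W : Set ℝ) (hW : IsCompact W)
    (hv : ContinuousOn v W) :
    (∃ (u : Fin d → ℂ) (ε : ℝ), 0 < ε ∧ ∀ t ∈ W, ε ≤ (∑ l, u l * v t l).re) ∨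
    (∃ (m : ℕ) (t : Fin m → ℝ) (ν : Fin m → ℝ), 0 < m ∧ m ≤ 2 * d + 1 ∧ Function.Injective t ∧
      (∀ j, t j ∈ W) ∧ (∀ j, 0 < ν j) ∧ ∀ l, ∑ j, (ν j : ℂ) * v (t j) l = 0) := by
  by_cases h0 : (0 : Fin d → ℂ) ∈ convexHull ℝ (v '' W)
  · right
    obtain ⟨m, z, w, hm, hz, hzi, hw, hw1, hsum⟩ := mem_convexHull_fin h0
    choose t ht htz using hz
    refine ⟨m, t, w, ?_, ?_, ?_, ht, hw, ?_⟩
    · rcases Nat.eq_zero_or_pos m with rfl | h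
      · simp at hw1
      · exact h
    · have : Module.finrank ℝ (Fin d → ℂ) = 2 * d := by
        rw [Module.finrank_pi_fintype]; simp [mul_comm]
      omega
    · intro a b hab
      apply hzi
      rw [← htz, ← htz, hab]
    · intro l
      have := congrFun hsum l
      simpa [Finset.sum_apply, ← htz] using this
  · left
    have hcl : IsClosed (convexHull ℝ (v '' W)) :=
      (isCompact_convexHull_fd (hW.image_of_continuousOn hv)).isClosed
    obtain ⟨f, ε, hf0, hf⟩ := geometric_hahn_banach_point_closed (convex_convexHull ℝ (v '' W)) hcl h0
    rw [map_zero] at hf0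
    refine ⟨fun l => (f (Pi.single l 1) : ℂ) - Complex.I * (f (Pi.single l Complex.I) : ℂ), ε, hf0, ?_⟩
    intro t ht
    have h1 := (hf (v t) (subset_convexHull ℝ _ ⟨t, ht, rfl⟩)).le
    refine h1.trans (le_of_eq ?_)
    have h2 : v t = ∑ l, ((v t l).re • (Pi.single l (1:ℂ) : Fin d → ℂ)
        + (v t l).im • (Pi.single l Complex.I : Fin d → ℂ)) := by
      ext i
      simp only [Finset.sum_apply, Pi.add_apply, Pi.smul_apply, Pi.single_apply]
      rw [Finset.sum_eq_single i]
      · simp [Complex.re_add_im]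
      · intro b _ hb; simp [hb.symm]
      · simp
    conv_lhs => rw [h2]
    rw [map_sum, Complex.re_sum]
    refine Finset.sum_congr rfl fun l _ => ?_
    simp
    ring
end ModT1b

section ModT1c
open scoped Topology

/-- Extension of a function on the line to the one point compactification. -/
def extS (h : ℝ → ℂ) (c : ℂ) (hc : Continuous h)
    (ht : Filter.Tendsto h (Filter.cocompact ℝ) (𝓝 c)) : C(OnePoint ℝ, ℂ) :=
  OnePoint.continuousMapMk ⟨h, hc⟩ c (by rw [Filter.coclosedCompact_eq_cocompact]; exact ht)

@[simp] lemma extS_coe (h : ℝ → ℂ) (c : ℂ) (hc : Continuous h) (ht) (t : ℝ) :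
    extS h c hc ht (t : OnePoint ℝ) = h t := rfl
@[simp] lemma extS_infty (h : ℝ → ℂ) (c : ℂ) (hc : Continuous h) (ht) :
    extS h c hc ht OnePoint.infty = c := rfl

lemma tpi_ne (t : ℝ) : (t : ℂ) + Complex.I ≠ 0 := by
  intro h
  have := congrArg Complex.im h
  simp at this

lemma tendsto_tpi_inv : Filter.Tendsto (fun t : ℝ => ((t : ℂ) + Complex.I)⁻¹)
    (Filter.cocompact ℝ) (𝓝 0) := by
  refine Filter.tendsto_inv₀_cobounded.comp ?_
  rw [← tendsto_norm_atTop_iff_cobounded]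
  refine Filter.tendsto_atTop_mono (f := fun t : ℝ => ‖t‖) (fun t => ?_)
    (tendsto_norm_cocompact_atTop)
  have := Complex.abs_re_le_norm ((t : ℂ) + Complex.I)
  simpa using this

lemma continuous_tpi_inv : Continuous (fun t : ℝ => ((t : ℂ) + Complex.I)⁻¹) :=
  Continuous.inv₀ (by fun_prop) tpi_ne

/-- The function `1/(t+i)` on the circle. -/
def invS : C(OnePoint ℝ, ℂ) := extS _ 0 continuous_tpi_inv tendsto_tpi_inv

lemma invS_inj : Function.Injective invS := by
  intro a b h
  induction a using OnePoint.rec with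
  | infty =>
    induction b using OnePoint.rec with
    | infty => rfl
    | coe b => exact absurd h.symm (inv_ne_zero (tpi_ne b))
  | coe a =>
    induction b using OnePoint.rec with
    | infty => exact absurd h (inv_ne_zero (tpi_ne a))
    | coe b =>
      have h1 : ((a : ℂ) + Complex.I)⁻¹ = ((b : ℂ) + Complex.I)⁻¹ := h
      have h2 := inv_injective h1
      have h3 : a = b := by exact_mod_cast add_right_cancel h2
      rw [h3]

variable {X E : Type*} [TopologicalSpace X] [NormedAddCommGroup E] [NormedSpace ℝ E]

lemma contDiff_tpi_inv : ContDiff ℝ 1 (fun t : ℝ => ((t : ℂ) + Complex.I)⁻¹) :=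
  ContDiff.inv (Complex.ofRealCLM.contDiff.add contDiff_const) tpi_ne

/-- Functions on `X × S` which are restrictions of `C^1` functions. -/
def c1Alg (ι : X → E) : StarSubalgebra ℂ C(X × OnePoint ℝ, ℂ) where
  carrier := {f | ∃ (G : E × ℝ → ℂ) (G' : E → ℂ), ContDiff ℝ 1 G ∧ ContDiff ℝ 1 G' ∧
    (∀ x (t : ℝ), f (x, (t : OnePoint ℝ)) = G (ι x, t)) ∧ ∀ x, f (x, OnePoint.infty) = G' (ι x)}
  mul_mem' := by
    rintro f g ⟨G, G', h1, h2, h3, h4⟩ ⟨H, H', k1, k2, k3, k4⟩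
    exact ⟨fun p => G p * H p, fun p => G' p * H' p, h1.mul k1, h2.mul k2,
      fun x t => by simp [h3, k3], fun x => by simp [h4, k4]⟩
  add_mem' := by
    rintro f g ⟨G, G', h1, h2, h3, h4⟩ ⟨H, H', k1, k2, k3, k4⟩
    exact ⟨fun p => G p + H p, fun p => G' p + H' p, h1.add k1, h2.add k2,
      fun x t => by simp [h3, k3], fun x => by simp [h4, k4]⟩
  algebraMap_mem' := fun c => ⟨fun _ => c, fun _ => c, contDiff_const, contDiff_const,
    fun x t => rfl, fun x => rfl⟩
  star_mem' := by
    rintro f ⟨G, G', h1, h2, h3, h4⟩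
    refine ⟨fun p => star (G p), fun p => star (G' p), ?_, ?_, fun x t => by simp [h3],
      fun x => by simp [h4]⟩
    · exact Complex.conjCLE.contDiff.comp h1
    · exact Complex.conjCLE.contDiff.comp h2

lemma c1Alg_sep (ι : X → E) (hι : Continuous ι) (hinj : Function.Injective ι) :
    (c1Alg ι).SeparatesPoints := by
  rintro ⟨x, s⟩ ⟨y, t⟩ hne
  by_cases hst : s = t
  · subst hst
    have hxy : ι x ≠ ι y := fun h => hne (by rw [hinj h])
    obtain ⟨L, hL⟩ := SeparatingDual.exists_separating_of_ne (R := ℝ) hxy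
    refine ⟨_, ⟨⟨fun p => (L (ι p.1) : ℂ), by fun_prop⟩, ⟨fun p => (L p.1 : ℂ), fun p => (L p : ℂ),
      ?_, ?_, fun _ _ => rfl, fun _ => rfl⟩, rfl⟩, ?_⟩
    · exact Complex.ofRealCLM.contDiff.comp (L.contDiff.comp contDiff_fst)
    · exact Complex.ofRealCLM.contDiff.comp L.contDiff
    · intro h; exact hL (Complex.ofReal_injective h)
  · refine ⟨_, ⟨⟨fun p => invS p.2, by fun_prop⟩, ⟨fun p => ((p.2 : ℂ) + Complex.I)⁻¹, fun p => 0,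
      ?_, contDiff_const, fun _ _ => rfl, fun _ => rfl⟩, rfl⟩, fun h => hst (invS_inj h)⟩
    exact contDiff_tpi_inv.comp contDiff_snd

lemma approx_c1 [CompactSpace X] (ι : X → E) (hι : Continuous ι) (hinj : Function.Injective ι)
    (f : C(X × OnePoint ℝ, ℂ)) (ε : ℝ) (hε : 0 < ε) :
    ∃ (g : C(X × OnePoint ℝ, ℂ)) (G : E × ℝ → ℂ) (G' : E → ℂ), ContDiff ℝ 1 G ∧ ContDiff ℝ 1 G' ∧
    (∀ x (t : ℝ), g (x, (t : OnePoint ℝ)) = G (ι x, t)) ∧ (∀ x, g (x, OnePoint.infty) = G' (ι x)) ∧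
    ∀ p, ‖g p - f p‖ < ε := by
  have h := ContinuousMap.starSubalgebra_topologicalClosure_eq_top_of_separatesPoints
    (c1Alg ι) (c1Alg_sep ι hι hinj)
  have hf : f ∈ closure (c1Alg ι : Set C(X × OnePoint ℝ, ℂ)) := by
    rw [← StarSubalgebra.topologicalClosure_coe, h]; trivial
  obtain ⟨g, ⟨G, G', h1, h2, h3, h4⟩, hd⟩ := Metric.mem_closure_iff.1 hf ε hε
  refine ⟨g, G, G', h1, h2, h3, h4, fun p => ?_⟩
  rw [dist_comm, dist_eq_norm] at hd
  exact lt_of_le_of_lt (ContinuousMap.norm_coe_le_norm (g - f) p) hd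

/-- approximation of functions based at infinity -/
lemma approx_c1_based [CompactSpace X] (ι : X → E) (hι : Continuous ι)
    (hinj : Function.Injective ι)
    (f : C(X × OnePoint ℝ, ℂ)) (hf : ∀ x, f (x, OnePoint.infty) = 1) (ε : ℝ) (hε : 0 < ε) :
    ∃ (g : C(X × OnePoint ℝ, ℂ)) (G : E × ℝ → ℂ), ContDiff ℝ 1 G ∧
    (∀ x (t : ℝ), g (x, (t : OnePoint ℝ)) = G (ι x, t)) ∧ (∀ x, g (x, OnePoint.infty) = 1) ∧
    ∀ p, ‖g p - f p‖ < ε := by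
  obtain ⟨g, G, G', h1, h2, h3, h4, h5⟩ := approx_c1 ι hι hinj f (ε / 2) (half_pos hε)
  refine ⟨⟨fun p => g p - g (p.1, OnePoint.infty) + 1, by fun_prop⟩,
    fun p => G p - G' p.1 + 1, ?_, ?_, ?_, ?_⟩
  · exact (h1.sub (h2.comp contDiff_fst)).add contDiff_const
  · intro x t; simp [h3, h4]
  · intro x; simp
  · rintro ⟨x, t⟩
    have a := h5 (x, t)
    have b := h5 (x, OnePoint.infty)
    rw [hf] at b
    calc ‖g (x, t) - g (x, OnePoint.infty) + 1 - f (x, t)‖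
        = ‖(g (x, t) - f (x, t)) - (g (x, OnePoint.infty) - 1)‖ := by congr 1; ring
      _ ≤ _ := norm_sub_le _ _
      _ < ε := by linarith

lemma approx_c1_X [CompactSpace X] (ι : X → E) (hι : Continuous ι)
    (hinj : Function.Injective ι) (f : C(X, ℂ)) (ε : ℝ) (hε : 0 < ε) :
    ∃ (G : E → ℂ), ContDiff ℝ 1 G ∧ ∀ x, ‖G (ι x) - f x‖ < ε := by
  obtain ⟨g, G, G', h1, h2, h3, h4, h5⟩ := approx_c1 ι hι hinj
    (f.comp ContinuousMap.fst) ε hε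
  refine ⟨G', h2, fun x => ?_⟩
  have := h5 (x, OnePoint.infty)
  rw [h4] at this
  exact this
end ModT1c

section ModT2a
open scoped Topology

lemma interp_exists {n M : ℕ} (t : Fin n → ℝ) (ht : Function.Injective t) (J : Finset (Fin n))
    (hJ : J.card ≤ M) (z : Fin n → ℂ) :
    ∃ c : Fin M → ℂ, ∀ j ∈ J, ∑ s, c s * (t j : ℂ) ^ (s : ℕ) = z j := by
  let p := Lagrange.interpolate J (fun j => (t j : ℂ)) z
  have hinj : Set.InjOn (fun j => (t j : ℂ)) J := fun a _ b _ h => ht (Complex.ofReal_injective h)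
  have hp : p.degree < (M : ℕ) :=
    lt_of_lt_of_le (Lagrange.degree_interpolate_lt z hinj) (by exact_mod_cast hJ)
  have hev : ∀ j ∈ J, p.eval (t j : ℂ) = z j := fun j hj =>
    Lagrange.eval_interpolate_at_node z hinj hj
  refine ⟨fun s => p.coeff s, fun j hj => ?_⟩
  rw [← hev j hj]
  by_cases h0 : p = 0
  · simp [h0]
  · rw [Polynomial.eval_eq_sum_range' ((Polynomial.natDegree_lt_iff_degree_lt h0).2 hp),
      Finset.sum_range]

lemma moment_exists {n d : ℕ} (hdn : d ≤ n) (t : Fin n → ℝ) (ht : Function.Injective t)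
    (w : Fin d → ℂ) :
    ∃ x : Fin n → ℂ, ∀ l : Fin d, ∑ j, (t j : ℂ) ^ (l : ℕ) * x j = w l := by
  let e := Fin.castLEEmb hdn
  let A : Matrix (Fin d) (Fin d) ℂ := (Matrix.vandermonde (fun j => (t (e j) : ℂ))).transpose
  have hA : IsUnit A.det := by
    rw [Matrix.det_transpose, isUnit_iff_ne_zero, Matrix.det_vandermonde_ne_zero_iff]
    intro a b h
    exact e.injective (ht (Complex.ofReal_injective h))
  let y := A⁻¹.mulVec w
  have hy : A.mulVec y = w := by
    simp [y, Matrix.mulVec_mulVec, Matrix.mul_nonsing_inv A hA]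
  refine ⟨fun j => if h : ∃ a, e a = j then y h.choose else 0, fun l => ?_⟩
  rw [← congrFun hy l]
  symm
  simp only [Matrix.mulVec, dotProduct]
  refine Finset.sum_of_injOn e (fun a _ b _ h => e.injective h) (by simp) ?_ ?_
  · intro j _ hj
    rw [dif_neg, mul_zero]
    rintro ⟨a, ha⟩; exact hj ⟨a, by simp, ha⟩
  · intro a _
    have h : ∃ a', e a' = e a := ⟨a, rfl⟩
    rw [dif_pos h, e.injective h.choose_spec]
    simp [A, Matrix.vandermonde_apply]

/-- Nonvanishing moments: at most `d` points cannot be annihilated by `d` moments. -/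
lemma moment_zero {n d : ℕ} (hnd : n ≤ d) (t : Fin n → ℝ) (ht : Function.Injective t)
    (x : Fin n → ℂ) (hx : ∀ l : Fin d, ∑ j, (t j : ℂ) ^ (l : ℕ) * x j = 0) : x = 0 := by
  have hA : (Matrix.vandermonde (fun j => (t j : ℂ))).transpose.det ≠ 0 := by
    rw [Matrix.det_transpose, Matrix.det_vandermonde_ne_zero_iff]
    intro a b h
    exact ht (Complex.ofReal_injective h)
  refine Matrix.eq_zero_of_mulVec_eq_zero hA ?_
  ext l
  have := hx (Fin.castLE hnd l)
  simpa [Matrix.mulVec, dotProduct, Matrix.vandermonde_apply] using this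

section generic
variable {E : Type*} [NormedAddCommGroup E] [NormedSpace ℝ E] {r : ℕ}

/-- The perturbation term. -/
def pert {M : ℕ} (h : ℝ → ℂ) (u : Fin M → ℂ) (t : ℝ) : ℂ := (∑ s, u s * (t : ℂ) ^ (s : ℕ)) * h t

/-- Linear part of the conditions. -/
def linPart (i : Fin r) (d : ℕ) (M : Fin r → ℕ) (h : Fin r → ℝ → ℂ) (g : ℝ → ℂ) {n : ℕ}
    (τ : Fin n → Finset (Fin r)) (y : E × (Fin n → ℝ) × (Fin n → ℝ)) :
    (∀ k, Fin (M k) → ℂ) →ₗ[ℝ] ({p : Fin n × Fin r // p.2 ∈ τ p.1} → ℂ) × (Fin d → ℂ) where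
  toFun u := (fun p => pert (h p.1.2) (u p.1.2) (y.2.1 p.1.1),
    fun l => ∑ j, (y.2.2 j : ℂ) * star (g (y.2.1 j)) * (y.2.1 j : ℂ) ^ (l : ℕ) *
      pert (h i) (u i) (y.2.1 j))
  map_add' u v := by
    ext p
    · simp [pert, add_mul, Finset.sum_add_distrib]
    · simp [pert, add_mul, mul_add, Finset.sum_add_distrib]
  map_smul' c u := by
    ext p
    · simp only [pert, Pi.smul_apply, Complex.real_smul, RingHom.id_apply, Prod.smul_mk]
      simp only [mul_assoc, ← Finset.mul_sum]
    · simp only [pert, Pi.smul_apply, Complex.real_smul, RingHom.id_apply, Prod.smul_mk,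
        Finset.mul_sum, Finset.sum_mul]
      refine Finset.sum_congr rfl fun j _ => Finset.sum_congr rfl fun s _ => by ring

lemma linPart_surj (i : Fin r) (d : ℕ) (M : Fin r → ℕ) (h : Fin r → ℝ → ℂ) (g : ℝ → ℂ)
    (hh : ∀ k t, h k t ≠ 0) (hg : ∀ t, g t ≠ 0) {n : ℕ}
    (τ : Fin n → Finset (Fin r)) (y : E × (Fin n → ℝ) × (Fin n → ℝ))
    (ht : Function.Injective y.2.1) (hν : ∀ j, 0 < y.2.2 j) (hi : ∀ j, i ∉ τ j)
    (hM : ∀ k, k ≠ i → (Finset.univ.filter fun j => k ∈ τ j).card ≤ M k) (hMi : n ≤ M i) (hdn : d ≤ n) :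
    Function.Surjective (linPart i d M h g τ y) := by
  rintro ⟨z, w⟩
  obtain ⟨x, hx⟩ := moment_exists hdn y.2.1 ht w
  have key : ∀ k, ∃ c : Fin (M k) → ℂ,
      (k ≠ i → ∀ j (hj : k ∈ τ j), pert (h k) c (y.2.1 j) = z ⟨(j, k), hj⟩) ∧
      (k = i → ∀ j, pert (h k) c (y.2.1 j) = x j / ((y.2.2 j : ℂ) * star (g (y.2.1 j)))) := by
    intro k
    by_cases hk : k = i
    · subst hk
      obtain ⟨c, hc⟩ := interp_exists y.2.1 ht Finset.univ (M := M k) (by simpa using hMi)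
        (fun j => x j / ((y.2.2 j : ℂ) * star (g (y.2.1 j))) / h k (y.2.1 j))
      refine ⟨c, fun h => absurd rfl h, fun _ j => ?_⟩
      rw [pert, hc j (Finset.mem_univ _), div_mul_cancel₀ _ (hh _ _)]
    · obtain ⟨c, hc⟩ := interp_exists y.2.1 ht (Finset.univ.filter fun j => k ∈ τ j) (hM k hk)
        (fun j => if hj : k ∈ τ j then z ⟨(j, k), hj⟩ / h k (y.2.1 j) else 0)
      refine ⟨c, fun _ j hj => ?_, fun h => absurd h hk⟩
      rw [pert, hc j (by simpa using hj), dif_pos hj, div_mul_cancel₀ _ (hh _ _)]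
  choose u hu1 hu2 using key
  refine ⟨u, ?_⟩
  refine Prod.ext ?_ ?_
  · ext ⟨⟨j, k⟩, hj⟩
    exact hu1 k (fun hki => hi j (hki ▸ hj)) j hj
  · ext l
    show _ = w l
    rw [← hx l]
    show (∑ j, (y.2.2 j : ℂ) * star (g (y.2.1 j)) * (y.2.1 j : ℂ) ^ (l : ℕ) *
      pert (h i) (u i) (y.2.1 j)) = _
    refine Finset.sum_congr rfl fun j _ => ?_
    show _ * pert (h i) (u i) (y.2.1 j) = _
    rw [hu2 i rfl j]
    have h1 : (y.2.2 j : ℂ) ≠ 0 := by exact_mod_cast (hν j).ne'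
    have h2 : star (g (y.2.1 j)) ≠ 0 := star_ne_zero.2 (hg _)
    field_simp

lemma generic_perturb [FiniteDimensional ℝ E] (i : Fin r) (d R : ℕ) (M : Fin r → ℕ)
    (F : Fin r → E × ℝ → ℂ) (hF : ∀ k, ContDiff ℝ 1 (F k))
    (h : Fin r → ℝ → ℂ) (hh : ∀ k t, h k t ≠ 0) (hhc : ∀ k, ContDiff ℝ 1 (h k))
    (g : ℝ → ℂ) (hg : ∀ t, g t ≠ 0) (hgc : ContDiff ℝ 1 g)
    (hdim : ∀ n, d ≤ n → Module.finrank ℝ E + 2 * n < 2 * n * R + 2 * d)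
    (hMi : 2 * d + 1 ≤ M i) (ε : ℝ) (hε : 0 < ε) :
    ∃ u : ∀ k, Fin (M k) → ℂ, ‖u‖ < ε ∧
      ∀ (n : ℕ) (e : E) (t ν : Fin n → ℝ) (τ : Fin n → Finset (Fin r)),
        Function.Injective t → (∀ j, 0 < ν j) → d ≤ n → n ≤ 2 * d + 1 →
        (∀ j, i ∉ τ j) → (∀ j, R ≤ (τ j).card) →
        (∀ k, k ≠ i → (Finset.univ.filter fun j => k ∈ τ j).card ≤ M k) →
        (∀ j, ∀ k ∈ τ j, F k (e, t j) + pert (h k) (u k) (t j) = 0) →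
        (∀ l : Fin d, ∑ j, (ν j : ℂ) * star (g (t j)) * (t j : ℂ) ^ (l : ℕ) *
          (F i (e, t j) + pert (h i) (u i) (t j)) = 0) → False := by
  let V := ∀ k, Fin (M k) → ℂ
  let I := {p : Σ n : Fin (2 * d + 2), Fin n → Finset (Fin r) //
    d ≤ (p.1 : ℕ) ∧ ∀ j, R ≤ (p.2 j).card}
  have hV : 0 < Module.finrank ℝ V := by
    have : Nontrivial V := by
      have : Nonempty (Fin (M i)) := ⟨⟨0, by omega⟩⟩
      exact Pi.nontrivial_at i
    exact Module.finrank_pos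
  let bP : ∀ p : I, E × (Fin p.1.1 → ℝ) × (Fin p.1.1 → ℝ) →
    ({q : Fin p.1.1 × Fin r // q.2 ∈ p.1.2 q.1} → ℂ) × (Fin d → ℂ) := fun p y =>
    (fun q => F q.1.2 (y.1, y.2.1 q.1.1),
    fun l => ∑ j, (y.2.2 j : ℂ) * star (g (y.2.1 j)) * (y.2.1 j : ℂ) ^ (l : ℕ) *
      F i (y.1, y.2.1 j))
  let AP : ∀ p : I, E × (Fin p.1.1 → ℝ) × (Fin p.1.1 → ℝ) → V →L[ℝ]
    ({q : Fin p.1.1 × Fin r // q.2 ∈ p.1.2 q.1} → ℂ) × (Fin d → ℂ) := fun p y =>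
    LinearMap.toContinuousLinearMap (linPart i d M h g p.1.2 y)
  have hgs : ContDiff ℝ 1 (fun t => star (g t)) := Complex.conjCLE.contDiff.comp hgc
  have hdense := dense_compl_iUnion_dimH
    (fun p : I => {u : V | ∃ y, Function.Surjective (AP p y) ∧ AP p y u + bP p y = 0}) (by
      intro p
      have hof : ContDiff ℝ 1 (fun x : ℝ => (x : ℂ)) := Complex.ofRealCLM.contDiff
      have ht : ∀ j : Fin p.1.1, ContDiff ℝ 1
          (fun y : E × (Fin p.1.1 → ℝ) × (Fin p.1.1 → ℝ) => y.2.1 j) := fun j => by fun_prop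
      have hν : ∀ j : Fin p.1.1, ContDiff ℝ 1
          (fun y : E × (Fin p.1.1 → ℝ) × (Fin p.1.1 → ℝ) => y.2.2 j) := fun j => by fun_prop
      have hpt : ∀ (j : Fin p.1.1) k (u : V), ContDiff ℝ 1
          (fun y : E × (Fin p.1.1 → ℝ) × (Fin p.1.1 → ℝ) => pert (h k) (u k) (y.2.1 j)) := by
        intro j k u
        refine ContDiff.mul (ContDiff.sum fun s _ => ?_) ((hhc k).comp (ht j))
        exact contDiff_const.mul ((hof.comp (ht j)).pow _)
      apply dimH_transv _ _ _ _ _ hV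
      · rw [contDiff_clm_apply_iff]
        intro u
        refine ContDiff.prodMk (contDiff_pi.2 fun q => hpt _ _ _)
          (contDiff_pi.2 fun l => ContDiff.sum fun j _ => ?_)
        exact (((hof.comp (hν j)).mul (hgs.comp (ht j))).mul ((hof.comp (ht j)).pow _)).mul (hpt _ _ _)
      · refine ContDiff.prodMk (contDiff_pi.2 fun q => ?_)
          (contDiff_pi.2 fun l => ContDiff.sum fun j _ => ?_)
        · exact (hF _).comp (contDiff_fst.prodMk (ht _))
        · exact (((hof.comp (hν j)).mul (hgs.comp (ht j))).mul ((hof.comp (ht j)).pow _)).mul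
            ((hF _).comp (contDiff_fst.prodMk (ht _)))
      · have h1 := hdim p.1.1 p.2.1
        have h2 : Module.finrank ℝ (E × (Fin p.1.1 → ℝ) × (Fin p.1.1 → ℝ)) =
          Module.finrank ℝ E + 2 * p.1.1 := by
          rw [Module.finrank_prod, Module.finrank_prod]; simp; ring
        have h3 : Module.finrank ℝ (({q : Fin p.1.1 × Fin r // q.2 ∈ p.1.2 q.1} → ℂ) × (Fin d → ℂ))
          = 2 * Fintype.card {q : Fin p.1.1 × Fin r // q.2 ∈ p.1.2 q.1} + 2 * d := by
          rw [Module.finrank_prod, Module.finrank_pi_fintype, Module.finrank_pi_fintype]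
          simp [mul_comm]
        have h4 : (p.1.1 : ℕ) * R ≤ Fintype.card {q : Fin p.1.1 × Fin r // q.2 ∈ p.1.2 q.1} := by
          rw [Fintype.card_subtype]
          have : (Finset.univ.filter fun q : Fin p.1.1 × Fin r => q.2 ∈ p.1.2 q.1).card
            = ∑ j, (p.1.2 j).card := by
            rw [Finset.card_filter, Fintype.sum_prod_type]
            refine Finset.sum_congr rfl fun j _ => ?_
            rw [← Finset.card_filter]; congr 1; ext k; simp
          rw [this]
          calc (p.1.1 : ℕ) * R = ∑ j : Fin p.1.1, R := by simp
            _ ≤ _ := Finset.sum_le_sum fun j _ => p.2.2 j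
        rw [h2, h3]
        nlinarith) hV
  obtain ⟨u, hu, hu2⟩ := Metric.dense_iff.1 hdense 0 ε hε
  refine ⟨u, by simpa using hu, ?_⟩
  intro n e t ν τ ht hν hdn hn hi hR hM hz hw
  refine hu2 (Set.mem_iUnion.2 ⟨⟨⟨⟨n, by omega⟩, τ⟩, hdn, hR⟩, (e, t, ν), ?_, ?_⟩)
  · exact linPart_surj i d M h g hh hg τ (e, t, ν) ht hν hi hM (by omega) hdn
  · refine Prod.ext ?_ ?_
    · ext ⟨⟨j, k⟩, hjk⟩
      have := hz j k hjk
      rw [add_comm] at this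
      exact this
    · ext l
      have := hw l
      simp only [mul_add, Finset.sum_add_distrib] at this
      rw [add_comm] at this
      exact this
end generic
end ModT2a

section ModT2b
open scoped Topology

/-- Weight functions. -/
structure GData (d : ℕ) (g : ℝ → ℂ) : Prop where
  contDiff : ContDiff ℝ 1 g
  ne_zero : ∀ t, g t ≠ 0
  tendsto : Filter.Tendsto (fun t : ℝ => (t : ℂ) ^ d * g t) (Filter.cocompact ℝ) (𝓝 1)

lemma tendsto_ofReal_inv : Filter.Tendsto (fun t : ℝ => (t : ℂ)⁻¹) (Filter.cocompact ℝ) (𝓝 0) := by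
  refine Filter.tendsto_inv₀_cobounded.comp ?_
  rw [← tendsto_norm_atTop_iff_cobounded]
  refine Filter.tendsto_atTop_mono (f := fun t : ℝ => ‖t‖) (fun t => ?_)
    (tendsto_norm_cocompact_atTop)
  simp

lemma eventually_ne_cocompact (c : ℝ) : ∀ᶠ t : ℝ in Filter.cocompact ℝ, t ≠ c := by
  have : ({c} : Set ℝ)ᶜ ∈ Filter.cocompact ℝ := isCompact_singleton.compl_mem_cocompact
  exact this

lemma GData.tendsto_low {d : ℕ} {g : ℝ → ℂ} (hg : GData d g) (l : ℕ) (hl : l < d) :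
    Filter.Tendsto (fun t : ℝ => (t : ℂ) ^ l * g t) (Filter.cocompact ℝ) (𝓝 0) := by
  have h1 := (tendsto_ofReal_inv.pow (d - l)).mul hg.tendsto
  rw [zero_pow (by omega), zero_mul] at h1
  refine h1.congr' ?_
  filter_upwards [eventually_ne_cocompact 0] with t ht
  have ht' : (t : ℂ) ≠ 0 := by exact_mod_cast ht
  have : (t : ℂ) ^ d = (t : ℂ) ^ (d - l) * (t : ℂ) ^ l := by rw [← pow_add]; congr 1; omega
  rw [this, ← mul_assoc, ← mul_assoc, ← mul_pow, inv_mul_cancel₀ ht', one_pow, one_mul]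

lemma GData.continuous {d : ℕ} {g : ℝ → ℂ} (hg : GData d g) : Continuous g := hg.contDiff.continuous

/-- top term on the circle -/
def GData.top {d : ℕ} {g : ℝ → ℂ} (hg : GData d g) : C(OnePoint ℝ, ℂ) :=
  extS (fun t : ℝ => (t : ℂ) ^ d * g t) 1 (by have := hg.continuous; fun_prop) hg.tendsto

/-- lower terms on the circle -/
def GData.low {d : ℕ} {g : ℝ → ℂ} (hg : GData d g) (l : Fin d) : C(OnePoint ℝ, ℂ) :=
  extS (fun t : ℝ => (t : ℂ) ^ (l : ℕ) * g t) 0 (by have := hg.continuous; fun_prop)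
    (hg.tendsto_low l l.2)

/-- perturbation on the circle -/
def GData.pertS {d : ℕ} {g : ℝ → ℂ} (hg : GData d g) (u : Fin d → ℂ) (s : OnePoint ℝ) : ℂ :=
  ∑ l, u l * hg.low l s

/-- weighted monic polynomial on the circle -/
def GData.pgS {d : ℕ} {g : ℝ → ℂ} (hg : GData d g) (u : Fin d → ℂ) (s : OnePoint ℝ) : ℂ :=
  hg.top s + hg.pertS u s

lemma GData.pertS_coe {d : ℕ} {g : ℝ → ℂ} (hg : GData d g) (u : Fin d → ℂ) (t : ℝ) :
    hg.pertS u (t : OnePoint ℝ) = pert g u t := by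
  simp only [GData.pertS, pert, Finset.sum_mul, GData.low, extS_coe, mul_assoc]

@[simp] lemma GData.pertS_infty {d : ℕ} {g : ℝ → ℂ} (hg : GData d g) (u : Fin d → ℂ) :
    hg.pertS u OnePoint.infty = 0 := by
  simp [GData.pertS, GData.low]

lemma toPoly_eval {d : ℕ} (a : Fin d → ℂ) (z : ℂ) :
    (toPoly a).eval z = z ^ d + ∑ l, a l * z ^ (l : ℕ) := by
  simp [toPoly, Polynomial.eval_finsetSum]

lemma GData.pgS_coe {d : ℕ} {g : ℝ → ℂ} (hg : GData d g) (u : Fin d → ℂ) (t : ℝ) :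
    hg.pgS u (t : OnePoint ℝ) = (toPoly u).eval (t : ℂ) * g t := by
  rw [GData.pgS, GData.pertS_coe, pert, toPoly_eval, add_mul]
  rfl

@[simp] lemma GData.pgS_infty {d : ℕ} {g : ℝ → ℂ} (hg : GData d g) (u : Fin d → ℂ) :
    hg.pgS u OnePoint.infty = 1 := by
  simp [GData.pgS, GData.top]

lemma GData.continuous_pertS {d : ℕ} {g : ℝ → ℂ} (hg : GData d g) :
    Continuous fun p : (Fin d → ℂ) × OnePoint ℝ => hg.pertS p.1 p.2 := by
  unfold GData.pertS; fun_prop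

lemma GData.continuous_pgS {d : ℕ} {g : ℝ → ℂ} (hg : GData d g) :
    Continuous fun p : (Fin d → ℂ) × OnePoint ℝ => hg.pgS p.1 p.2 := by
  have := hg.continuous_pertS
  unfold GData.pgS; fun_prop

lemma GData.pertS_add {d : ℕ} {g : ℝ → ℂ} (hg : GData d g) (u v : Fin d → ℂ) (s : OnePoint ℝ) :
    hg.pertS (u + v) s = hg.pertS u s + hg.pertS v s := by
  simp [GData.pertS, add_mul, Finset.sum_add_distrib]

lemma GData.pertS_sub {d : ℕ} {g : ℝ → ℂ} (hg : GData d g) (u v : Fin d → ℂ) (s : OnePoint ℝ) :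
    hg.pertS (u - v) s = hg.pertS u s - hg.pertS v s := by
  simp [GData.pertS, sub_mul, Finset.sum_sub_distrib]

lemma GData.pertS_bound {d : ℕ} {g : ℝ → ℂ} (hg : GData d g) :
    ∃ C : ℝ, 0 < C ∧ ∀ u s, ‖hg.pertS u s‖ ≤ C * ‖u‖ := by
  refine ⟨∑ l, ‖hg.low l‖ + 1, ?_, fun u s => ?_⟩
  · have : 0 ≤ ∑ l, ‖hg.low l‖ := Finset.sum_nonneg fun _ _ => norm_nonneg _
    linarith
  · calc ‖hg.pertS u s‖ ≤ ∑ l, ‖u l * hg.low l s‖ := norm_sum_le _ _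
      _ ≤ ∑ l, ‖u‖ * ‖hg.low l‖ := by
          refine Finset.sum_le_sum fun l _ => ?_
          rw [norm_mul]
          gcongr
          · exact norm_le_pi_norm u l
          · exact ContinuousMap.norm_coe_le_norm _ _
      _ = (∑ l, ‖hg.low l‖) * ‖u‖ := by rw [← Finset.mul_sum, mul_comm]
      _ ≤ _ := by gcongr; linarith

lemma tendsto_ratio : Filter.Tendsto (fun t : ℝ => (t : ℂ) * ((t : ℂ) + Complex.I)⁻¹)
    (Filter.cocompact ℝ) (𝓝 1) := by
  have h : (fun t : ℝ => (t : ℂ) * ((t : ℂ) + Complex.I)⁻¹) =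
      fun t : ℝ => 1 - Complex.I * ((t : ℂ) + Complex.I)⁻¹ := by
    ext t
    have := tpi_ne t
    field_simp
    ring
  rw [h]
  have := (tendsto_tpi_inv.const_mul Complex.I).const_sub 1
  simpa using this

lemma gdata_inv (L : ℕ) : GData L (fun t : ℝ => ((t : ℂ) + Complex.I)⁻¹ ^ L) where
  contDiff := contDiff_tpi_inv.pow L
  ne_zero := fun t => pow_ne_zero _ (inv_ne_zero (tpi_ne t))
  tendsto := by
    have := tendsto_ratio.pow L
    simpa [mul_pow] using this

/-- The monic polynomial attached to coefficients. -/
lemma toPoly_monic {d : ℕ} (a : Fin d → ℂ) : (toPoly a).Monic ∧ (toPoly a).natDegree = d := by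
  have hlt : (∑ i : Fin d, Polynomial.C (a i) * Polynomial.X ^ (i : ℕ)).degree < ((d : ℕ) : WithBot ℕ) := by
    rw [Polynomial.degree_lt_iff_coeff_zero]
    intro m hm
    rw [Polynomial.finsetSum_coeff]
    refine Finset.sum_eq_zero fun i _ => ?_
    rw [Polynomial.coeff_C_mul_X_pow, if_neg]
    have := i.2; omega
  constructor
  · exact Polynomial.monic_X_pow_add hlt
  · apply Polynomial.natDegree_eq_of_degree_eq_some
    rw [toPoly, Polynomial.degree_add_eq_left_of_degree_lt] <;> rw [Polynomial.degree_X_pow]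
    exact hlt

lemma toPoly_roots_card {d : ℕ} (a : Fin d → ℂ) {n : ℕ} (t : Fin n → ℝ) (ht : Function.Injective t)
    (J : Finset (Fin n)) (hJ : ∀ j ∈ J, (toPoly a).eval (t j : ℂ) = 0) : J.card ≤ d := by
  have hm := toPoly_monic a
  have hinj : Function.Injective (fun j => (t j : ℂ)) := fun a b h => ht (Complex.ofReal_injective h)
  rw [← Finset.card_image_of_injective J hinj]
  have hsub : J.image (fun j => (t j : ℂ)) ⊆ (toPoly a).roots.toFinset := by
    intro z hz
    obtain ⟨j, hj, rfl⟩ := Finset.mem_image.1 hz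
    rw [Multiset.mem_toFinset, Polynomial.mem_roots hm.1.ne_zero]
    exact hJ j hj
  calc _ ≤ _ := Finset.card_le_card hsub
    _ ≤ _ := Multiset.toFinset_card_le _
    _ ≤ _ := Polynomial.card_roots' _
    _ = d := hm.2

variable {r : ℕ}

/-- The bad locus for the coordinate `i`. -/
def Bad (K : Set (Finset (Fin r))) (i : Fin r) (q : Fin r → ℂ) : Prop :=
  ∃ σ : Finset (Fin r), σ ∉ K ∧ i ∈ σ ∧ ∀ k ∈ σ, k ≠ i → q k = 0

lemma isClosed_bad (K : Set (Finset (Fin r))) (i : Fin r) : IsClosed {q | Bad K i q} := by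
  have : {q : Fin r → ℂ | Bad K i q} = ⋃ σ : {σ : Finset (Fin r) // σ ∉ K ∧ i ∈ σ},
      {q | ∀ k ∈ σ.1, k ≠ i → q k = 0} := by
    ext q
    simp only [Bad, Set.mem_ofPred_eq, Set.mem_iUnion, Subtype.exists, exists_prop, and_assoc]
  rw [this]
  refine isClosed_iUnion_of_finite fun σ => ?_
  simp only [Set.ofPred_forall]
  refine isClosed_iInter fun k => isClosed_iInter fun _ => isClosed_iInter fun _ => ?_
  exact isClosed_eq (continuous_apply k) continuous_const

lemma Bad.ne_zero {K : Set (Finset (Fin r))} {i : Fin r} {q : Fin r → ℂ} (h : Bad K i q)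
    (hq : q ∈ UK K) : q i ≠ 0 := by
  obtain ⟨σ, hσ, hi, hz⟩ := h
  obtain ⟨k, hk, hne⟩ := mem_UK.1 hq σ hσ
  by_cases hki : k = i
  · rwa [hki] at hne
  · exact absurd (hz k hk hki) hne

lemma update_mem_UK {K : Set (Finset (Fin r))} {i : Fin r} {q : Fin r → ℂ} (hq : q ∈ UK K) (c : ℂ)
    (hc : Bad K i q → c ≠ 0) : Function.update q i c ∈ UK K := by
  rw [mem_UK]
  intro σ hσ
  by_cases hi : i ∈ σ
  · by_cases hb : ∀ k ∈ σ, k ≠ i → q k = 0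
    · exact ⟨i, hi, by simpa using hc ⟨σ, hσ, hi, hb⟩⟩
    · push Not at hb
      obtain ⟨k, hk, hki, hne⟩ := hb
      exact ⟨k, hk, by rwa [Function.update_of_ne hki]⟩
  · obtain ⟨k, hk, hne⟩ := mem_UK.1 hq σ hσ
    have hki : k ≠ i := fun h => hi (h ▸ hk)
    exact ⟨k, hk, by rwa [Function.update_of_ne hki]⟩

lemma not_bad_ones {K : Set (Finset (Fin r))} {i : Fin r} (hK : ∀ σ, σ ∉ K → 2 ≤ σ.card)
    {q : Fin r → ℂ} (hq : ∀ k, q k = 1) : ¬ Bad K i q := by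
  rintro ⟨σ, hσ, hi, hz⟩
  obtain ⟨k, hk, hki⟩ := Finset.exists_mem_ne (hK σ hσ) i
  have := hz k hk hki
  rw [hq] at this
  exact one_ne_zero this

lemma isOpen_UK (K : Set (Finset (Fin r))) : IsOpen (UK K) := by
  have : UK K = ⋂ σ : {σ : Finset (Fin r) // σ ∉ K}, (LSub σ.1)ᶜ := by
    ext x
    simp [UK]
  rw [this]
  refine isOpen_iInter_of_finite fun σ => ?_
  rw [isOpen_compl_iff]
  simp only [LSub, Set.ofPred_forall]
  exact isClosed_iInter fun k => isClosed_iInter fun _ =>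
    isClosed_eq (continuous_apply k) continuous_const
end ModT2b

section ModT2c
open scoped Topology
variable {r : ℕ}

/-- From a failure of positivity we get moment conditions; otherwise a good monic polynomial. -/
lemma exists_good_poly {d : ℕ} {g : ℝ → ℂ} (hg : GData d g) (q : OnePoint ℝ → ℂ) (hq : Continuous q)
    (W : Set ℝ) (hW : IsCompact W) :
    (∃ p : Fin d → ℂ, ∀ t ∈ W, 0 < (hg.pgS p (t : OnePoint ℝ) * star (q t)).re) ∨
    (∃ (m : ℕ) (t : Fin m → ℝ) (ν : Fin m → ℝ), 0 < m ∧ m ≤ 2 * d + 1 ∧ Function.Injective t ∧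
      (∀ j, t j ∈ W) ∧ (∀ j, 0 < ν j) ∧
      ∀ l : Fin d, ∑ j, (ν j : ℂ) * star (g (t j)) * (t j : ℂ) ^ (l : ℕ) * q (t j) = 0) := by
  have hqc : Continuous fun t : ℝ => q (t : OnePoint ℝ) := hq.comp OnePoint.continuous_coe
  have hgc := hg.continuous
  rcases cone_dichotomy (d := d) (fun t l => g t * star (q (t : OnePoint ℝ)) * (t : ℂ) ^ (l : ℕ)) W hW
    (by
      apply Continuous.continuousOn
      refine continuous_pi fun l => ?_
      exact (hgc.mul hqc.star).mul (by fun_prop)) with ⟨u, ε, hε, hu⟩ | ⟨m, t, ν, h1, h2, h3, h4, h5, h6⟩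
  · left
    have hcont : Continuous fun t : ℝ => ‖(t : ℂ) ^ d * g t * star (q (t : OnePoint ℝ))‖ := by
      exact ((Continuous.mul (by fun_prop) hgc).mul hqc.star).norm
    obtain ⟨C, hC⟩ := (hW.image hcont).bddAbove
    have hC' : ∀ t ∈ W, ‖(t : ℂ) ^ d * g t * star (q (t : OnePoint ℝ))‖ ≤ C :=
      fun t ht => hC ⟨t, ht, rfl⟩
    let s : ℝ := (|C| + 1) / ε
    have hs : 0 < s := by positivity
    refine ⟨fun l => (s : ℂ) * u l, fun t ht => ?_⟩
    have e1 : hg.pgS (fun l => (s : ℂ) * u l) (t : OnePoint ℝ) * star (q t) =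
        (t : ℂ) ^ d * g t * star (q (t : OnePoint ℝ)) +
        (s : ℂ) * (∑ l, u l * (g t * star (q (t : OnePoint ℝ)) * (t : ℂ) ^ (l : ℕ))) := by
      rw [hg.pgS_coe, toPoly_eval, add_mul, add_mul, Finset.mul_sum, Finset.sum_mul, Finset.sum_mul]
      congr 1
      refine Finset.sum_congr rfl fun l _ => by ring
    rw [e1, Complex.add_re, Complex.re_ofReal_mul]
    have h1 := hu t ht
    have h2 := Complex.abs_re_le_norm ((t : ℂ) ^ d * g t * star (q (t : OnePoint ℝ)))
    have h3 := hC' t ht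
    have h4 := neg_abs_le ((t : ℂ) ^ d * g t * star (q (t : OnePoint ℝ))).re
    have h5 : s * ε = |C| + 1 := div_mul_cancel₀ _ hε.ne'
    have h6 := le_abs_self C
    have h7 := mul_le_mul_of_nonneg_left h1 hs.le
    linarith
  · right
    refine ⟨m, t, ν, h1, h2, h3, h4, h5, fun l => ?_⟩
    have := congrArg star (h6 l)
    rw [star_sum, star_zero] at this
    rw [← this]
    refine Finset.sum_congr rfl fun j _ => ?_
    simp only [star_mul', star_pow, star_star]
    have a1 : star ((ν j : ℝ) : ℂ) = (ν j : ℂ) := Complex.conj_ofReal _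
    have a2 : star ((t j : ℝ) : ℂ) = (t j : ℂ) := Complex.conj_ofReal _
    rw [a1, a2]
    ring

lemma isCompact_badTimes {K : Set (Finset (Fin r))} {i : Fin r} (hK : ∀ σ, σ ∉ K → 2 ≤ σ.card)
    (q : OnePoint ℝ → Fin r → ℂ) (hq : Continuous q) (hinf : ∀ k, q OnePoint.infty k = 1) :
    IsCompact {t : ℝ | Bad K i (q (t : OnePoint ℝ))} := by
  have hcl : IsClosed {s : OnePoint ℝ | Bad K i (q s)} := (isClosed_bad K i).preimage hq
  have := OnePoint.isOpenEmbedding_coe (X := ℝ) |>.isInducing.isCompact_preimage' hcl.isCompact (by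
    intro s hs
    induction s using OnePoint.rec with
    | infty => exact absurd hs (not_bad_ones hK hinf)
    | coe t => exact ⟨t, rfl⟩)
  exact this

lemma approx_generic {X E : Type*} [TopologicalSpace X] [CompactSpace X]
    [NormedAddCommGroup E] [NormedSpace ℝ E] [FiniteDimensional ℝ E]
    (ι : X → E) (hι : Continuous ι) (hinj : Function.Injective ι)
    (K : Set (Finset (Fin r))) (R : ℕ) (hR : 1 ≤ R) (hK : ∀ σ, σ ∉ K → R + 1 ≤ σ.card)
    (D : Fin r → ℕ) (g : Fin r → ℝ → ℂ) (hg : ∀ k, GData (D k) (g k))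
    (i : Fin r) (hE : Module.finrank ℝ E + 1 ≤ 2 * R * D i)
    (Dn : Finset (Fin r)) (hi : i ∉ Dn)
    (P : C(X × OnePoint ℝ, Fin r → ℂ)) (hPinf : ∀ x k, P (x, OnePoint.infty) k = 1)
    (c : ∀ k, C(X, Fin (D k) → ℂ))
    (hc : ∀ k ∈ Dn, ∀ x s, P (x, s) k = (hg k).pgS (c k x) s) (ε : ℝ) (hε : 0 < ε) :
    ∃ (Q : C(X × OnePoint ℝ, Fin r → ℂ)) (c' : ∀ k, C(X, Fin (D k) → ℂ)),
      (∀ x k, Q (x, OnePoint.infty) k = 1) ∧ (∀ p k, ‖Q p k - P p k‖ < ε) ∧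
      (∀ k ∈ Dn, ∀ x s, Q (x, s) k = (hg k).pgS (c' k x) s) ∧
      ∀ x, (∀ s, Q (x, s) ∈ UK K) → ∃ p : Fin (D i) → ℂ, ∀ s, Bad K i (Q (x, s)) →
        0 < ((hg i).pgS p s * star (Q (x, s) i)).re := by
  set d := D i with hd
  let M : Fin r → ℕ := fun k => if k ∈ Dn then D k else 2 * d + 1
  let h : Fin r → ℝ → ℂ := fun k => if k ∈ Dn then g k else
    fun t : ℝ => ((t : ℂ) + Complex.I)⁻¹ ^ (2 * d + 1)
  have hh : ∀ k, GData (M k) (h k) := by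
    intro k
    by_cases hk : k ∈ Dn
    · simp only [M, h, if_pos hk]; exact hg k
    · simp only [M, h, if_neg hk]; exact gdata_inv _
  choose C hC0 hC using fun k => (hh k).pertS_bound
  let Ct : ℝ := ∑ k, C k + 1
  have hCt : ∀ k, C k ≤ Ct := fun k => by
    have := Finset.single_le_sum (f := C) (fun k _ => (hC0 k).le) (Finset.mem_univ k)
    simp only [Ct]; linarith
  have hCt0 : 0 < Ct := by
    have : 0 ≤ ∑ k, C k := Finset.sum_nonneg fun k _ => (hC0 k).le
    simp only [Ct]; linarith
  let η : ℝ := ε / (4 * Ct)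
  have hη : 0 < η := by positivity
  have hsmall : ∀ k (v : Fin (M k) → ℂ) s, ‖v‖ ≤ 2 * η → ‖(hh k).pertS v s‖ ≤ ε / 2 := by
    intro k v s hv
    calc _ ≤ C k * ‖v‖ := hC k v s
      _ ≤ Ct * (2 * η) := by gcongr; exact hCt k
      _ = ε / 2 := by simp only [η]; field_simp; ring
  -- approximations
  have key : ∀ k, ∃ (f : C(X × OnePoint ℝ, ℂ)) (G : E × ℝ → ℂ), ContDiff ℝ 1 G ∧
      (∀ x (t : ℝ), f (x, (t : OnePoint ℝ)) = G (ι x, t)) ∧ (∀ x, f (x, OnePoint.infty) = 1) ∧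
      ∃ c1 : C(X, Fin (D k) → ℂ), (∀ x, k ∈ Dn → ‖c1 x - c k x‖ ≤ η) ∧
      (k ∈ Dn → ∀ x s, f (x, s) = (hg k).pgS (c1 x) s) ∧
      (k ∉ Dn → ∀ p, ‖f p - P p k‖ < ε / 2) := by
    intro k
    by_cases hk : k ∈ Dn
    · choose G hG1 hG2 using fun l : Fin (D k) =>
        approx_c1_X ι hι hinj ⟨fun x => c k x l, by fun_prop⟩ η hη
      have hGc : ∀ l, Continuous (G l) := fun l => (hG1 l).continuous
      let c1 : C(X, Fin (D k) → ℂ) := ⟨fun x l => G l (ι x), by fun_prop⟩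
      have hpg := (hg k).continuous_pgS
      refine ⟨⟨fun p => (hg k).pgS (c1 p.1) p.2, ?_⟩,
        fun p => ((p.2 : ℂ) ^ (D k) + ∑ l, G l p.1 * (p.2 : ℂ) ^ (l : ℕ)) * g k p.2, ?_, ?_, ?_, c1, ?_, ?_, ?_⟩
      · exact hpg.comp ((c1.continuous.comp continuous_fst).prodMk continuous_snd)
      · have hof : ContDiff ℝ 1 (fun x : E × ℝ => (x.2 : ℂ)) :=
          Complex.ofRealCLM.contDiff.comp contDiff_snd
        refine ContDiff.mul (ContDiff.add (hof.pow _) (ContDiff.sum fun l _ => ?_))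
          ((hg k).contDiff.comp contDiff_snd)
        exact ((hG1 l).comp contDiff_fst).mul (hof.pow _)
      · intro x t
        show (hg k).pgS (c1 x) t = _
        rw [(hg k).pgS_coe, toPoly_eval]
        rfl
      · intro x; exact (hg k).pgS_infty _
      · intro x _
        rw [pi_norm_le_iff_of_nonneg hη.le]
        intro l
        exact (hG2 l x).le
      · intro _ x s; rfl
      · intro h; exact absurd hk h
    · obtain ⟨f, G, h1, h2, h3, h4⟩ := approx_c1_based ι hι hinj
        ⟨fun p => P p k, by fun_prop⟩ (fun x => hPinf x k) (ε / 2) (half_pos hε)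
      exact ⟨f, G, h1, h2, h3, c k, fun x h => absurd h hk, fun h => absurd h hk, fun _ => h4⟩
  choose f G hG hfG hfinf c1 hc1 hfc hfP using key
  obtain ⟨u, hu, hgen⟩ := generic_perturb i d R M G hG h (fun k => (hh k).ne_zero)
    (fun k => (hh k).contDiff) (g i) (hg i).ne_zero (hg i).contDiff
    (by
      intro n hn
      have : Module.finrank ℝ E + 1 ≤ 2 * R * n := hE.trans (Nat.mul_le_mul_left _ hn)
      obtain ⟨R', rfl⟩ : ∃ R', R = R' + 1 := ⟨R - 1, by omega⟩
      obtain ⟨n', rfl⟩ : ∃ n', n = d + n' := ⟨n - d, by omega⟩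
      nlinarith [Nat.zero_le (n' * R')])
    (by simp only [M, if_neg hi]; exact le_rfl) η hη
  have huk : ∀ k, ‖u k‖ ≤ η := fun k => (norm_le_pi_norm u k).trans hu.le
  have hMk : ∀ k, k ∈ Dn → M k = D k := fun k hk => if_pos hk
  let c' : ∀ k, C(X, Fin (D k) → ℂ) := fun k =>
    if hk : k ∈ Dn then ⟨fun x l => c1 k x l + u k (Fin.cast (hMk k hk).symm l), by fun_prop⟩ else c k
  have hpc := fun k => (hh k).continuous_pertS
  let Q : C(X × OnePoint ℝ, Fin r → ℂ) :=
    ⟨fun p k => f k p + (hh k).pertS (u k) p.2, by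
      refine continuous_pi fun k => ((f k).continuous.add ?_)
      exact (hpc k).comp (continuous_const.prodMk continuous_snd)⟩
  have hcast : ∀ k (hk : k ∈ Dn) (v : Fin (M k) → ℂ) s,
      (hh k).pertS v s = (hg k).pertS (fun l => v (Fin.cast (hMk k hk).symm l)) s := by
    intro k hk v s
    induction s using OnePoint.rec with
    | infty => simp
    | coe t =>
      rw [GData.pertS_coe, GData.pertS_coe]
      simp only [pert]
      have e1 : h k t = g k t := by simp only [h, if_pos hk]
      rw [e1]
      congr 1
      exact (Fintype.sum_equiv (finCongr (hMk k hk).symm) _ _ (fun l => by simp [finCongr])).symm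
  have hQD : ∀ k ∈ Dn, ∀ x s, Q (x, s) k = (hg k).pgS (c' k x) s := by
    intro k hk x s
    show f k (x, s) + (hh k).pertS (u k) s = _
    rw [hfc k hk, hcast k hk, GData.pgS, GData.pgS, add_assoc, ← GData.pertS_add]
    simp only [c', dif_pos hk]
    rfl
  refine ⟨Q, c', ?_, ?_, hQD, ?_⟩
  · intro x k
    show f k (x, _) + (hh k).pertS (u k) _ = 1
    rw [hfinf, GData.pertS_infty, add_zero]
  · rintro ⟨x, s⟩ k
    by_cases hk : k ∈ Dn
    · rw [hQD k hk, hc k hk, GData.pgS, GData.pgS, add_sub_add_left_eq_sub, ← GData.pertS_sub]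
      have hv : ‖(fun l => (c' k x - c k x) (Fin.cast (hMk k hk) l) : Fin (M k) → ℂ)‖ ≤ 2 * η := by
        rw [pi_norm_le_iff_of_nonneg (by positivity)]
        intro l
        have e2 : (c' k x - c k x) (Fin.cast (hMk k hk) l) =
            (c1 k x - c k x) (Fin.cast (hMk k hk) l) + u k l := by
          simp only [c', dif_pos hk]
          simp
          ring
        rw [e2]
        have a1 := (norm_le_pi_norm (c1 k x - c k x) (Fin.cast (hMk k hk) l)).trans (hc1 k x hk)
        have a2 := (norm_le_pi_norm (u k) l).trans (huk k)
        exact (norm_add_le _ _).trans (by linarith)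
      have := hsmall k _ s hv
      rw [hcast k hk] at this
      simp only [Fin.cast_cast, Fin.cast_eq_self] at this
      exact lt_of_le_of_lt this (by linarith)
    · have a1 := hfP k hk (x, s)
      have a2 := hsmall k (u k) s ((huk k).trans (by linarith))
      show ‖f k (x, s) + (hh k).pertS (u k) s - P (x, s) k‖ < ε
      rw [add_sub_right_comm]
      exact lt_of_le_of_lt (norm_add_le _ _) (by linarith)
  · intro x hx
    have hQc : Continuous fun s => Q (x, s) := by fun_prop
    have hQinf : ∀ k, Q (x, OnePoint.infty) k = 1 := by
      intro k
      show f k (x, _) + (hh k).pertS (u k) _ = 1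
      rw [hfinf, GData.pertS_infty, add_zero]
    have hK2 : ∀ σ, σ ∉ K → 2 ≤ σ.card := fun σ hσ => by have := hK σ hσ; omega
    rcases exists_good_poly (hg i) (fun s => Q (x, s) i) (by fun_prop) _
      (isCompact_badTimes (i := i) hK2 (fun s => Q (x, s)) hQc hQinf) with ⟨p, hp⟩ |
      ⟨m, t, ν, hm0, hm, ht, htW, hν, hmom⟩
    · refine ⟨p, fun s hs => ?_⟩
      induction s using OnePoint.rec with
      | infty => exact absurd hs (not_bad_ones hK2 hQinf)
      | coe t => exact hp t hs
    · exfalso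
      have htW' : ∀ j, Bad K i (Q (x, (t j : OnePoint ℝ))) := htW
      have hdm : d ≤ m := by
        by_contra hlt
        have hz := moment_zero (d := d) (by omega) t ht
          (fun j => (ν j : ℂ) * star (g i (t j)) * Q (x, (t j : OnePoint ℝ)) i) (fun l => by
            rw [← hmom l]
            refine Finset.sum_congr rfl fun j _ => by ring)
        have hz0 := congrFun hz ⟨0, hm0⟩
        simp only [Pi.zero_apply, mul_eq_zero, star_eq_zero] at hz0
        rcases hz0 with (h1 | h1) | h1
        · exact (hν _).ne' (by exact_mod_cast h1)
        · exact (hg i).ne_zero _ h1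
        · exact (htW' _).ne_zero (hx _) h1
      choose σ hσK hσi hσz using htW'
      have hQt : ∀ j k, Q (x, (t j : OnePoint ℝ)) k = G k (ι x, t j) + pert (h k) (u k) (t j) := by
        intro j k
        show f k (x, _) + (hh k).pertS (u k) _ = _
        rw [hfG, GData.pertS_coe]
      refine hgen m (ι x) t ν (fun j => (σ j).erase i) ht hν hdm hm (fun j => by simp) ?_ ?_ ?_ ?_
      · intro j
        have := hK _ (hσK j)
        rw [Finset.card_erase_of_mem (hσi j)]
        omega
      · intro k hki
        by_cases hk : k ∈ Dn
        · rw [hMk k hk]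
          refine toPoly_roots_card (c' k x) t ht _ fun j hj => ?_
          have hj' : k ∈ σ j := (Finset.mem_erase.1 (Finset.mem_filter.1 hj).2).2
          have := hσz j k hj' hki
          rw [hQD k hk, GData.pgS_coe] at this
          exact (mul_eq_zero.1 this).resolve_right ((hg k).ne_zero _)
        · simp only [M, if_neg hk]
          calc _ ≤ (Finset.univ : Finset (Fin m)).card := Finset.card_filter_le _ _
            _ ≤ _ := by simpa using hm
      · intro j k hk
        rw [← hQt]
        exact hσz j k (Finset.mem_erase.1 hk).2 (Finset.mem_erase.1 hk).1
      · intro l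
        rw [← hmom l]
        refine Finset.sum_congr rfl fun j _ => ?_
        rw [hQt]
end ModT2c

section ModT2d
open scoped Topology

section T2d
variable {r : ℕ}

lemma re_mul_star_pos {a b : ℂ} (h : ‖a - b‖ < ‖b‖) : 0 < (a * star b).re := by
  have h1 : a * star b = (a - b) * star b + b * star b := by ring
  have h2 : (b * star b).re = ‖b‖ ^ 2 := by
    rw [Complex.star_def, Complex.mul_conj, Complex.ofReal_re, Complex.normSq_eq_norm_sq]
  have h3 : |((a - b) * star b).re| ≤ ‖a - b‖ * ‖b‖ := by
    refine (Complex.abs_re_le_norm _).trans ?_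
    rw [norm_mul, norm_star]
  rw [h1, Complex.add_re, h2]
  have h4 := abs_le.1 h3
  have h5 : 0 < ‖b‖ := lt_of_le_of_lt (norm_nonneg _) h
  nlinarith

lemma lin_htp {Z : Type*} [TopologicalSpace Z] {K : Set (Finset (Fin r))} (P Q : C(Z, ↥(UK K)))
    (B : Set Z) (h : ∀ z, ∀ u : ℝ, 0 ≤ u → u ≤ 1 → (1 - u) • (P z).1 + u • (Q z).1 ∈ UK K)
    (hB : ∀ z ∈ B, P z = Q z) : P.HomotopicRel Q B := by
  refine ⟨⟨⟨⟨fun p => ⟨(1 - (p.1 : ℝ)) • (P p.2).1 + (p.1 : ℝ) • (Q p.2).1,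
    h p.2 p.1 p.1.2.1 p.1.2.2⟩, ?_⟩, ?_, ?_⟩, ?_⟩⟩
  · apply Continuous.subtype_mk
    fun_prop
  · intro z; ext1; simp
  · intro z; ext1; simp
  · intro t z hz
    show (_ : ↥(UK K)) = _
    ext1
    simp only [ContinuousMap.toFun_eq_coe, ContinuousMap.coe_mk]
    rw [← hB z hz, ← add_smul]; simp

lemma GData.pgS_comb {d : ℕ} {g : ℝ → ℂ} (hg : GData d g) (u v : Fin d → ℂ) (s : OnePoint ℝ) (a : ℝ) :
    hg.pgS ((1 - a) • u + a • v) s = (1 - a) • hg.pgS u s + a • hg.pgS v s := by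
  have : hg.pertS ((1 - a) • u + a • v) s = (1 - a) • hg.pertS u s + a • hg.pertS v s := by
    simp [GData.pertS, Finset.smul_sum, add_mul, Finset.sum_add_distrib, Finset.mul_sum, mul_assoc]
  simp only [GData.pgS, this, Complex.real_smul]
  push_cast
  ring

lemma uk_delta {Z : Type*} [TopologicalSpace Z] [CompactSpace Z] {K : Set (Finset (Fin r))}
    (P : C(Z, ↥(UK K))) : ∃ δ > 0, ∀ z (q : Fin r → ℂ), (∀ k, ‖q k - (P z).1 k‖ < δ) → q ∈ UK K := by
  have hc : IsCompact (Set.range fun z => (P z).1) := isCompact_range (by fun_prop)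
  obtain ⟨δ, hδ, hsub⟩ := hc.exists_thickening_subset_open (isOpen_UK K) (by
    rintro _ ⟨z, rfl⟩; exact (P z).2)
  refine ⟨δ, hδ, fun z q hq => hsub ?_⟩
  rw [Metric.mem_thickening_iff]
  refine ⟨_, ⟨z, rfl⟩, ?_⟩
  rw [dist_pi_lt_iff hδ]
  intro k
  rw [dist_eq_norm]; exact hq k

lemma bad_norm {K : Set (Finset (Fin r))} {i : Fin r} {δ : ℝ} {p q : Fin r → ℂ}
    (hδ : 0 < δ)
    (hp : ∀ q : Fin r → ℂ, (∀ k, ‖q k - p k‖ < δ) → q ∈ UK K) (hb : Bad K i q)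
    (hq : ∀ k, ‖q k - p k‖ < δ) : δ ≤ ‖p i‖ := by
  by_contra hlt
  push Not at hlt
  have hm : Function.update q i 0 ∈ UK K := by
    apply hp
    intro k
    by_cases hk : k = i
    · subst hk; simpa using hlt
    · simpa [hk] using hq k
  have hb' : Bad K i (Function.update q i 0) := by
    obtain ⟨σ, hσ, hi, hz⟩ := hb
    exact ⟨σ, hσ, hi, fun k hk hki => by simpa [hki] using hz k hk hki⟩
  exact hb'.ne_zero hm (by simp)

lemma ml_step {X E : Type*} [TopologicalSpace X] [CompactSpace X] [T2Space X]
    [NormedAddCommGroup E] [NormedSpace ℝ E] [FiniteDimensional ℝ E]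
    (ι : X → E) (hι : Continuous ι) (hinj : Function.Injective ι)
    (K : Set (Finset (Fin r))) (R : ℕ) (hR : 1 ≤ R) (hK : ∀ σ, σ ∉ K → R + 1 ≤ σ.card)
    (D : Fin r → ℕ) (g : Fin r → ℝ → ℂ) (hg : ∀ k, GData (D k) (g k))
    (i : Fin r) (hE : Module.finrank ℝ E + 1 ≤ 2 * R * D i)
    (Dn : Finset (Fin r)) (hi : i ∉ Dn)
    (P : C(X × OnePoint ℝ, ↥(UK K))) (hPinf : ∀ x k, (P (x, OnePoint.infty)).1 k = 1)
    (A : Set X) (hA : IsClosed A)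
    (c : ∀ k, C(X, Fin (D k) → ℂ))
    (hcA : ∀ x ∈ A, ∀ s k, (P (x, s)).1 k = (hg k).pgS (c k x) s)
    (hc : ∀ k ∈ Dn, ∀ x s, (P (x, s)).1 k = (hg k).pgS (c k x) s) :
    ∃ (P' : C(X × OnePoint ℝ, ↥(UK K))) (c' : ∀ k, C(X, Fin (D k) → ℂ)),
      (∀ k, ∀ x ∈ A, c' k x = c k x) ∧
      (∀ k ∈ insert i Dn, ∀ x s, (P' (x, s)).1 k = (hg k).pgS (c' k x) s) ∧
      P.HomotopicRel P' {p | p.1 ∈ A ∨ p.2 = OnePoint.infty} := by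
  obtain ⟨δ, hδ, hδU⟩ := uk_delta P
  -- the neighbourhood O
  set O : Set X := {x | ∀ s, ‖(hg i).pgS (c i x) s - (P (x, s)).1 i‖ < δ / 4} with hO
  have hpgc : Continuous fun p : X × OnePoint ℝ => (hg i).pgS (c i p.1) p.2 :=
    (hg i).continuous_pgS.comp (by fun_prop : Continuous fun p : X × OnePoint ℝ => (c i p.1, p.2))
  have hOo : IsOpen O := by
    have hcl : IsClosed {p : X × OnePoint ℝ | δ / 4 ≤ ‖(hg i).pgS (c i p.1) p.2 - (P p).1 i‖} := by
      refine isClosed_le continuous_const ?_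
      have : Continuous fun p : X × OnePoint ℝ => (P p).1 i :=
        (continuous_apply i).comp (continuous_subtype_val.comp P.continuous)
      fun_prop
    have h2 := isClosedMap_fst_of_compactSpace _ hcl
    rw [← isOpen_compl_iff] at h2
    convert h2 using 1
    ext x
    simp [hO]
  have hAO : A ⊆ O := by
    intro x hx s
    rw [hcA x hx, sub_self, norm_zero]; positivity
  obtain ⟨χ, hχ0, hχ1, hχ⟩ := exists_continuous_zero_one_of_isClosed hA hOo.isClosed_compl
    (by rw [Set.disjoint_compl_right_iff_subset]; exact hAO)
  obtain ⟨Q, cq, hQinf, hQP, hQc, hQg⟩ := approx_generic ι hι hinj K R hR hK D g hg i hE Dn hi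
    ⟨fun p => (P p).1, by fun_prop⟩ hPinf c hc (δ / 4) (by positivity)
  simp only [ContinuousMap.coe_mk] at hQP
  -- the combination
  let Rf : X × OnePoint ℝ → Fin r → ℂ := fun p => (1 - χ p.1) • (P p).1 + χ p.1 • Q p
  have hRcont : Continuous Rf := by fun_prop
  have hRP : ∀ p k, ‖Rf p k - (P p).1 k‖ < δ / 4 := by
    intro p k
    have : Rf p k - (P p).1 k = χ p.1 • (Q p k - (P p).1 k) := by
      simp only [Rf, Pi.add_apply, Pi.smul_apply, Complex.real_smul]; push_cast; ring
    rw [this, norm_smul, Real.norm_of_nonneg (hχ _).1]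
    have := hQP p k
    nlinarith [(hχ p.1).2, (hχ p.1).1, norm_nonneg (Q p k - (P p).1 k)]
  have hRU : ∀ p, Rf p ∈ UK K := fun p => hδU p _ fun k => (hRP p k).trans (by linarith)
  have hRinf : ∀ x k, Rf (x, OnePoint.infty) k = 1 := by
    intro x k; simp [Rf, hPinf, hQinf]
  have hK2 : ∀ σ, σ ∉ K → 2 ≤ σ.card := fun σ hσ => by have := hK σ hσ; omega
  have hRA : ∀ x ∈ A, ∀ s, Rf (x, s) = (P (x, s)).1 := by
    intro x hx s; simp [Rf, hχ0 hx]
  -- selection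
  let T : X → Set (Fin (D i) → ℂ) := fun x => {p | (x ∈ A → p = c i x) ∧
    ∀ s, Bad K i (Rf (x, s)) → 0 < ((hg i).pgS p s * star (Rf (x, s) i)).re}
  have hTconv : ∀ x, Convex ℝ (T x) := by
    intro x p hp q hq a b ha hb hab
    have ha' : a = 1 - b := by linarith
    subst ha'
    refine ⟨fun hx => ?_, fun s hs => ?_⟩
    · rw [hp.1 hx, hq.1 hx, ← add_smul]; simp
    · rw [(hg i).pgS_comb, add_mul, Complex.add_re, smul_mul_assoc, smul_mul_assoc,
        Complex.smul_re, Complex.smul_re, smul_eq_mul, smul_eq_mul]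
      have h1 := hp.2 s hs
      have h2 := hq.2 s hs
      rcases hb.eq_or_lt with rfl | hb'
      · simpa using h1
      · have := mul_pos hb' h2
        have := mul_nonneg ha h1.le
        linarith
  have hOsel : ∀ x ∈ O, c i x ∈ T x := by
    intro x hx
    refine ⟨fun _ => rfl, fun s hs => re_mul_star_pos ?_⟩
    have h1 : δ ≤ ‖(P (x, s)).1 i‖ := bad_norm hδ (hδU (x, s)) hs
      (fun k => (hRP (x, s) k).trans (by linarith))
    have h2 := hRP (x, s) i
    have h3 := hx s
    have h4 := norm_sub_norm_le ((P (x, s)).1 i) (Rf (x, s) i)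
    rw [norm_sub_rev] at h4
    have h5 : ‖(hg i).pgS (c i x) s - Rf (x, s) i‖ ≤
        ‖(hg i).pgS (c i x) s - (P (x, s)).1 i‖ + ‖Rf (x, s) i - (P (x, s)).1 i‖ := by
      rw [norm_sub_rev (Rf (x, s) i)]
      exact norm_sub_le_norm_sub_add_norm_sub _ _ _
    linarith
  have hlocal : ∀ x, ∃ U ∈ 𝓝 x, ∃ f : X → (Fin (D i) → ℂ), ContinuousOn f U ∧ ∀ y ∈ U, f y ∈ T y := by
    intro x
    by_cases hx : x ∈ O
    · exact ⟨O, hOo.mem_nhds hx, c i, (c i).continuous.continuousOn, hOsel⟩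
    · have hχx : χ x = 1 := hχ1 hx
      have hRQ : ∀ s, Rf (x, s) = Q (x, s) := fun s => by simp [Rf, hχx]
      obtain ⟨p, hp⟩ := hQg x (fun s => hRQ s ▸ hRU (x, s))
      have hcl : IsClosed ({y : X × OnePoint ℝ | Bad K i (Rf y)} ∩
          {y | ((hg i).pgS p y.2 * star (Rf y i)).re ≤ 0}) := by
        refine ((isClosed_bad K i).preimage hRcont).inter (isClosed_le ?_ continuous_const)
        have h1 : Continuous fun y : X × OnePoint ℝ => (hg i).pgS p y.2 :=
          (hg i).continuous_pgS.comp (by fun_prop : Continuous fun y : X × OnePoint ℝ => (p, y.2))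
        have h2 : Continuous fun y : X × OnePoint ℝ => star (Rf y i) := by fun_prop
        exact Complex.continuous_re.comp (h1.mul h2)
      have h2 := isClosedMap_fst_of_compactSpace _ hcl
      rw [← isOpen_compl_iff] at h2
      refine ⟨_ ∩ Aᶜ, Filter.inter_mem (h2.mem_nhds ?_) (hA.isOpen_compl.mem_nhds fun h => hx (hAO h)),
        fun _ => p, continuousOn_const, ?_⟩
      · rintro ⟨⟨y, s⟩, ⟨hb, hle⟩, rfl⟩
        simp only at hb hle hx hχx hRQ hp
        have hb' : Bad K i (Q (y, s)) := hRQ s ▸ hb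
        have := hp s hb'
        rw [← hRQ s] at this
        exact absurd this (not_lt.2 hle)
      · rintro y ⟨hy1, hy2⟩
        refine ⟨fun h => absurd h hy2, fun s hs => ?_⟩
        by_contra hle
        exact hy1 ⟨(y, s), ⟨hs, not_lt.1 hle⟩, rfl⟩
  obtain ⟨pc, hpc⟩ := exists_continuous_forall_mem_convex_of_local hTconv hlocal
  have hpgp : Continuous fun p : X × OnePoint ℝ => (hg i).pgS (pc p.1) p.2 :=
    (hg i).continuous_pgS.comp (by fun_prop : Continuous fun p : X × OnePoint ℝ => (pc p.1, p.2))
  let Rc : C(X × OnePoint ℝ, ↥(UK K)) := ⟨fun p => ⟨Rf p, hRU p⟩, by fun_prop⟩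
  have hposne : ∀ (p : X × OnePoint ℝ) (u : ℝ), 0 ≤ u → u ≤ 1 →
      Function.update (Rf p) i ((1 - u) • Rf p i + u • (hg i).pgS (pc p.1) p.2) ∈ UK K := by
    intro p u hu0 hu1
    refine update_mem_UK (hRU p) _ fun hb h0 => ?_
    have h1 := (hpc p.1).2 p.2 hb
    have h2 : 0 < (Rf p i * star (Rf p i)).re :=
      re_mul_star_pos (by simpa using hb.ne_zero (hRU p))
    have h3 : (((1 - u) • Rf p i + u • (hg i).pgS (pc p.1) p.2) * star (Rf p i)).re = 0 := by
      rw [h0]; simp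
    rw [add_mul, Complex.add_re, smul_mul_assoc, smul_mul_assoc,
        Complex.smul_re, Complex.smul_re, smul_eq_mul, smul_eq_mul] at h3
    rcases hu0.eq_or_lt with rfl | hu
    · simp at h3; simp at h2; linarith
    · have := mul_pos hu h1
      have := mul_nonneg (sub_nonneg.2 hu1) h2.le
      linarith
  let P' : C(X × OnePoint ℝ, ↥(UK K)) := ⟨fun p => ⟨Function.update (Rf p) i ((hg i).pgS (pc p.1) p.2),
    by simpa using hposne p 1 zero_le_one le_rfl⟩, by
      apply Continuous.subtype_mk
      exact hRcont.update i hpgp⟩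
  let cc : ∀ k, C(X, Fin (D k) → ℂ) := fun k => ⟨fun x => (1 - χ x) • c k x + χ x • cq k x, by fun_prop⟩
  refine ⟨P', Function.update cc i pc, ?_, ?_, ?_⟩
  · intro k x hx
    by_cases hk : k = i
    · subst hk
      simpa using (hpc x).1 hx
    · simp [hk, cc, hχ0 hx]
  · intro k hk x s
    by_cases hki : k = i
    · subst hki; simp [P']
    · have hkD : k ∈ Dn := by simpa [hki] using hk
      simp only [P', ContinuousMap.coe_mk, ne_eq, hki, not_false_eq_true, Function.update_of_ne, cc]
      rw [(hg k).pgS_comb, ← hc k hkD, ← hQc k hkD]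
      rfl
  · refine ContinuousMap.HomotopicRel.trans (g := Rc) ?_ ?_
    · refine lin_htp _ _ _ (fun z u hu0 hu1 => hδU z _ fun k => ?_) ?_
      · have : ((1 - u) • (P z).1 + u • (Rc z).1) k - (P z).1 k = u • (Rf z k - (P z).1 k) := by
          simp only [Rc, Pi.add_apply, Pi.smul_apply, Complex.real_smul, ContinuousMap.coe_mk]
          push_cast; ring
        rw [this, norm_smul, Real.norm_of_nonneg hu0]
        have := hRP z k
        nlinarith [norm_nonneg (Rf z k - (P z).1 k)]
      · rintro ⟨x, s⟩ (h | h)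
        · ext1; exact (hRA x h s).symm
        · simp only at h; subst h
          ext k; simp only [Rc, ContinuousMap.coe_mk]; rw [hRinf, hPinf]
    · refine lin_htp _ _ _ (fun z u hu0 hu1 => ?_) ?_
      · convert hposne z u hu0 hu1 using 1
        ext k
        by_cases hk : k = i
        · subst hk; simp [P', Rc]
        · simp only [Rc, P', Pi.add_apply, Pi.smul_apply, ContinuousMap.coe_mk, ne_eq, hk,
            not_false_eq_true, Function.update_of_ne]
          rw [← add_smul]; simp
      · rintro ⟨x, s⟩ (h | h)
        · ext k
          by_cases hk : k = i
          · subst hk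
            simp only [P', Rc, ContinuousMap.coe_mk, Function.update_self]
            rw [hRA x h s, hcA x h s, (hpc x).1 h]
          · simp [P', Rc, hk]
        · simp only at h; subst h
          ext k
          by_cases hk : k = i
          · subst hk
            simp only [P', Rc, ContinuousMap.coe_mk, Function.update_self]
            rw [hRinf, GData.pgS_infty]
          · simp [P', Rc, hk]

/-- Main lemma: compressing families of loops into polynomial ones. -/
theorem ml_main {X E : Type*} [TopologicalSpace X] [CompactSpace X] [T2Space X]
    [NormedAddCommGroup E] [NormedSpace ℝ E] [FiniteDimensional ℝ E]
    (ι : X → E) (hι : Continuous ι) (hinj : Function.Injective ι)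
    (K : Set (Finset (Fin r))) (R : ℕ) (hR : 1 ≤ R) (hK : ∀ σ, σ ∉ K → R + 1 ≤ σ.card)
    (D : Fin r → ℕ) (g : Fin r → ℝ → ℂ) (hg : ∀ k, GData (D k) (g k))
    (hE : ∀ i, Module.finrank ℝ E + 1 ≤ 2 * R * D i)
    (P : C(X × OnePoint ℝ, ↥(UK K))) (hPinf : ∀ x k, (P (x, OnePoint.infty)).1 k = 1)
    (A : Set X) (hA : IsClosed A)
    (c : ∀ k, C(X, Fin (D k) → ℂ))
    (hcA : ∀ x ∈ A, ∀ s k, (P (x, s)).1 k = (hg k).pgS (c k x) s) :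
    ∃ (P' : C(X × OnePoint ℝ, ↥(UK K))) (c' : ∀ k, C(X, Fin (D k) → ℂ)),
      (∀ k, ∀ x ∈ A, c' k x = c k x) ∧
      (∀ k, ∀ x s, (P' (x, s)).1 k = (hg k).pgS (c' k x) s) ∧
      P.HomotopicRel P' {p | p.1 ∈ A ∨ p.2 = OnePoint.infty} := by
  have key : ∀ Dn : Finset (Fin r), ∃ (P' : C(X × OnePoint ℝ, ↥(UK K))) (c' : ∀ k, C(X, Fin (D k) → ℂ)),
      (∀ k, ∀ x ∈ A, c' k x = c k x) ∧
      (∀ k ∈ Dn, ∀ x s, (P' (x, s)).1 k = (hg k).pgS (c' k x) s) ∧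
      P.HomotopicRel P' {p | p.1 ∈ A ∨ p.2 = OnePoint.infty} := by
    intro Dn
    induction Dn using Finset.induction_on with
    | empty => exact ⟨P, c, fun _ _ _ => rfl, by simp, ContinuousMap.HomotopicRel.refl _⟩
    | insert i Dn hi ih =>
      obtain ⟨P1, c1, h1, h2, h3⟩ := ih
      have heq : ∀ p : X × OnePoint ℝ, (p.1 ∈ A ∨ p.2 = OnePoint.infty) → P1 p = P p := by
        intro p hp
        obtain ⟨H⟩ := h3
        exact (H.fst_eq_snd (x := p) hp).symm
      obtain ⟨P2, c2, h4, h5, h6⟩ := ml_step ι hι hinj K R hR hK D g hg i (hE i) Dn hi P1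
        (fun x k => by rw [heq _ (Or.inr rfl)]; exact hPinf x k) A hA c1
        (fun x hx s k => by rw [heq _ (Or.inl hx), h1 k x hx]; exact hcA x hx s k) h2
      exact ⟨P2, c2, fun k x hx => (h4 k x hx).trans (h1 k x hx), h5, h3.trans h6⟩
  obtain ⟨P', c', h1, h2, h3⟩ := key Finset.univ
  exact ⟨P', c', h1, fun k => h2 k (Finset.mem_univ k), h3⟩

end T2d
end ModT2d

section ModT3
open scoped Topology

section T3
variable {r : ℕ}

lemma hep {Z : Type} [TopologicalSpace Z] [CompactSpace Z] [T2Space Z] {B : Set Z} (hB : IsClosed B)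
    {U : Set (Fin r → ℂ)} (hU : IsOpen U) (F : C(Z, Fin r → ℂ)) (hF : ∀ z, F z ∈ U)
    (h : unitInterval × Z → (Fin r → ℂ)) (hc : ContinuousOn h (Set.univ ×ˢ B))
    (h0 : ∀ z ∈ B, h (0, z) = F z) (hhU : ∀ u, ∀ z ∈ B, h (u, z) ∈ U) :
    ∃ H : C(unitInterval × Z, Fin r → ℂ), (∀ p, H p ∈ U) ∧ (∀ z, H (0, z) = F z) ∧
      ∀ u, ∀ z ∈ B, H (u, z) = h (u, z) := by
  let g0 : unitInterval × Z → (Fin r → ℂ) := fun p => if p.1 = 0 then F p.2 else h p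
  have hcl1 : IsClosed {p : unitInterval × Z | p.1 = 0} := isClosed_eq continuous_fst continuous_const
  have hcl2 : IsClosed ((Set.univ : Set unitInterval) ×ˢ B) := isClosed_univ.prod hB
  have hg1 : ContinuousOn g0 {p : unitInterval × Z | p.1 = 0} := by
    refine ContinuousOn.congr (f := fun p => F p.2) (by fun_prop) ?_
    intro p hp
    exact if_pos hp
  have hg2 : ContinuousOn g0 ((Set.univ : Set unitInterval) ×ˢ B) := by
    refine hc.congr ?_
    rintro ⟨u, z⟩ ⟨-, hz⟩
    simp only [g0]
    split_ifs with hu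
    · rw [hu]; exact (h0 z hz).symm
    · rfl
  have hg : ContinuousOn g0 ({p : unitInterval × Z | p.1 = 0} ∪ Set.univ ×ˢ B) :=
    hg1.union_of_isClosed hg2 hcl1 hcl2
  obtain ⟨g, hgr⟩ := ContinuousMap.exists_restrict_eq (hcl1.union hcl2)
    (⟨_, hg.domRestrict⟩ : C(↥({p : unitInterval × Z | p.1 = 0} ∪ Set.univ ×ˢ B), Fin r → ℂ))
  have hge : ∀ p ∈ ({p : unitInterval × Z | p.1 = 0} ∪ Set.univ ×ˢ B), g p = g0 p := by
    intro p hp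
    exact DFunLike.congr_fun hgr ⟨p, hp⟩
  have hgF : ∀ z, g (0, z) = F z := by
    intro z; rw [hge _ (Or.inl rfl)]; simp [g0]
  have hgh : ∀ u, ∀ z ∈ B, g (u, z) = h (u, z) := by
    intro u z hz; rw [hge _ (Or.inr ⟨trivial, hz⟩)]
    simp only [g0]
    split_ifs with hu
    · rw [hu]; exact (h0 z hz).symm
    · rfl
  set O : Set Z := {z | ∀ u, g (u, z) ∈ U} with hO
  have hOo : IsOpen O := by
    have h2 := isClosedMap_snd_of_compactSpace (X := unitInterval) (Y := Z) _ (hU.isClosed_compl.preimage g.continuous)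
    rw [← isOpen_compl_iff] at h2
    convert h2 using 1
    ext z
    simp [hO]
  have hBO : B ⊆ O := by
    intro z hz u
    rw [hgh u z hz]; exact hhU u z hz
  obtain ⟨χ, hχ0, hχ1, hχ⟩ := exists_continuous_zero_one_of_isClosed hOo.isClosed_compl hB
    (by rw [Set.disjoint_compl_left_iff_subset]; exact hBO)
  let χ' : C(Z, unitInterval) := ⟨fun z => ⟨χ z, hχ z⟩, by fun_prop⟩
  refine ⟨⟨fun p => g (p.1 * χ' p.2, p.2), by fun_prop⟩, ?_, ?_, ?_⟩
  · rintro ⟨u, z⟩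
    simp only [ContinuousMap.coe_mk]
    by_cases hz : z ∈ O
    · exact hz _
    · have : χ' z = 0 := Subtype.ext (hχ0 hz)
      rw [this, mul_zero, hgF]; exact hF z
  · intro z; simp [hgF]
  · intro u z hz
    have : χ' z = 1 := Subtype.ext (hχ1 hz)
    simp only [ContinuousMap.coe_mk]
    rw [this, mul_one, hgh u z hz]

/-- The relative compression property up to dimension `m`. -/
def Comp {K : Set (Finset (Fin r))} {D : Fin r → ℕ} (m : ℕ)
    (G : C(↥(PolSp K D) × OnePoint ℝ, ↥(UK K))) : Prop :=
  ∀ (X E : Type) [TopologicalSpace X] [CompactSpace X] [T2Space X]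
    [NormedAddCommGroup E] [NormedSpace ℝ E] [FiniteDimensional ℝ E]
    (ι : X → E), Continuous ι → Function.Injective ι → Module.finrank ℝ E ≤ m →
    ∀ (A : Set X), IsClosed A → ∀ (P : C(X × OnePoint ℝ, ↥(UK K))),
    (∀ x k, (P (x, OnePoint.infty)).1 k = 1) →
    ∀ (fA : C(X, ∀ k, Fin (D k) → ℂ)) (hfA : ∀ x ∈ A, fA x ∈ PolSp K D),
    (∀ x (hx : x ∈ A) s, P (x, s) = G (⟨fA x, hfA x hx⟩, s)) →
    ∃ f : C(X, ↥(PolSp K D)), (∀ x ∈ A, (f x).1 = fA x) ∧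
      P.HomotopicRel (G.comp ⟨fun p : X × OnePoint ℝ => (f p.1, p.2), by fun_prop⟩)
        {p | p.1 ∈ A ∨ p.2 = OnePoint.infty}

/-- The weighted evaluation map. -/
lemma comp_of_gdata {K : Set (Finset (Fin r))} {D : Fin r → ℕ} (R : ℕ) (hR : 1 ≤ R)
    (hK : ∀ σ, σ ∉ K → R + 1 ≤ σ.card) (m : ℕ) (hm : ∀ i, m + 1 ≤ 2 * R * D i)
    (g : Fin r → ℝ → ℂ) (hg : ∀ k, GData (D k) (g k))
    (G : C(↥(PolSp K D) × OnePoint ℝ, ↥(UK K)))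
    (hG : ∀ f s k, (G (f, s)).1 k = (hg k).pgS (f.1 k) s) : Comp m G := by
  intro X E _ _ _ _ _ _ ι hι hinj hE A hA P hP fA hfA hPA
  obtain ⟨P', c', h1, h2, h3⟩ := ml_main ι hι hinj K R hR hK D g hg
    (fun i => (Nat.succ_le_succ hE).trans (hm i)) P hP A hA
    (fun k => ⟨fun x => fA x k, by fun_prop⟩) (by
      intro x hx s k
      rw [hPA x hx, hG]; rfl)
  have hmem : ∀ x, (fun k => c' k x) ∈ PolSp K D := by
    intro x σ hσ t
    obtain ⟨k, hk, hne⟩ := mem_UK.1 (P' (x, (t : OnePoint ℝ))).2 σ hσ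
    refine ⟨k, hk, fun h0 => hne ?_⟩
    rw [h2, GData.pgS_coe, h0, zero_mul]
  refine ⟨⟨fun x => ⟨fun k => c' k x, hmem x⟩, by fun_prop⟩, ?_, ?_⟩
  · intro x hx
    funext k
    exact h1 k x hx
  · convert h3 using 1
    ext p k
    obtain ⟨x, s⟩ := p
    rw [h2]
    simp [hG]

lemma comp_precomp {K : Set (Finset (Fin r))} {D : Fin r → ℕ} {m : ℕ}
    {G : C(↥(PolSp K D) × OnePoint ℝ, ↥(UK K))} (hG : Comp m G)
    (a : (∀ k, Fin (D k) → ℂ) → (∀ k, Fin (D k) → ℂ)) (ha : Continuous a)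
    (haa : ∀ f, a (a f) = f) (hP : ∀ f ∈ PolSp K D, a f ∈ PolSp K D) :
    Comp m (G.comp ⟨fun p : ↥(PolSp K D) × OnePoint ℝ => (⟨a p.1.1, hP _ p.1.2⟩, p.2), by fun_prop⟩) := by
  intro X E _ _ _ _ _ _ ι hι hinj hE A hA P hPi fA hfA hPA
  obtain ⟨f, hf, hh⟩ := hG X E ι hι hinj hE A hA P hPi ⟨fun x => a (fA x), by fun_prop⟩
    (fun x hx => hP _ (hfA x hx)) (fun x hx s => hPA x hx s)
  refine ⟨⟨fun x => ⟨a (f x).1, hP _ (f x).2⟩, by fun_prop⟩, ?_, ?_⟩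
  · intro x hx
    simp only [ContinuousMap.coe_mk]
    rw [hf x hx]
    exact haa _
  · convert hh using 1
    ext p k
    simp [haa]

lemma comp_homotopic {K : Set (Finset (Fin r))} {D : Fin r → ℕ} {m : ℕ}
    {G₀ G₁ : C(↥(PolSp K D) × OnePoint ℝ, ↥(UK K))}
    (hinf : ∀ f k, (G₀ (f, OnePoint.infty)).1 k = 1)
    (hh : G₀.HomotopicRel G₁ {p | p.2 = OnePoint.infty}) (hG : Comp m G₁) : Comp m G₀ := by
  obtain ⟨Θ⟩ := hh
  have hΘ0 : ∀ p, Θ (0, p) = G₀ p := fun p => Θ.apply_zero p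
  have hΘ1 : ∀ p, Θ (1, p) = G₁ p := fun p => Θ.apply_one p
  have hΘi : ∀ u f k, (Θ (u, (f, OnePoint.infty))).1 k = 1 := by
    intro u f k
    rw [Θ.eq_fst u (x := (f, OnePoint.infty)) rfl, hinf]
  intro X E _ _ _ _ _ _ ι hι hinj hE A hA P hPi fA hfA hPA
  let B : Set (X × OnePoint ℝ) := {p | p.1 ∈ A ∨ p.2 = OnePoint.infty}
  have hB1 : IsClosed {p : X × OnePoint ℝ | p.1 ∈ A} := hA.preimage continuous_fst
  have hB2 : IsClosed {p : X × OnePoint ℝ | p.2 = OnePoint.infty} :=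
    isClosed_eq continuous_snd continuous_const
  have hB : IsClosed B := hB1.union hB2
  let h : unitInterval × (X × OnePoint ℝ) → (Fin r → ℂ) := fun q =>
    if hx : q.2.1 ∈ A then (Θ (q.1, (⟨fA q.2.1, hfA _ hx⟩, q.2.2))).1 else fun _ => 1
  have hhA : ∀ u x s (hx : x ∈ A), h (u, (x, s)) = (Θ (u, (⟨fA x, hfA _ hx⟩, s))).1 := by
    intro u x s hx; simp only [h]; rw [dif_pos hx]
  have hhi : ∀ u x k, h (u, (x, OnePoint.infty)) k = 1 := by
    intro u x k
    simp only [h]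
    split_ifs with hx
    · exact hΘi _ _ _
    · rfl
  have hcont : ContinuousOn h (Set.univ ×ˢ B) := by
    have hu : (Set.univ : Set unitInterval) ×ˢ B = ({q : unitInterval × (X × OnePoint ℝ) | q.2.1 ∈ A} ∪
        {q | q.2.2 = OnePoint.infty}) := by
      ext q; simp [B]
    rw [hu]
    refine ContinuousOn.union_of_isClosed ?_ ?_ (hB1.preimage continuous_snd)
      (hB2.preimage continuous_snd)
    · rw [continuousOn_iff_continuous_domRestrict]
      have : Set.domRestrict {q : unitInterval × (X × OnePoint ℝ) | q.2.1 ∈ A} h =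
          fun q => (Θ (q.1.1, (⟨fA q.1.2.1, hfA _ q.2⟩, q.1.2.2))).1 := by
        funext q
        exact hhA q.1.1 q.1.2.1 q.1.2.2 q.2
      rw [this]
      fun_prop
    · refine ContinuousOn.congr (f := fun _ _ => 1) continuousOn_const ?_
      rintro ⟨u, x, s⟩ hs
      simp only [Set.mem_ofPred_eq] at hs
      subst hs
      funext k
      exact hhi u x k
  obtain ⟨H, hHU, hH0, hHB⟩ := hep hB (isOpen_UK K) ⟨fun p => (P p).1, by fun_prop⟩ (fun p => (P p).2)
    h hcont (by
      rintro ⟨x, s⟩ (hx | hs)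
      · simp only at hx
        rw [hhA _ _ _ hx, hΘ0]; simp [hPA x hx]
      · simp only at hs; subst hs
        funext k; rw [hhi]; exact (hPi x k).symm) (by
      rintro u ⟨x, s⟩ (hx | hs)
      · simp only at hx
        rw [hhA _ _ _ hx]; exact Subtype.property _
      · simp only at hs; subst hs
        have : h (u, (x, OnePoint.infty)) = (P (x, OnePoint.infty)).1 := by
          funext k; rw [hhi, hPi]
        rw [this]; exact Subtype.property _)
  let P' : C(X × OnePoint ℝ, ↥(UK K)) := ⟨fun p => ⟨H (1, p), hHU _⟩, by fun_prop⟩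
  obtain ⟨f, hf, ⟨Nn⟩⟩ := hG X E ι hι hinj hE A hA P' (by
    intro x k
    simp only [P', ContinuousMap.coe_mk]
    rw [hHB _ _ (Or.inr rfl), hhi]) fA hfA (by
    intro x hx s
    ext1
    simp only [P', ContinuousMap.coe_mk]
    rw [hHB _ _ (Or.inl hx), hhA _ _ _ hx, hΘ1])
  refine ⟨f, hf, ?_⟩
  let M : C(unitInterval × (X × OnePoint ℝ), Fin r → ℂ) := ⟨fun q => (Θ (q.1, (f q.2.1, q.2.2))).1, by fun_prop⟩
  have hMB : ∀ u, ∀ z ∈ B, M (u, z) = H (u, z) := by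
    rintro u ⟨x, s⟩ hz
    rw [hHB u _ hz]
    rcases hz with hx | hs
    · simp only at hx
      rw [hhA _ _ _ hx]
      simp only [M, ContinuousMap.coe_mk]
      congr 3
      exact Prod.ext (Subtype.ext (hf x hx)) rfl
    · simp only at hs; subst hs
      funext k
      rw [hhi]
      exact hΘi _ _ _
  let B2 : Set (unitInterval × (X × OnePoint ℝ)) := {q | q.1 = 0 ∨ q.1 = 1 ∨ q.2 ∈ B}
  have hB2' : IsClosed B2 := (isClosed_eq continuous_fst continuous_const).union
    ((isClosed_eq continuous_fst continuous_const).union (hB.preimage continuous_snd))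
  let h2 : unitInterval × (unitInterval × (X × OnePoint ℝ)) → (Fin r → ℂ) := fun q =>
    (1 - (q.2.1 : ℝ)) • H (unitInterval.symm q.1, q.2.2) + (q.2.1 : ℝ) • M (unitInterval.symm q.1, q.2.2)
  have hh2c : Continuous h2 := by fun_prop
  have hh2a : ∀ u z, h2 (u, (0, z)) = H (unitInterval.symm u, z) := by intro u z; simp [h2]
  have hh2b : ∀ u z, h2 (u, (1, z)) = M (unitInterval.symm u, z) := by intro u z; simp [h2]
  have hh2B : ∀ u v, ∀ z ∈ B, h2 (u, (v, z)) = H (unitInterval.symm u, z) := by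
    intro u v z hz
    simp only [h2]
    rw [hMB _ _ hz, ← add_smul]; simp
  obtain ⟨L, hLU, hL0, hLB⟩ := hep hB2' (isOpen_UK K) ⟨fun q => (Nn q).1, by fun_prop⟩
    (fun q => (Nn q).2) h2 hh2c.continuousOn (by
      rintro ⟨v, z⟩ (hv | hv | hz)
      · simp only at hv; subst hv
        rw [hh2a]; simp [P']
      · simp only at hv; subst hv
        rw [hh2b]; simp [M, hΘ1]
      · simp only at hz
        rw [hh2B _ _ _ hz]
        simp only [ContinuousMap.coe_mk]
        rw [Nn.eq_fst v hz]; simp [P']) (by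
      rintro u ⟨v, z⟩ (hv | hv | hz)
      · simp only at hv; subst hv
        rw [hh2a]; exact hHU _
      · simp only at hv; subst hv
        rw [hh2b]; exact Subtype.property _
      · simp only at hz
        rw [hh2B _ _ _ hz]; exact hHU _)
  refine ⟨⟨⟨⟨fun q => ⟨L (1, q), hLU _⟩, by fun_prop⟩, ?_, ?_⟩, ?_⟩⟩
  · intro z
    ext1
    show L (1, (0, z)) = _
    rw [hLB _ _ (Or.inl rfl), hh2a]; simp [hH0]
  · intro z
    ext1
    show L (1, (1, z)) = _
    rw [hLB _ _ (Or.inr (Or.inl rfl)), hh2b]; simp [M, hΘ0]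
  · intro v z hz
    show (_ : ↥(UK K)) = _
    ext1
    show L (1, (v, z)) = _
    rw [hLB _ _ (Or.inr (Or.inr hz)), hh2B _ _ _ hz]; simp [hH0]

end T3
end ModT3

section ModT4
open scoped Topology

section T4
variable {r : ℕ}

/-- Adjoint of a map to the loop space. -/
def adj {Y V : Type*} [TopologicalSpace Y] [TopologicalSpace V] {v : V} (J : C(Y, Loop V v)) :
    C(Y × OnePoint ℝ, V) where
  toFun p := (J p.1).1 p.2
  continuous_toFun := by
    have h : Continuous fun y => (J y).1 := continuous_subtype_val.comp J.continuous
    exact (ContinuousMap.uncurry ⟨_, h⟩).continuous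

@[simp] lemma adj_apply {Y V : Type*} [TopologicalSpace Y] [TopologicalSpace V] {v : V}
    (J : C(Y, Loop V v)) (y : Y) (s : OnePoint ℝ) : adj J (y, s) = (J y).1 s := rfl

/-- Coadjoint. -/
def coadj {Y V : Type*} [TopologicalSpace Y] [TopologicalSpace V] {v : V} (G : C(Y × OnePoint ℝ, V))
    (h : ∀ y, G (y, OnePoint.infty) = v) : C(Y, Loop V v) where
  toFun y := ⟨G.curry y, h y⟩
  continuous_toFun := by
    apply Continuous.subtype_mk
    exact G.curry.continuous

lemma coadj_htp {Y V : Type*} [TopologicalSpace Y] [TopologicalSpace V] {v : V}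
    (J₀ J₁ : C(Y, Loop V v)) (A : Set Y)
    (h : (adj J₀).HomotopicRel (adj J₁) {p | p.1 ∈ A ∨ p.2 = OnePoint.infty}) :
    J₀.HomotopicRel J₁ A := by
  obtain ⟨H⟩ := h
  let G : C((unitInterval × Y) × OnePoint ℝ, V) := ⟨fun p => H (p.1.1, (p.1.2, p.2)), by fun_prop⟩
  have hG : ∀ y, G (y, OnePoint.infty) = v := by
    rintro ⟨u, y⟩
    show H (u, (y, OnePoint.infty)) = v
    rw [H.eq_fst u (x := (y, OnePoint.infty)) (Or.inr rfl)]
    exact (J₀ y).2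
  refine ⟨⟨⟨⟨fun p => coadj G hG p, (coadj G hG).continuous⟩, ?_, ?_⟩, ?_⟩⟩
  · intro y
    apply Subtype.ext; ext s
    show H (0, (y, s)) = _
    rw [H.apply_zero]; rfl
  · intro y
    apply Subtype.ext; ext s
    show H (1, (y, s)) = _
    rw [H.apply_one]; rfl
  · intro u y hy
    show (_ : Loop V v) = _
    apply Subtype.ext; ext s
    show H (u, (y, s)) = _
    rw [H.eq_fst u (x := (y, s)) (Or.inl hy)]; rfl

lemma isClosed_cube_boundary (k : ℕ) : IsClosed (Cube.boundary (Fin k)) := by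
  have : Cube.boundary (Fin k) = ⋃ i : Fin k, {y | y i = 0 ∨ y i = 1} := by
    ext y; simp [Cube.boundary]
  rw [this]
  refine isClosed_iUnion_of_finite fun i => ?_
  exact (isClosed_eq (continuous_apply i) continuous_const).union
    (isClosed_eq (continuous_apply i) continuous_const)

theorem bij_of_comp {K : Set (Finset (Fin r))} {D : Fin r → ℕ} (hE : (∅ : Finset (Fin r)) ∈ K)
    (J : C(↥(PolSp K D), Loop ↥(UK K) (onesUK hE))) (m k : ℕ) (hk : k + 1 ≤ m)
    (hJ : Comp m (adj J)) (x : ↥(PolSp K D)) : Function.Bijective (piMap k J x) := by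
  have hones : ∀ (γ : Loop ↥(UK K) (onesUK hE)) l, (γ.1 OnePoint.infty).1 l = 1 := by
    intro γ l; rw [γ.2]; rfl
  constructor
  · intro a b
    refine Quotient.inductionOn₂ a b fun p q hpq => ?_
    have hpq' := Quotient.exact hpq
    obtain ⟨H⟩ : ContinuousMap.HomotopicRel (J.comp p.1) (J.comp q.1) (Cube.boundary (Fin k)) := hpq'
    apply Quotient.sound
    show ContinuousMap.HomotopicRel p.1 q.1 (Cube.boundary (Fin k))
    let A : Set (unitInterval × (Fin k → unitInterval)) :=
      {y | y.1 = 0 ∨ y.1 = 1 ∨ y.2 ∈ Cube.boundary (Fin k)}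
    have hA : IsClosed A := (isClosed_eq continuous_fst continuous_const).union
      ((isClosed_eq continuous_fst continuous_const).union
        ((isClosed_cube_boundary k).preimage continuous_snd))
    let fA : C(unitInterval × (Fin k → unitInterval), ∀ k, Fin (D k) → ℂ) :=
      ⟨fun y => (1 - (y.1 : ℝ)) • (p.1 y.2).1 + (y.1 : ℝ) • (q.1 y.2).1, by fun_prop⟩
    have hf0 : ∀ y, fA (0, y) = (p.1 y).1 := by intro y; simp [fA]
    have hf1 : ∀ y, fA (1, y) = (q.1 y).1 := by intro y; simp [fA]
    have hfB : ∀ u, ∀ y ∈ Cube.boundary (Fin k), fA (u, y) = x.1 := by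
      intro u y hy
      simp only [fA, ContinuousMap.coe_mk]
      rw [p.2 y hy, q.2 y hy, ← add_smul]; simp
    have hfA : ∀ y ∈ A, fA y ∈ PolSp K D := by
      rintro ⟨u, y⟩ (hu | hu | hy)
      · simp only at hu; subst hu; rw [hf0]; exact Subtype.property _
      · simp only at hu; subst hu; rw [hf1]; exact Subtype.property _
      · simp only at hy; rw [hfB u y hy]; exact x.2
    obtain ⟨f, hf, -⟩ := hJ (unitInterval × (Fin k → unitInterval)) (ℝ × (Fin k → ℝ))
      (fun y => ((y.1 : ℝ), fun i => (y.2 i : ℝ))) (by fun_prop) (by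
        rintro ⟨u, y⟩ ⟨u', y'⟩ h
        simp only [Prod.mk.injEq] at h
        refine Prod.ext (Subtype.ext h.1) ?_
        funext i
        exact Subtype.ext (congrFun h.2 i)) (by simp; omega) A hA
      ⟨fun p => (H p.1).1 p.2, (adj (⟨fun p => H p, by fun_prop⟩ :
        C(unitInterval × (Fin k → unitInterval), Loop ↥(UK K) (onesUK hE)))).continuous⟩
      (fun y l => hones _ l) fA hfA (by
        rintro ⟨u, y⟩ hy s
        have key : H (u, y) = J ⟨fA (u, y), hfA _ hy⟩ := by
          rcases hy with hu | hu | hy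
          · simp only at hu; subst hu
            rw [H.apply_zero]
            show J (p.1 y) = _
            congr 1; ext1; exact (hf0 y).symm
          · simp only at hu; subst hu
            rw [H.apply_one]
            show J (q.1 y) = _
            congr 1; ext1; exact (hf1 y).symm
          · simp only at hy
            rw [H.eq_fst u hy]
            show J (p.1 y) = _
            congr 1; ext1; rw [p.2 y hy]; exact (hfB u y hy).symm
        exact congrArg (fun γ : Loop ↥(UK K) (onesUK hE) => γ.1 s) key)
    refine ⟨⟨⟨⟨fun y => f y, by fun_prop⟩, ?_, ?_⟩, ?_⟩⟩
    · intro y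
      ext1
      exact (hf _ (Or.inl rfl)).trans (hf0 y)
    · intro y
      ext1
      exact (hf _ (Or.inr (Or.inl rfl))).trans (hf1 y)
    · intro u y hy
      show (_ : ↥(PolSp K D)) = _
      apply Subtype.ext
      refine (hf _ (Or.inr (Or.inr hy))).trans ?_
      rw [hfB u y hy]
      exact (congrArg Subtype.val (p.2 y hy)).symm
  · intro b
    refine Quotient.inductionOn b fun p => ?_
    obtain ⟨f, hf, hh⟩ := hJ (Fin k → unitInterval) (Fin k → ℝ) (fun y i => (y i : ℝ)) (by fun_prop)
      (by
        intro y y' h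
        funext i
        exact Subtype.ext (congrFun h i)) (by simp; omega) (Cube.boundary (Fin k))
      (isClosed_cube_boundary k) (adj p.1) (fun y l => hones _ l) (ContinuousMap.const _ x.1)
      (fun _ _ => x.2) (by
        intro y hy s
        simp only [adj_apply]
        rw [p.2 y hy]; rfl)
    refine ⟨Quotient.mk _ ⟨f, fun y hy => Subtype.ext (hf y hy)⟩, ?_⟩
    apply Quotient.sound
    show ContinuousMap.HomotopicRel (J.comp f) p.1 (Cube.boundary (Fin k))
    refine (coadj_htp _ _ _ ?_).symm
    convert hh using 1
    rfl

end T4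
end ModT4

section ModT5a
open scoped Topology

section T5a
open Polynomial

/-- Coefficient vector of a polynomial. -/
def ofPoly (d : ℕ) (p : ℂ[X]) : Fin d → ℂ := fun i => p.coeff i

lemma toPoly_ofPoly {d : ℕ} {p : ℂ[X]} (hm : p.Monic) (hd : p.natDegree = d) :
    toPoly (ofPoly d p) = p := by
  conv_rhs => rw [hm.as_sum, hd]
  simp only [toPoly, ofPoly]
  rw [Fin.sum_univ_eq_sum_range (fun i => C (p.coeff i) * X ^ i)]

lemma toPoly_injective {d : ℕ} : Function.Injective (toPoly (d := d)) := by
  intro a b h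
  funext i
  have h1 : ∀ a : Fin d → ℂ, (toPoly a).coeff i = a i := by
    intro a
    simp only [toPoly, coeff_add, coeff_X_pow, finsetSum_coeff, coeff_C_mul, coeff_X_pow]
    rw [if_neg (by have := i.2; omega), zero_add, Finset.sum_eq_single i]
    · simp
    · intro j _ hj
      rw [if_neg (fun h => hj (Fin.ext h.symm)), mul_zero]
    · simp
  rw [← h1 a, ← h1 b, h]

lemma ofPoly_toPoly {d : ℕ} (a : Fin d → ℂ) : ofPoly d (toPoly a) = a :=
  toPoly_injective (toPoly_ofPoly (toPoly_monic a).1 (toPoly_monic a).2)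

/-- All coefficients vary continuously. -/
def CoefCont {Y : Type*} [TopologicalSpace Y] (p : Y → ℂ[X]) : Prop :=
  ∀ n, Continuous fun y => (p y).coeff n

lemma CoefCont.mul {Y : Type*} [TopologicalSpace Y] {p q : Y → ℂ[X]} (hp : CoefCont p)
    (hq : CoefCont q) : CoefCont fun y => p y * q y := by
  intro n
  simp only [coeff_mul]
  exact continuous_finsetSum _ fun i _ => (hp i.1).mul (hq i.2)

lemma CoefCont.one {Y : Type*} [TopologicalSpace Y] : CoefCont fun _ : Y => (1 : ℂ[X]) :=
  fun _ => continuous_const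

lemma CoefCont.prod {Y ι : Type*} [TopologicalSpace Y] (s : Finset ι) {p : ι → Y → ℂ[X]}
    (hp : ∀ i, CoefCont (p i)) : CoefCont fun y => ∏ i ∈ s, p i y := by
  induction s using Finset.induction_on with
  | empty => simpa using CoefCont.one
  | insert a s ha ih =>
    simp only [Finset.prod_insert ha]
    exact (hp a).mul ih

lemma CoefCont.pow {Y : Type*} [TopologicalSpace Y] {p : Y → ℂ[X]} (hp : CoefCont p) (n : ℕ) :
    CoefCont fun y => p y ^ n := by
  induction n with
  | zero => simpa using CoefCont.one
  | succ n ih => simp only [pow_succ]; exact ih.mul hp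

lemma CoefCont.X_sub_C {Y : Type*} [TopologicalSpace Y] {x : Y → ℂ} (hx : Continuous x) :
    CoefCont fun y => X - C (x y) := by
  intro n
  simp only [coeff_sub, coeff_C]
  by_cases h : n = 0
  · simp only [h, if_true]; fun_prop
  · simp only [h, if_false]; fun_prop

/-- Vieta map. -/
def vieta (d : ℕ) (α : Fin d → ℂ) : Fin d → ℂ := ofPoly d (∏ i, (X - C (α i)))

lemma toPoly_vieta {d : ℕ} (α : Fin d → ℂ) : toPoly (vieta d α) = ∏ i, (X - C (α i)) :=
  toPoly_ofPoly (monic_prod_of_monic _ _ fun i _ => monic_X_sub_C _) (by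
    rw [natDegree_prod_of_monic _ _ fun i _ => monic_X_sub_C _]; simp)

lemma roots_vieta {d : ℕ} (α : Fin d → ℂ) :
    (toPoly (vieta d α)).roots = Finset.univ.val.map α := by
  rw [toPoly_vieta]
  have : ∏ i, (X - C (α i)) = ((Finset.univ.val.map α).map fun a => X - C a).prod := by
    rw [Multiset.map_map]; rfl
  rw [this, roots_multiset_prod_X_sub_C]

lemma continuous_vieta (d : ℕ) : Continuous (vieta d) := by
  refine continuous_pi fun i => ?_
  exact CoefCont.prod Finset.univ (p := fun i (α : Fin d → ℂ) => X - C (α i))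
    (fun i => CoefCont.X_sub_C (continuous_apply i)) i

lemma vieta_surjective (d : ℕ) : Function.Surjective (vieta d) := by
  intro a
  have hsp : (toPoly a).Splits := IsAlgClosed.splits _
  have hcard : Multiset.card (toPoly a).roots = d := by
    rw [← hsp.natDegree_eq_card_roots, (toPoly_monic a).2]
  obtain ⟨l, hl⟩ := Quot.exists_rep (toPoly a).roots
  have hl' : (toPoly a).roots = (l : Multiset ℂ) := hl.symm
  have hlen : l.length = d := by rw [← hcard, hl']; rfl
  subst hlen
  refine ⟨fun i => l.get i, toPoly_injective ?_⟩
  have h2 := hsp.eq_prod_roots_of_monic (toPoly_monic a).1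
  rw [toPoly_vieta, h2, hl', Multiset.map_coe, Multiset.prod_coe]
  exact (List.prod_ofFn (f := fun i : Fin l.length => X - C (l.get i))).symm.trans (by
    congr 1
    conv_rhs => rw [← List.ofFn_get l]
    rw [List.map_ofFn]
    rfl)

lemma isProperMap_vieta (d : ℕ) : IsProperMap (vieta d) := by
  rw [isProperMap_iff_isCompact_preimage]
  refine ⟨continuous_vieta d, fun S hS => ?_⟩
  obtain ⟨M, hM⟩ := hS.isBounded.exists_norm_le
  refine Metric.isCompact_of_isClosed_isBounded (hS.isClosed.preimage (continuous_vieta d)) ?_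
  rw [isBounded_iff_forall_norm_le]
  refine ⟨max M 0 + 1, fun α hα => ?_⟩
  rw [pi_norm_le_iff_of_nonneg (by positivity)]
  intro i
  have hroot : (toPoly (vieta d α)).IsRoot (α i) := by
    rw [toPoly_vieta, IsRoot, eval_prod]
    exact Finset.prod_eq_zero (Finset.mem_univ i) (by simp)
  have hm := toPoly_monic (vieta d α)
  have h1 := hroot.norm_lt_cauchyBound hm.1.ne_zero
  have h1' : ‖α i‖ ≤ ((toPoly (vieta d α)).cauchyBound : ℝ) := by exact_mod_cast h1.le
  refine h1'.trans ?_
  rw [cauchyBound, hm.1.leadingCoeff, hm.2]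
  simp only [nnnorm_one, div_one, NNReal.coe_add, NNReal.coe_one, add_le_add_iff_right]
  have : (Finset.range d).sup (fun x => ‖(toPoly (vieta d α)).coeff x‖₊) ≤ Real.toNNReal (max M 0) := by
    refine Finset.sup_le fun j hj => ?_
    refine NNReal.coe_le_coe.1 ?_
    rw [coe_nnnorm, Real.coe_toNNReal _ (le_max_right _ _)]
    have hj' := Finset.mem_range.1 hj
    have : (toPoly (vieta d α)).coeff j = vieta d α ⟨j, hj'⟩ := by
      conv_rhs => rw [← ofPoly_toPoly (vieta d α)]
      rfl
    rw [this]
    exact ((norm_le_pi_norm _ _).trans (hM _ hα)).trans (le_max_left _ _)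
  have h3 := NNReal.coe_le_coe.2 this
  rwa [Real.coe_toNNReal _ (le_max_right _ _)] at h3

/-- The roots operator. -/
def rtOp {d : ℕ} (ψ : ℂ → ℂ) (e : ℕ) (x : ℂ) (f : Fin d → ℂ) : ℂ[X] :=
  (((toPoly f).roots.map ψ).map fun α => X - C α).prod * (X - C x) ^ e

lemma rtOp_monic {d : ℕ} (ψ : ℂ → ℂ) (e : ℕ) (x : ℂ) (f : Fin d → ℂ) :
    (rtOp ψ e x f).Monic ∧ (rtOp ψ e x f).natDegree = d + e := by
  have hsp : (toPoly f).Splits := IsAlgClosed.splits _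
  have hcard : Multiset.card (toPoly f).roots = d := by
    rw [← hsp.natDegree_eq_card_roots, (toPoly_monic f).2]
  have h1 : (((toPoly f).roots.map ψ).map fun α => X - C α).prod.Monic :=
    monic_multiset_prod_of_monic _ _ fun a _ => monic_X_sub_C a
  have h2 : ((X - C x) ^ e).Monic := (monic_X_sub_C x).pow e
  refine ⟨h1.mul h2, ?_⟩
  rw [rtOp, h1.natDegree_mul h2, natDegree_multiset_prod_X_sub_C_eq_card, Multiset.card_map, hcard,
    (monic_X_sub_C x).natDegree_pow, natDegree_X_sub_C, mul_one]

lemma coefCont_rtOp {T : Type*} [TopologicalSpace T] {d : ℕ} (ψ : T → ℂ → ℂ)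
    (hψ : Continuous fun p : T × ℂ => ψ p.1 p.2) (e : ℕ) (x : T → ℂ) (hx : Continuous x) :
    CoefCont fun q : T × (Fin d → ℂ) => rtOp (ψ q.1) e (x q.1) q.2 := by
  intro n
  have hq : Topology.IsQuotientMap (Prod.map (id : T → T) (vieta d)) := by
    refine ((Homeomorph.refl T).isProperMap.prodMap (isProperMap_vieta d)).isClosedMap.isQuotientMap ?_ ?_
    · exact continuous_id.prodMap (continuous_vieta d)
    · exact Function.surjective_id.prodMap (vieta_surjective d)
  rw [hq.continuous_iff]
  have : CoefCont fun q : T × (Fin d → ℂ) =>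
      (∏ i, (X - C (ψ q.1 (q.2 i)))) * (X - C (x q.1)) ^ e := by
    refine CoefCont.mul (CoefCont.prod _ fun i => CoefCont.X_sub_C ?_) ((CoefCont.X_sub_C ?_).pow e)
    · exact hψ.comp (by fun_prop : Continuous fun q : T × (Fin d → ℂ) => (q.1, q.2 i))
    · fun_prop
  convert this n using 2 with q
  simp only [Function.comp, Prod.map, id, rtOp, roots_vieta, Multiset.map_map]
  rfl

lemma rtOp_isRoot {d : ℕ} {ψ : ℂ → ℂ} {e : ℕ} {x : ℂ} {f : Fin d → ℂ} {t : ℂ}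
    (h : (rtOp ψ e x f).eval t = 0) : (∃ α, (toPoly f).eval α = 0 ∧ ψ α = t) ∨ (t = x ∧ e ≠ 0) := by
  rw [rtOp, eval_mul, mul_eq_zero] at h
  rcases h with h | h
  · left
    rw [eval_multiset_prod, Multiset.prod_eq_zero_iff] at h
    simp only [Multiset.map_map, Multiset.mem_map, Function.comp, eval_sub, eval_X, eval_C] at h
    obtain ⟨α, hα, h0⟩ := h
    exact ⟨α, (mem_roots'.1 hα).2, (sub_eq_zero.1 h0).symm⟩
  · right
    rw [eval_pow] at h
    refine ⟨?_, fun he => by simp [he] at h⟩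
    have := eq_zero_of_pow_eq_zero h
    simpa [sub_eq_zero] using this

lemma rtOp_id {d : ℕ} (f : Fin d → ℂ) (x : ℂ) : rtOp id 0 x f = toPoly f := by
  have hsp : (toPoly f).Splits := IsAlgClosed.splits _
  simp only [rtOp, Multiset.map_id, pow_zero, mul_one]
  exact (hsp.eq_prod_roots_of_monic (toPoly_monic f).1).symm

lemma rtOp_roots {d : ℕ} (ψ : ℂ → ℂ) (x : ℂ) (f : Fin d → ℂ) :
    (rtOp ψ 0 x f).roots = (toPoly f).roots.map ψ := by
  simp only [rtOp, pow_zero, mul_one, roots_multiset_prod_X_sub_C]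

end T5a
end ModT5a

section ModT5b
open scoped Topology

section T5b
variable {r : ℕ}

lemma sign_const {S : Set ℂ} (hS : IsPreconnected S) (f : ℂ → ℝ) (hf : Continuous f)
    (h0 : ∀ z ∈ S, f z ≠ 0) : (∀ z ∈ S, 0 < f z) ∨ (∀ z ∈ S, f z < 0) := by
  by_contra h
  push Not at h
  obtain ⟨⟨a, ha, hfa⟩, ⟨b, hb, hfb⟩⟩ := h
  obtain ⟨z, hz, hz0⟩ := hS.intermediate_value ha hb hf.continuousOn ⟨hfa, hfb⟩
  exact h0 z hz hz0

lemma phi_facts {b : ℝ} {φ : ℂ → ℂ} (h : AdmissiblePhi b φ) :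
    ∃ ε₁ ε₂ : ℝ, ε₁ ^ 2 = 1 ∧ ε₂ ^ 2 = 1 ∧ (∀ x : ℝ, (φ x).im = 0) ∧
      (∀ x y : ℝ, x < y → 0 < ε₁ * ((φ y).re - (φ x).re)) ∧
      (∀ z : ℂ, z.im ≠ 0 → 0 < ε₂ * z.im * (φ z).im) ∧ ∀ z, (φ z).re < b := by
  obtain ⟨hc, hinj, -, hran, hreal⟩ := h
  have hb : ∀ z, (φ z).re < b := by
    intro z
    have : φ z ∈ Set.range φ := ⟨z, rfl⟩
    rw [hran] at this; exact this
  have hre : ∀ x : ℝ, (φ x).im = 0 := by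
    intro x
    have : φ x ∈ φ '' {z : ℂ | z.im = 0} := ⟨x, by simp, rfl⟩
    rw [hreal] at this; exact this.1
  have hnr : ∀ z : ℂ, z.im ≠ 0 → (φ z).im ≠ 0 := by
    intro z hz h0
    have : φ z ∈ φ '' {z : ℂ | z.im = 0} := by rw [hreal]; exact ⟨h0, hb z⟩
    obtain ⟨w, hw, hwz⟩ := this
    rw [← hinj hwz] at hz
    exact hz hw
  have hreinj : Function.Injective fun x : ℝ => (φ x).re := by
    intro x y hxy
    have : φ x = φ y := Complex.ext hxy (by rw [hre, hre])
    exact_mod_cast hinj this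
  have hmono : ∃ ε₁ : ℝ, ε₁ ^ 2 = 1 ∧ ∀ x y : ℝ, x < y → 0 < ε₁ * ((φ y).re - (φ x).re) := by
    have hcc : Continuous fun x : ℝ => (φ x).re := by fun_prop
    rcases hcc.strictMono_of_inj hreinj with hm | hm
    · exact ⟨1, by norm_num, fun x y hxy => by have := hm hxy; simp only at this; linarith⟩
    · exact ⟨-1, by norm_num, fun x y hxy => by have := hm hxy; simp only at this; linarith⟩
  obtain ⟨ε₁, h11, h12⟩ := hmono
  have hup : IsPreconnected {z : ℂ | 0 < z.im} := (convex_halfSpace_im_gt 0).isPreconnected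
  have hdn : IsPreconnected {z : ℂ | z.im < 0} := (convex_halfSpace_im_lt 0).isPreconnected
  have hcc : Continuous fun z : ℂ => (φ z).im := by fun_prop
  have hU := sign_const hup _ hcc fun z hz => hnr z (ne_of_gt hz)
  have hL := sign_const hdn _ hcc fun z hz => hnr z (ne_of_lt hz)
  have hsurj : ∀ y : ℝ, ∃ z, (φ z).im = y := by
    intro y
    have : (⟨b - 1, y⟩ : ℂ) ∈ Set.range φ := by rw [hran]; simp
    obtain ⟨z, hz⟩ := this
    exact ⟨z, by rw [hz]⟩
  have hs : ∃ ε₂ : ℝ, ε₂ ^ 2 = 1 ∧ ∀ z : ℂ, z.im ≠ 0 → 0 < ε₂ * z.im * (φ z).im := by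
    rcases hU with hU | hU <;> rcases hL with hL | hL
    · exfalso
      obtain ⟨z, hz⟩ := hsurj (-1)
      rcases lt_trichotomy z.im 0 with h | h | h
      · have := hL z h; linarith
      · have : z = (z.re : ℂ) := Complex.ext (by simp) (by simpa using h)
        rw [this, hre] at hz; linarith
      · have := hU z h; linarith
    · refine ⟨1, by norm_num, fun z hz => ?_⟩
      rcases lt_or_gt_of_ne hz with h | h
      · have := hL z h; nlinarith
      · have := hU z h; nlinarith
    · refine ⟨-1, by norm_num, fun z hz => ?_⟩
      rcases lt_or_gt_of_ne hz with h | h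
      · have := hL z h; nlinarith
      · have := hU z h; nlinarith
    · exfalso
      obtain ⟨z, hz⟩ := hsurj 1
      rcases lt_trichotomy z.im 0 with h | h | h
      · have := hL z h; linarith
      · have : z = (z.re : ℂ) := Complex.ext (by simp) (by simpa using h)
        rw [this, hre] at hz; linarith
      · have := hU z h; linarith
  obtain ⟨ε₂, h21, h22⟩ := hs
  exact ⟨ε₁, ε₂, h11, h21, hre, h12, h22, hb⟩

/-- The linear model. -/
def amap (ε₁ ε₂ : ℝ) (z : ℂ) : ℂ := ⟨ε₁ * z.re, ε₂ * z.im⟩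

lemma continuous_amap (ε₁ ε₂ : ℝ) : Continuous (amap ε₁ ε₂) := by
  have : amap ε₁ ε₂ = fun z => ((ε₁ * z.re : ℝ) : ℂ) + ((ε₂ * z.im : ℝ) : ℂ) * Complex.I := by
    funext z; apply Complex.ext <;> simp [amap]
  rw [this]; fun_prop

lemma amap_amap {ε₁ ε₂ : ℝ} (h1 : ε₁ ^ 2 = 1) (h2 : ε₂ ^ 2 = 1) (z : ℂ) :
    amap ε₁ ε₂ (amap ε₁ ε₂ z) = z := by
  apply Complex.ext <;> simp only [amap]
  · rw [← mul_assoc, ← sq, h1, one_mul]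
  · rw [← mul_assoc, ← sq, h2, one_mul]

lemma polSp_rtOp {K : Set (Finset (Fin r))} (hK : ∀ σ, σ ∉ K → 2 ≤ σ.card) {ψ : Fin r → ℂ → ℂ}
    (h1 : ∀ k z, (ψ k z).im = 0 → z.im = 0) (h2 : ∀ k l, ∀ x y : ℝ, ψ k x = ψ l y → x = y) (y : Fin r → ℂ)
    (hy : (∀ k, (y k).im ≠ 0) ∨ (Function.Injective y ∧ ∀ l k z, ψ l z ≠ y k))
    {D D' : Fin r → ℕ} (hD : ∀ k, D k ≤ D' k) {f : ∀ k, Fin (D k) → ℂ} (hf : f ∈ PolSp K D) :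
    (fun k => ofPoly (D' k) (rtOp (ψ k) (D' k - D k) (y k) (f k))) ∈ PolSp K D' := by
  intro σ hσ t
  by_contra hcon
  push Not at hcon
  have hroot : ∀ k ∈ σ, (∃ α, (toPoly (f k)).eval α = 0 ∧ ψ k α = t) ∨ (t : ℂ) = y k := by
    intro k hk
    have := hcon k hk
    have hm := rtOp_monic (ψ k) (D' k - D k) (y k) (f k)
    rw [toPoly_ofPoly hm.1 (by rw [hm.2]; have := hD k; omega)] at this
    rcases rtOp_isRoot this with h | h
    · exact Or.inl h
    · exact Or.inr h.1
  have hno : ∀ k ∈ σ, (t : ℂ) ≠ y k := by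
    intro k hk hty
    rcases hy with hy | ⟨hyi, hyn⟩
    · exact hy k (by rw [← hty]; simp)
    · obtain ⟨l, hl, hlk⟩ := Finset.exists_mem_ne (hK σ hσ) k
      rcases hroot l hl with ⟨α, -, hα⟩ | h
      · exact hyn l k α (hα.trans hty)
      · exact hlk (hyi (h.symm.trans hty))
  have hroot' : ∀ k ∈ σ, ∃ β : ℝ, (toPoly (f k)).eval (β : ℂ) = 0 ∧ ψ k β = t := by
    intro k hk
    rcases hroot k hk with ⟨α, hα, ht⟩ | h
    · have him : α.im = 0 := h1 k α (by rw [ht]; simp)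
      have : (α.re : ℂ) = α := Complex.ext (by simp) (by simp [him])
      exact ⟨α.re, by rw [this]; exact hα, by rw [this]; exact ht⟩
    · exact absurd h (hno k hk)
  obtain ⟨k0, hk0⟩ : σ.Nonempty := Finset.card_pos.1 (by have := hK σ hσ; omega)
  obtain ⟨β, -, hβt⟩ := hroot' k0 hk0
  obtain ⟨k, hk, hne⟩ := hf σ hσ β
  obtain ⟨β', hβ', hβt'⟩ := hroot' k hk
  exact hne (h2 k k0 β' β (hβt'.trans hβt.symm) ▸ hβ')

lemma continuous_pi_rtOp {T : Type*} [TopologicalSpace T] {D D' : Fin r → ℕ} (e : Fin r → ℕ)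
    (ψ : Fin r → T → ℂ → ℂ)
    (hψ : ∀ k, Continuous fun p : T × ℂ => ψ k p.1 p.2) (y : Fin r → T → ℂ) (hy : ∀ k, Continuous (y k)) :
    Continuous fun q : T × (∀ k, Fin (D k) → ℂ) =>
      (fun k => ofPoly (D' k) (rtOp (ψ k q.1) (e k) (y k q.1) (q.2 k)) : ∀ k, Fin (D' k) → ℂ) := by
  refine continuous_pi fun k => continuous_pi fun i => ?_
  have h := coefCont_rtOp (d := D k) (ψ k) (hψ k) (e k) (y k) (hy k) i
  have h2 : Continuous fun q : T × (∀ k, Fin (D k) → ℂ) => (q.1, q.2 k) := by fun_prop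
  have h3 := Continuous.comp h h2
  simp only [Function.comp_def] at h3
  simp only [ofPoly]
  exact h3

attribute [local irreducible] ofPoly rtOp toPoly

set_option maxHeartbeats 1000000 in
theorem reduce1 {K : Set (Finset (Fin r))} (hE : (∅ : Finset (Fin r)) ∈ K)
    (hK : ∀ σ, σ ∉ K → 2 ≤ σ.card) {D D' : Fin r → ℕ} (hD : ∀ k, D k ≤ D' k)
    {b : ℝ} (φ : ℂ → ℂ) (hφ : AdmissiblePhi b φ)
    (xpt : Fin r → ℂ) (hx : ∀ k, b < (xpt k).re) (hxinj : Function.Injective xpt)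
    (j₀ : C(↥(PolSp K D'), Loop ↥(UK K) (onesUK hE)))
    (s₀ : C(↥(PolSp K D), ↥(PolSp K D'))) (hs₀ : StabSpec K φ xpt D D' ⇑s₀) :
    ∃ y : Fin r → ℂ, (∀ k, (y k).im ≠ 0) ∧ ∃ T : C(↥(PolSp K D), ↥(PolSp K D')),
      (∀ f k, toPoly ((T f).1 k) =
        toPoly (f.1 k) * (Polynomial.X - Polynomial.C (y k)) ^ (D' k - D k)) ∧
      ∀ m, Comp m (adj (j₀.comp T)) → Comp m (adj (j₀.comp s₀)) := by
  obtain ⟨ε₁, ε₂, he1, he2, hre, hmono, hsgn, hb⟩ := phi_facts hφ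
  let ψ : unitInterval → ℂ → ℂ := fun u z => (1 - (u : ℝ)) • φ z + (u : ℝ) • amap ε₁ ε₂ z
  let Y : Fin r → unitInterval → ℂ := fun k u =>
    xpt k + ((u : ℝ) * (if 0 ≤ (xpt k).im then 1 else -1) : ℝ) • Complex.I
  have hψc : Continuous fun p : unitInterval × ℂ => ψ p.1 p.2 := by
    have h1 := hφ.1
    have h2 := continuous_amap ε₁ ε₂
    fun_prop
  have hYc : ∀ k, Continuous (Y k) := by intro k; fun_prop
  have hψ1 : ∀ u z, (ψ u z).im = 0 → z.im = 0 := by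
    intro u z h
    by_contra hz
    have hp := hsgn z hz
    have hu0 := u.2.1
    have hu1 := u.2.2
    simp only [ψ, amap, Complex.add_im, Complex.smul_im, smul_eq_mul] at h
    have e : ε₂ * z.im * ((1 - (u : ℝ)) * (φ z).im + u * (ε₂ * z.im)) =
        (1 - u) * (ε₂ * z.im * (φ z).im) + u * (ε₂ ^ 2 * z.im ^ 2) := by ring
    rw [h, he2, mul_zero, one_mul] at e
    have hz2 : 0 < z.im ^ 2 := by positivity
    rcases hu0.eq_or_lt with h0 | h0
    · rw [← h0] at e; linarith
    · have := mul_pos h0 hz2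
      have := mul_nonneg (sub_nonneg.2 hu1) hp.le
      linarith
  have hψlt : ∀ u, ∀ x y : ℝ, x < y → ψ u x ≠ ψ u y := by
    intro u x y hxy h
    have h' := congrArg Complex.re h
    have hp := hmono x y hxy
    have hu0 := u.2.1
    have hu1 := u.2.2
    simp only [ψ, amap, Complex.add_re, Complex.smul_re, smul_eq_mul, Complex.ofReal_re] at h'
    have e : (1 - (u : ℝ)) * (ε₁ * ((φ y).re - (φ x).re)) + u * (ε₁ ^ 2 * (y - x)) =
       ε₁ * (((1 - (u : ℝ)) * (φ y).re + u * (ε₁ * y)) - ((1 - (u : ℝ)) * (φ x).re + u * (ε₁ * x))) := by ring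
    rw [h', sub_self, mul_zero, he1, one_mul] at e
    rcases hu0.eq_or_lt with h0 | h0
    · rw [← h0] at e; linarith
    · have := mul_pos h0 (sub_pos.2 hxy)
      have := mul_nonneg (sub_nonneg.2 hu1) hp.le
      linarith
  have hψ2 : ∀ u, ∀ x y : ℝ, ψ u x = ψ u y → x = y := by
    intro u x y h
    rcases lt_trichotomy x y with hlt | heq | hlt
    · exact absurd h (hψlt u x y hlt)
    · exact heq
    · exact absurd h.symm (hψlt u y x hlt)
  have hY1 : ∀ u : unitInterval, 0 < (u : ℝ) → ∀ k, (Y k u).im ≠ 0 := by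
    intro u hu k
    simp only [Y, Complex.add_im, Complex.smul_im, Complex.I_im, smul_eq_mul, mul_one]
    split_ifs with h
    · nlinarith
    · push Not at h; nlinarith
  have hmem : ∀ (u : unitInterval) (f : ↥(PolSp K D)),
      (fun k => ofPoly (D' k) (rtOp (ψ u) (D' k - D k) (Y k u) (f.1 k))) ∈ PolSp K D' := by
    intro u f
    refine polSp_rtOp hK (ψ := fun _ => ψ u) (fun _ => hψ1 u) (fun _ _ => hψ2 u) (fun k => Y k u) ?_ hD f.2
    rcases u.2.1.eq_or_lt with h0 | h0
    · right
      have hu : u = 0 := Subtype.ext h0.symm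
      subst hu
      constructor
      · intro k l h; apply hxinj; simpa [Y] using h
      · intro _ k z h
        have : φ z = xpt k := by simpa [ψ, Y] using h
        have h1 := hb z
        rw [this] at h1
        exact absurd h1 (not_lt.2 (hx k).le)
    · exact Or.inl (hY1 u h0)
  have hShc : Continuous fun q : unitInterval × ↥(PolSp K D) =>
      (fun k => ofPoly (D' k) (rtOp (ψ q.1) (D' k - D k) (Y k q.1) (q.2.1 k)) : ∀ k, Fin (D' k) → ℂ) := by
    have h1 := continuous_pi_rtOp (D := D) (D' := D') (fun k => D' k - D k) (fun _ => ψ) (fun _ => hψc) Y hYc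
    have h2 : Continuous fun q : unitInterval × ↥(PolSp K D) => (q.1, q.2.1) := by fun_prop
    have h3 := h1.comp h2
    simp only [Function.comp_def] at h3
    exact h3
  let Sh : C(unitInterval × ↥(PolSp K D), ↥(PolSp K D')) := ⟨fun q => ⟨_, hmem q.1 q.2⟩, by
    apply Continuous.subtype_mk
    exact hShc⟩
  have hSh : ∀ u f k, toPoly ((Sh (u, f)).1 k) = rtOp (ψ u) (D' k - D k) (Y k u) (f.1 k) := by
    intro u f k
    have hm := rtOp_monic (ψ u) (D' k - D k) (Y k u) (f.1 k)
    have hn : (rtOp (ψ u) (D' k - D k) (Y k u) (f.1 k)).natDegree = D' k := by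
      rw [hm.2]; have := hD k; omega
    exact toPoly_ofPoly hm.1 hn
  have hψ0 : ψ 0 = φ := by funext z; simp [ψ]
  have hψ1' : ψ 1 = amap ε₁ ε₂ := by funext z; simp [ψ]
  have hSh0 : ∀ f, Sh (0, f) = s₀ f := by
    intro f
    ext1
    funext k
    apply toPoly_injective
    rw [hSh, hs₀ f k, hψ0]
    simp [rtOp, Y]
  -- the involution
  let a : (∀ k, Fin (D k) → ℂ) → (∀ k, Fin (D k) → ℂ) := fun f k => ofPoly (D k) (rtOp (amap ε₁ ε₂) 0 0 (f k))
  have hap : ∀ f k, toPoly (a f k) = rtOp (amap ε₁ ε₂) 0 0 (f k) := by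
    intro f k
    have hm := rtOp_monic (amap ε₁ ε₂) 0 0 (f k)
    exact toPoly_ofPoly hm.1 hm.2
  have hac : Continuous a :=
    (continuous_pi_rtOp (D := D) (D' := D) (T := Unit) (fun _ => 0) (fun _ _ => amap ε₁ ε₂)
      (fun _ => (continuous_amap ε₁ ε₂).comp continuous_snd) (fun _ _ => 0) (fun _ => continuous_const)).comp
      (by fun_prop : Continuous fun q : ∀ k, Fin (D k) → ℂ => ((), q))
  have haa : ∀ f, a (a f) = f := by
    intro f
    funext k
    apply toPoly_injective
    rw [hap, rtOp, hap, rtOp_roots]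
    have : amap ε₁ ε₂ ∘ amap ε₁ ε₂ = id := by funext z; exact amap_amap he1 he2 z
    rw [Multiset.map_map (amap ε₁ ε₂) (amap ε₁ ε₂), this]
    have h := rtOp_id (f k) 0
    rw [rtOp] at h
    exact h
  have haP : ∀ f ∈ PolSp K D, a f ∈ PolSp K D := by
    intro f hf
    have := polSp_rtOp hK (ψ := fun _ => ψ 1) (fun _ => hψ1 1) (fun _ _ => hψ2 1) (fun k => Y k 1)
      (Or.inl (hY1 1 (by simp))) (fun k => le_refl (D k)) hf
    convert this using 1
    funext k
    simp [a, hψ1', rtOp]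
  -- T
  have hTm : ∀ f : ↥(PolSp K D), Sh (1, ⟨a f.1, haP _ f.2⟩) = Sh (1, ⟨a f.1, haP _ f.2⟩) := fun _ => rfl
  let ac : C(↥(PolSp K D), ↥(PolSp K D)) := ⟨fun f => ⟨a f.1, haP _ f.2⟩, by fun_prop⟩
  have hacac : ∀ f, ac (ac f) = f := fun f => Subtype.ext (haa f.1)
  let T : C(↥(PolSp K D), ↥(PolSp K D')) := ⟨fun f => Sh (1, ac f), by fun_prop⟩
  refine ⟨fun k => Y k 1, hY1 1 (by simp), T, ?_, ?_⟩
  · intro f k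
    show toPoly ((Sh (1, ac f)).1 k) = _
    rw [hSh, hψ1', rtOp]
    have h1 : (toPoly ((ac f).1 k)).roots = (toPoly (f.1 k)).roots.map (amap ε₁ ε₂) := by
      show (toPoly (a f.1 k)).roots = _
      rw [hap, rtOp_roots]
    have : amap ε₁ ε₂ ∘ amap ε₁ ε₂ = id := by funext z; exact amap_amap he1 he2 z
    rw [h1, Multiset.map_map (amap ε₁ ε₂) (amap ε₁ ε₂), this]
    congr 1
    have := rtOp_id (f.1 k) 0
    simpa [rtOp] using this
  · intro m hm
    have h2 := comp_precomp hm a hac haa haP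
    refine comp_homotopic ?_ ?_ h2
    · intro f k
      simp only [adj_apply]
      rw [((j₀.comp s₀) f).2]; rfl
    · refine ⟨⟨⟨⟨fun q => adj j₀ (Sh (q.1, q.2.1), q.2.2), by fun_prop⟩, ?_, ?_⟩, ?_⟩⟩
      · rintro ⟨f, s⟩
        show adj j₀ (Sh (0, f), s) = _
        rw [hSh0]; rfl
      · rintro ⟨f, s⟩
        show adj j₀ (Sh (1, f), s) = adj j₀ (Sh (1, ac (ac f)), s)
        rw [hacac]
      · rintro u ⟨f, s⟩ hs
        simp only [Set.mem_ofPred_eq] at hs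
        subst hs
        show (j₀ _).1 OnePoint.infty = (j₀ _).1 OnePoint.infty
        rw [(j₀ _).2, (j₀ _).2]

end T5b
end ModT5b

section ModT6a
open scoped Topology

section T6a
variable {n r : ℕ}

lemma zr_injective : Function.Injective (zr (n := n)) := by
  intro a b h
  funext i
  have := congrFun h i
  simpa [zr] using this

lemma gen_basis (F : Fan n) (N : Fin r → Fin n → ℤ) (hPG : IsPrimGens F N) {τ : Finset (Fin r)}
    (hτ : τ ∈ KC F N) (b : Module.Basis (Fin n) ℤ (Fin n → ℤ)) (s : Finset (Fin n))
    (hb : coneIdx N τ = {x | ∃ lam : Fin n → ℝ, (∀ i, 0 ≤ lam i) ∧ x = ∑ i ∈ s, lam i • zr (b i)})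
    (l : Fin r) (hl : l ∈ τ) : ∃ i, N l = b i := by
  obtain ⟨L, hL, hLe⟩ := F.inter_face _ hτ _ (hPG.ray_mem l)
  have hmem : zr (N l) ∈ coneIdx N τ := by
    refine ⟨fun i => if i = l then 1 else 0, fun i => by dsimp only; split_ifs <;> norm_num, ?_⟩
    simp [ite_smul, hl]
  have hL0 : L (zr (N l)) = 0 := by
    have : zr (N l) ∈ coneIdx N τ ∩ ray (zr (N l)) := ⟨hmem, 1, zero_le_one, by simp⟩
    rw [hLe] at this
    exact this.2
  have hbm : ∀ i ∈ s, zr (b i) ∈ coneIdx N τ := by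
    intro i hi
    rw [hb]
    refine ⟨fun i' => if i' = i then 1 else 0, fun i => by dsimp only; split_ifs <;> norm_num, ?_⟩
    simp [ite_smul, hi]
  have hmem' := hmem
  rw [hb] at hmem'
  obtain ⟨lam, hlam, hx⟩ := hmem'
  have hsum : ∑ i ∈ s, lam i * L (zr (b i)) = 0 := by
    rw [hx, map_sum] at hL0
    simpa using hL0
  have hz : ∀ i ∈ s, lam i * L (zr (b i)) = 0 :=
    (Finset.sum_eq_zero_iff_of_nonneg fun i hi => mul_nonneg (hlam i) (hL _ (hbm i hi))).1 hsum
  obtain ⟨i, hi, hne⟩ : ∃ i ∈ s, lam i ≠ 0 := by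
    by_contra hcon
    push Not at hcon
    apply hPG.ne_zero l
    apply zr_injective
    rw [hx, Finset.sum_eq_zero fun i hi => by rw [hcon i hi, zero_smul]]
    funext j; simp [zr]
  have hLi : L (zr (b i)) = 0 := (mul_eq_zero.1 (hz i hi)).resolve_left hne
  have hray : zr (b i) ∈ ray (zr (N l)) := by
    have : zr (b i) ∈ coneIdx N τ ∩ {x | L x = 0} := ⟨hbm i hi, hLi⟩
    rw [← hLe] at this
    exact this.2
  have hlat : zr (b i) ∈ ray (zr (N l)) ∩ {x | IsLatticePoint x} := ⟨hray, fun j => ⟨b i j, rfl⟩⟩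
  rw [hPG.primitive l] at hlat
  obtain ⟨c, hc⟩ := hlat
  have hbc : b i = (c : ℤ) • N l := by
    apply zr_injective
    rw [hc]
    funext j; simp [zr]
  have h1 : (1 : ℤ) = c * b.coord i (N l) := by
    have := congrArg (b.coord i) hbc
    rw [map_smul, smul_eq_mul] at this
    rw [← this]; simp
  have hc1 : (c : ℤ) = 1 :=
    Int.eq_one_of_dvd_one (by positivity) ⟨_, h1⟩
  exact ⟨i, by rw [hbc, hc1, one_smul]⟩

lemma dual_vec (F : Fan n) (N : Fin r → Fin n → ℤ) (hNS : F.NonSingular) (hPG : IsPrimGens F N)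
    {τ : Finset (Fin r)} (hτ : τ ∈ KC F N) :
    ∃ M : Fin r → Fin n → ℤ, ∀ k ∈ τ, ∀ l ∈ τ, ∑ j, N l j * M k j = if l = k then 1 else 0 := by
  obtain ⟨b, s, hb⟩ := hNS _ hτ
  have hex := gen_basis F N hPG hτ b s hb
  rcases τ.eq_empty_or_nonempty with rfl | ⟨l₀, hl₀⟩
  · exact ⟨0, by simp⟩
  haveI : Nonempty (Fin n) := ⟨(hex l₀ hl₀).choose⟩
  choose! ix hix using hex
  refine ⟨fun k j => b.coord (ix k) (Pi.single j 1), fun k hk l hl => ?_⟩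
  have h : ∑ j, N l j * b.coord (ix k) (Pi.single j 1) = b.coord (ix k) (N l) := by
    conv_rhs => rw [pi_eq_sum_univ' (N l)]
    simp only [map_sum, map_smul, smul_eq_mul]
  simp only
  rw [h]
  conv_lhs => rw [hix l hl]
  rw [Module.Basis.coord_apply, Module.Basis.repr_self, Finsupp.single_apply]
  have : ix l = ix k ↔ l = k := ⟨fun h => hPG.inj (by rw [hix l hl, hix k hk, h]), fun h => by rw [h]⟩
  simp [this]

lemma toricRel_equiv (N : Fin r → Fin n → ℤ) (K : Set (Finset (Fin r))) :
    Equivalence (toricRel N K) := by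
  refine ⟨fun x => ⟨fun _ => 1, ⟨by simp, by simp⟩, by simp⟩, ?_, ?_⟩
  · rintro x y ⟨μ, ⟨h1, h2⟩, h⟩
    refine ⟨fun k => (μ k)⁻¹, ⟨fun k => inv_ne_zero (h1 k), fun m => ?_⟩, ?_⟩
    · simp only [inv_zpow, Finset.prod_inv_distrib, h2 m, inv_one]
    · funext i
      rw [← h]
      simp only
      rw [inv_mul_cancel_left₀ (h1 i)]
  · rintro x y z ⟨μ, ⟨h1, h2⟩, h⟩ ⟨ν, ⟨h1', h2'⟩, h'⟩
    refine ⟨fun k => ν k * μ k, ⟨fun k => mul_ne_zero (h1' k) (h1 k), fun m => ?_⟩, ?_⟩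
    · simp only [mul_zpow, Finset.prod_mul_distrib, h2 m, h2' m, mul_one]
    · funext i
      rw [← h', ← h]
      simp only [mul_assoc]

lemma toricRel_of_qmap {N : Fin r → Fin n → ℤ} {K : Set (Finset (Fin r))} {x y : ↥(UK K)}
    (h : qmap N K x = qmap N K y) : toricRel N K x y := by
  have := Quot.eqvGen_exact h
  rwa [(toricRel_equiv N K).eqvGen_iff] at this

/-- The element of the group carrying `p` to `q` depends continuously on `p`, `q`. -/
lemma mu_cont (F : Fan n) (N : Fin r → Fin n → ℤ) (hNS : F.NonSingular) (hPG : IsPrimGens F N)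
    {Y : Type*} [TopologicalSpace Y] (p q : Y → Fin r → ℂ) (hp : Continuous p) (hq : Continuous q)
    (hpU : ∀ y, p y ∈ UK (KC F N))
    (h : ∀ y, ∃ μ ∈ GSet N, (fun i => μ i * p y i) = q y) :
    ∃ μ : Y → Fin r → ℂ, Continuous μ ∧ (∀ y k, μ y k ≠ 0) ∧ ∀ y k, μ y k * p y k = q y k := by
  choose μ hμG hμ using h
  have hμ' : ∀ y k, μ y k * p y k = q y k := fun y k => congrFun (hμ y) k
  refine ⟨μ, ?_, fun y k => (hμG y).1 k, hμ'⟩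
  rw [continuous_iff_continuousAt]
  intro y₀
  let τ : Finset (Fin r) := Finset.univ.filter fun k => p y₀ k = 0
  have hτ : τ ∈ KC F N := by
    by_contra hc
    obtain ⟨i, hi, hne⟩ := mem_UK.1 (hpU y₀) τ hc
    exact hne (by simpa [τ] using hi)
  obtain ⟨M, hM⟩ := dual_vec F N hNS hPG hτ
  have hout : ∀ k, k ∉ τ → ContinuousAt (fun y => μ y k) y₀ := by
    intro k hk
    have hk0 : p y₀ k ≠ 0 := by simpa [τ] using hk
    have hpk : Continuous fun y => p y k := (continuous_apply k).comp hp
    have hqk : Continuous fun y => q y k := (continuous_apply k).comp hq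
    have h1 : ContinuousAt (fun y => q y k / p y k) y₀ := hqk.continuousAt.div hpk.continuousAt hk0
    refine h1.congr ?_
    filter_upwards [hpk.continuousAt.eventually_ne hk0] with y hy
    rw [← hμ' y k, mul_div_cancel_right₀ _ hy]
  refine continuousAt_pi.2 fun k => ?_
  by_cases hk : k ∈ τ
  · have hform : ∀ y, μ y k = (∏ l ∈ τᶜ, μ y l ^ (∑ j, N l j * M k j))⁻¹ := by
      intro y
      have h1 := (hμG y).2 (M k)
      rw [← Finset.prod_mul_prod_compl τ] at h1
      have h2 : ∏ l ∈ τ, μ y l ^ (∑ j, N l j * M k j) = μ y k := by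
        rw [Finset.prod_congr rfl fun l hl => by rw [hM k hk l hl]]
        rw [Finset.prod_eq_single k]
        · simp
        · intro l _ hlk; simp [hlk]
        · intro h; exact absurd hk h
      rw [h2] at h1
      exact eq_inv_of_mul_eq_one_left h1
    rw [show (fun y => μ y k) = fun y => (∏ l ∈ τᶜ, μ y l ^ (∑ j, N l j * M k j))⁻¹ from funext hform]
    refine ContinuousAt.inv₀ ?_ (Finset.prod_ne_zero_iff.2 fun l _ => zpow_ne_zero _ ((hμG y₀).1 l))
    refine tendsto_finsetProd _ fun l hl => ?_
    exact (hout l (by simpa using hl)).zpow₀ _ (Or.inl ((hμG y₀).1 l))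
  · exact hout k hk

end T6a
end ModT6a

section ModT6b
open scoped Topology

section T6b
variable {n r : ℕ}

lemma continuous_eval_pol {K : Set (Finset (Fin r))} {D : Fin r → ℕ} (k : Fin r) :
    Continuous fun p : ↥(PolSp K D) × ℝ => (toPoly (p.1.1 k)).eval (p.2 : ℂ) := by
  simp only [toPoly_eval]
  have h : Continuous fun p : ↥(PolSp K D) × ℝ => p.1.1 k :=
    (continuous_apply k).comp (continuous_subtype_val.comp continuous_fst)
  have h' : ∀ l, Continuous fun p : ↥(PolSp K D) × ℝ => p.1.1 k l := fun l => (continuous_apply l).comp h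
  fun_prop

lemma continuous_base {K : Set (Finset (Fin r))} {D : Fin r → ℕ} {k : Fin r} {g : ℝ → ℂ} (hg : GData (D k) g) :
    Continuous fun p : ↥(PolSp K D) × OnePoint ℝ => hg.pgS (p.1.1 k) p.2 := by
  have h2 : Continuous fun p : ↥(PolSp K D) × OnePoint ℝ => (p.1.1 k, p.2) :=
    ((continuous_apply k).comp (continuous_subtype_val.comp continuous_fst)).prodMk continuous_snd
  exact hg.continuous_pgS.comp h2

attribute [local irreducible] toPoly GData.pgS

theorem lambda_exists (F : Fan n) (N : Fin r → Fin n → ℤ) (hNS : F.NonSingular) (hPG : IsPrimGens F N)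
    (hE : (∅ : Finset (Fin r)) ∈ KC F N) {D D' : Fin r → ℕ}
    (j₀ : C(↥(PolSp (KC F N) D'), Loop ↥(UK (KC F N)) (onesUK hE)))
    (hj₀ : IsLiftOfID N (KC F N) hE D' j₀)
    (y : Fin r → ℂ) (hy : ∀ k, (y k).im ≠ 0) (T : C(↥(PolSp (KC F N) D), ↥(PolSp (KC F N) D')))
    (hT : ∀ f k, toPoly ((T f).1 k) =
        toPoly (f.1 k) * (Polynomial.X - Polynomial.C (y k)) ^ (D' k - D k)) :
    ∃ Λ : Fin r → C(↥(PolSp (KC F N) D) × OnePoint ℝ, ℂ), (∀ k p, Λ k p ≠ 0) ∧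
      (∀ k f, Λ k (f, OnePoint.infty) = 1) ∧
      ∀ f s k, (adj (j₀.comp T) (f, s)).1 k = Λ k (f, s) * (gdata_inv (D k)).pgS (f.1 k) s := by
  have hcp : Continuous fun (p : ↥(PolSp (KC F N) D) × ℝ) (k : Fin r) => (toPoly ((T p.1).1 k)).eval (p.2 : ℂ) := by
    refine continuous_pi fun k => ?_
    have h2 : Continuous fun p : ↥(PolSp (KC F N) D) × ℝ => (T p.1, p.2) := by fun_prop
    exact (continuous_eval_pol (D := D') k).comp h2
  have hcJ : Continuous fun (p : ↥(PolSp (KC F N) D) × OnePoint ℝ) => (adj (j₀.comp T) p).1 :=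
    continuous_subtype_val.comp (adj (j₀.comp T)).continuous
  have hemb : Topology.IsOpenEmbedding fun p : ↥(PolSp (KC F N) D) × ℝ => (p.1, (p.2 : OnePoint ℝ)) :=
    Topology.IsOpenEmbedding.id.prodMap OnePoint.isOpenEmbedding_coe
  obtain ⟨μ, hμc, hμ0, hμ⟩ := mu_cont F N hNS hPG _ (fun p : ↥(PolSp (KC F N) D) × ℝ =>
    (adj (j₀.comp T) (p.1, (p.2 : OnePoint ℝ))).1) hcp (hcJ.comp hemb.continuous)
    (fun p => polEval_mem_UK (T p.1) p.2) (fun p => by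
      exact toricRel_of_qmap (hj₀ (T p.1) p.2).symm)
  let Λ : Fin r → ↥(PolSp (KC F N) D) × OnePoint ℝ → ℂ := fun k p =>
    @OnePoint.rec ℝ (fun _ => ℂ) 1
      (fun t => μ (p.1, t) k * ((t : ℂ) - y k) ^ (D' k - D k) * ((t : ℂ) + Complex.I) ^ (D k)) p.2
  have hΛc : ∀ k f (t : ℝ), Λ k (f, (t : OnePoint ℝ)) =
    μ (f, t) k * ((t : ℂ) - y k) ^ (D' k - D k) * ((t : ℂ) + Complex.I) ^ (D k) := fun _ _ _ => rfl
  have hΛi : ∀ k f, Λ k (f, OnePoint.infty) = 1 := fun _ _ => rfl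
  have hty : ∀ k (t : ℝ), (t : ℂ) - y k ≠ 0 := by
    intro k t h
    apply hy k
    rw [← sub_eq_zero.1 h]; simp
  have h0 : ∀ k p, Λ k p ≠ 0 := by
    rintro k ⟨f, s⟩
    induction s using OnePoint.rec with
    | infty => rw [hΛi]; exact one_ne_zero
    | coe t =>
      rw [hΛc]
      exact mul_ne_zero (mul_ne_zero (hμ0 _ _) (pow_ne_zero _ (hty k t))) (pow_ne_zero _ (tpi_ne t))
  have hid : ∀ k f s, (adj (j₀.comp T) (f, s)).1 k = Λ k (f, s) * (gdata_inv (D k)).pgS (f.1 k) s := by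
    intro k f s
    induction s using OnePoint.rec with
    | infty =>
      rw [hΛi, GData.pgS_infty, adj_apply, ((j₀.comp T) f).2, mul_one]; rfl
    | coe t =>
      rw [hΛc, GData.pgS_coe, ← hμ (f, t) k, hT]
      have := tpi_ne t
      simp only [Polynomial.eval_mul, Polynomial.eval_pow, Polynomial.eval_sub, Polynomial.eval_X,
        Polynomial.eval_C]
      have h1 : ((t : ℂ) + Complex.I) ^ D k * ((t : ℂ) + Complex.I)⁻¹ ^ D k = 1 := by
        rw [← mul_pow, mul_inv_cancel₀ this, one_pow]
      linear_combination (-(μ (f, t) k * (Polynomial.eval (t : ℂ) (toPoly (f.1 k)) * ((t : ℂ) - y k) ^ (D' k - D k)))) * h1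
  have hcont : ∀ k, Continuous (Λ k) := by
    intro k
    rw [continuous_iff_continuousAt]
    rintro ⟨f, s⟩
    induction s using OnePoint.rec with
    | infty =>
      have hJ : Continuous fun p : ↥(PolSp (KC F N) D) × OnePoint ℝ => (adj (j₀.comp T) p).1 k :=
        (continuous_apply k).comp hcJ
      have hB := continuous_base (K := KC F N) (D := D) (gdata_inv (D k))
      have hB0 : (gdata_inv (D k)).pgS (f.1 k) OnePoint.infty ≠ 0 := by
        rw [GData.pgS_infty]; exact one_ne_zero
      have h1 := hJ.continuousAt (x := (f, OnePoint.infty)) |>.div hB.continuousAt hB0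
      refine h1.congr ?_
      filter_upwards [hB.continuousAt.eventually_ne hB0] with p hp
      show (adj (j₀.comp T) p).1 k / (gdata_inv (D k)).pgS (p.1.1 k) p.2 = Λ k p
      rw [show (adj (j₀.comp T) p).1 k = _ from hid k p.1 p.2, mul_div_cancel_right₀ _ hp]
    | coe t =>
      refine (hemb.continuousAt_iff (x := (f, t))).1 ?_
      refine Continuous.continuousAt ?_
      show Continuous fun p : ↥(PolSp (KC F N) D) × ℝ =>
        μ p k * ((p.2 : ℂ) - y k) ^ (D' k - D k) * ((p.2 : ℂ) + Complex.I) ^ (D k)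
      have : Continuous fun p => μ p k := (continuous_apply k).comp hμc
      fun_prop
  exact ⟨fun k => ⟨Λ k, hcont k⟩, h0, hΛi, fun f s k => hid k f s⟩

end T6b
end ModT6b

section ModT7
open scoped Topology

section T7
variable {r : ℕ}

/-- no real roots -/
def NR {D : Fin r → ℕ} (f : ∀ k, Fin (D k) → ℂ) (k : Fin r) : Prop :=
  ∀ t : ℝ, (toPoly (f k)).eval (t : ℂ) ≠ 0

lemma mem_of_NR {K : Set (Finset (Fin r))} (hK : ∀ σ, σ ∉ K → 2 ≤ σ.card) {D : Fin r → ℕ}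
    {f : ∀ k, Fin (D k) → ℂ} (k : Fin r) (h : ∀ l, l ≠ k → NR f l) : f ∈ PolSp K D := by
  intro σ hσ t
  obtain ⟨l, hl, hlk⟩ := Finset.exists_mem_ne (hK σ hσ) k
  exact ⟨l, hl, h l hlk t⟩

lemma mem_of_NR' {K : Set (Finset (Fin r))} (hK : ∀ σ, σ ∉ K → 2 ≤ σ.card) {D : Fin r → ℕ}
    {f : ∀ k, Fin (D k) → ℂ} (h : ∀ l, NR f l) : f ∈ PolSp K D := by
  intro σ hσ t
  obtain ⟨l, hl⟩ : σ.Nonempty := Finset.card_pos.1 (by have := hK σ hσ; omega)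
  exact ⟨l, hl, h l t⟩

attribute [local irreducible] ofPoly rtOp toPoly

lemma join_NR {K : Set (Finset (Fin r))} (hK : ∀ σ, σ ∉ K → 2 ≤ σ.card) {D : Fin r → ℕ}
    {f : ∀ k, Fin (D k) → ℂ} (hf : f ∈ PolSp K D) :
    ∃ g, (∀ k, NR g k) ∧ JoinedIn (PolSp K D) f g := by
  -- a small positive number below all positive imaginary parts of roots
  obtain ⟨ε, hε, hεr⟩ : ∃ ε : ℝ, 0 < ε ∧ ∀ k α, (toPoly (f k)).eval α = 0 → 0 < α.im → ε < α.im := by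
    let A : Finset ℝ := (Finset.univ.biUnion fun k => (toPoly (f k)).roots.toFinset.image Complex.im).filter (0 < ·)
    have hA : ∀ a ∈ A, 0 < a := fun a ha => (Finset.mem_filter.1 ha).2
    have hmem : ∀ k α, (toPoly (f k)).eval α = 0 → 0 < α.im → α.im ∈ A := by
      intro k α h0 hp
      refine Finset.mem_filter.2 ⟨Finset.mem_biUnion.2 ⟨k, Finset.mem_univ _, Finset.mem_image.2 ⟨α, ?_, rfl⟩⟩, hp⟩
      rw [Multiset.mem_toFinset, Polynomial.mem_roots (toPoly_monic _).1.ne_zero]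
      exact h0
    rcases A.eq_empty_or_nonempty with h | h
    · exact ⟨1, one_pos, fun k α h0 hp => by have := hmem k α h0 hp; rw [h] at this; simp at this⟩
    · refine ⟨A.min' h / 2, by have := hA _ (A.min'_mem h); linarith, fun k α h0 hp => ?_⟩
      have := A.min'_le _ (hmem k α h0 hp)
      have := hA _ (A.min'_mem h)
      linarith
  let ψ : ℝ → ℂ → ℂ := fun s z => z - (s * ε : ℝ) * Complex.I
  have hψ : Continuous fun p : ℝ × ℂ => ψ p.1 p.2 := by simp only [ψ]; fun_prop
  let P : ℝ → ∀ k, Fin (D k) → ℂ := fun s k => ofPoly (D k) (rtOp (ψ s) 0 0 (f k))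
  have hP : Continuous P := by
    have h1 := continuous_pi_rtOp (D := D) (D' := D) (fun _ => 0) (fun _ => ψ) (fun _ => hψ) (fun _ _ => 0)
      (fun _ => continuous_const)
    have h2 : Continuous fun s : ℝ => (s, f) := by fun_prop
    exact h1.comp h2
  have hPp : ∀ s k, toPoly (P s k) = rtOp (ψ s) 0 0 (f k) := by
    intro s k
    have hm := rtOp_monic (ψ s) 0 0 (f k)
    exact toPoly_ofPoly hm.1 hm.2
  have hNR : ∀ s, 0 < s → s ≤ 1 → ∀ k, NR (P s) k := by
    intro s hs hs1 k t h
    rw [hPp] at h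
    rcases rtOp_isRoot h with ⟨α, hα, ht⟩ | ⟨_, h⟩
    · have him : α.im = s * ε := by
        have := congrArg Complex.im ht
        simp [ψ] at this
        linarith
      have := hεr k α hα (by rw [him]; positivity)
      nlinarith
    · exact h rfl
  have hP0 : P 0 = f := by
    funext k
    apply toPoly_injective
    rw [hPp, show ψ 0 = id by funext z; simp [ψ]]
    exact rtOp_id _ _
  refine ⟨P 1, hNR 1 one_pos le_rfl, JoinedIn.ofLine hP.continuousOn hP0 rfl ?_⟩
  rintro _ ⟨s, hs, rfl⟩
  rcases hs.1.eq_or_lt with h | h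
  · rw [← h, hP0]; exact hf
  · exact mem_of_NR' hK (hNR s h hs.2)

lemma join_all {K : Set (Finset (Fin r))} (hK : ∀ σ, σ ∉ K → 2 ≤ σ.card) {D : Fin r → ℕ}
    {f g : ∀ k, Fin (D k) → ℂ} (hf : ∀ k, NR f k) (hg : ∀ k, NR g k) : JoinedIn (PolSp K D) f g := by
  have key : ∀ S : Finset (Fin r), JoinedIn (PolSp K D) f (fun k => if k ∈ S then g k else f k) := by
    intro S
    induction S using Finset.induction_on with
    | empty =>
      simp only [Finset.notMem_empty, if_false]
      exact JoinedIn.refl (mem_of_NR' hK hf)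
    | insert a S ha ih =>
      refine ih.trans ?_
      let P : ℝ → ∀ k, Fin (D k) → ℂ := fun s k =>
        if k = a then (1 - s) • f k + s • g k else if k ∈ S then g k else f k
      have hP : Continuous P := by
        refine continuous_pi fun k => ?_
        by_cases h : k = a
        · simp only [P, h, if_true]; fun_prop
        · simp only [P, h, if_false]; exact continuous_const
      refine JoinedIn.ofLine hP.continuousOn ?_ ?_ ?_
      · funext k
        by_cases h : k = a
        · subst h; simp [P, ha]
        · simp [P, h]
      · funext k
        by_cases h : k = a
        · subst h; simp [P]
        · simp [P, h]
      · rintro _ ⟨s, -, rfl⟩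
        refine mem_of_NR hK a fun l hl t => ?_
        simp only [P, hl, if_false]
        split_ifs
        · exact hg l t
        · exact hf l t
  have := key Finset.univ
  simpa using this

theorem polSp_connected {K : Set (Finset (Fin r))} (hK : ∀ σ, σ ∉ K → 2 ≤ σ.card) (D : Fin r → ℕ) :
    PreconnectedSpace ↥(PolSp K D) := by
  rw [← isPreconnected_iff_preconnectedSpace]
  refine IsPreconnected.subset_closure (s := PolSp K D) ?_ le_rfl subset_closure
  refine isPreconnected_of_forall_pair fun x hx y hy => ?_
  obtain ⟨x', hx', h1⟩ := join_NR hK hx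
  obtain ⟨y', hy', h2⟩ := join_NR hK hy
  obtain ⟨γ, hγ⟩ := (h1.trans (join_all hK hx' hy')).trans h2.symm
  refine ⟨Set.range γ, ?_, ⟨0, γ.source⟩, ⟨1, γ.target⟩, isPreconnected_range γ.continuous⟩
  rintro _ ⟨s, rfl⟩
  exact hγ s

end T7
end ModT7

section ModT8
open scoped Topology

section T8

/-- The Cayley transform identifying the circle with the unit circle. -/
def cay : C(OnePoint ℝ, ℂ) := ⟨fun s => 1 - 2 * Complex.I * invS s, by fun_prop⟩

lemma cay_infty : cay OnePoint.infty = 1 := by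
  show 1 - 2 * Complex.I * invS OnePoint.infty = 1
  simp [invS]

lemma cay_coe (t : ℝ) : cay (t : OnePoint ℝ) = 1 - 2 * Complex.I * ((t : ℂ) + Complex.I)⁻¹ := by
  show 1 - 2 * Complex.I * invS (t : OnePoint ℝ) = _
  simp [invS]

lemma cay_coe' (t : ℝ) : cay (t : OnePoint ℝ) = ((t : ℂ) - Complex.I) * ((t : ℂ) + Complex.I)⁻¹ := by
  rw [cay_coe]
  have := tpi_ne t
  field_simp
  ring

lemma cay_inj : Function.Injective cay := by
  intro a b h
  apply invS_inj
  have h' : 1 - 2 * Complex.I * invS a = 1 - 2 * Complex.I * invS b := h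
  have h2 : (2 * Complex.I : ℂ) ≠ 0 := by simp
  exact mul_left_cancel₀ h2 (sub_right_injective h')

lemma norm_cay (s : OnePoint ℝ) : ‖cay s‖ = 1 := by
  induction s using OnePoint.rec with
  | infty => rw [cay_infty]; simp
  | coe t =>
    rw [cay_coe', norm_mul, norm_inv]
    have h1 : (t : ℂ) - Complex.I = (starRingEnd ℂ) ((t : ℂ) + Complex.I) := by simp [sub_eq_add_neg]
    rw [h1, Complex.norm_conj]
    exact mul_inv_cancel₀ (norm_ne_zero_iff.2 (tpi_ne t))

lemma cay_surj (ζ : ℂ) (hζ : ‖ζ‖ = 1) : ∃ s, cay s = ζ := by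
  by_cases h : ζ = 1
  · exact ⟨OnePoint.infty, by rw [cay_infty, h]⟩
  have hd : 1 - ζ ≠ 0 := sub_ne_zero.2 (Ne.symm h)
  let z : ℂ := Complex.I * (1 + ζ) / (1 - ζ)
  have hζ0 : ζ ≠ 0 := by intro h0; rw [h0] at hζ; simp at hζ
  have hconj : (starRingEnd ℂ) ζ = ζ⁻¹ := by
    rw [Complex.inv_def, Complex.normSq_eq_norm_sq, hζ]; simp
  have hz : (starRingEnd ℂ) z = z := by
    simp only [z, map_div₀, map_mul, map_add, map_sub, map_one, Complex.conj_I, hconj]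
    have hd' : 1 - ζ⁻¹ ≠ 0 := by
      rw [sub_ne_zero]; intro h1; exact h (by rw [← inv_inv ζ, ← h1, inv_one])
    have hd2 : ζ - 1 ≠ 0 := sub_ne_zero.2 h
    rw [div_eq_div_iff hd' hd]
    field_simp
    ring
  have hre : ((z.re : ℝ) : ℂ) = z := Complex.conj_eq_iff_re.1 hz
  refine ⟨(z.re : OnePoint ℝ), ?_⟩
  rw [cay_coe', hre]
  have h3 : z + Complex.I = 2 * Complex.I / (1 - ζ) := by simp only [z]; field_simp; ring
  have h4 : z - Complex.I = ζ * (2 * Complex.I / (1 - ζ)) := by simp only [z]; field_simp; ring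
  rw [h3, h4, mul_assoc, mul_inv_cancel₀, mul_one]
  exact div_ne_zero (by simp) hd

/-- parametrization of the circle by the interval -/
lemma exists_param : ∃ e : C(unitInterval, OnePoint ℝ), Function.Surjective e ∧
    ∀ u : unitInterval, cay (e u) = Complex.exp (2 * Real.pi * Complex.I * (u : ℝ)) := by
  have hn : ∀ u : unitInterval, ‖Complex.exp (2 * Real.pi * Complex.I * (u : ℝ))‖ = 1 := by
    intro u
    rw [Complex.norm_exp]; simp
  choose e he using fun u : unitInterval => cay_surj _ (hn u)
  have hemb : Topology.IsEmbedding cay :=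
    (cay.continuous.isClosedEmbedding cay_inj).isEmbedding
  have hc : Continuous e := by
    rw [hemb.continuous_iff]
    have : (cay ∘ e) = fun u : unitInterval => Complex.exp (2 * Real.pi * Complex.I * (u : ℝ)) := funext he
    rw [this]
    fun_prop
  refine ⟨⟨e, hc⟩, ?_, he⟩
  intro s
  have hs := norm_cay s
  have harg : Complex.exp ((cay s).arg * Complex.I) = cay s := by
    have := Complex.norm_mul_exp_arg_mul_I (cay s)
    rw [hs] at this; simpa using this
  have hpi := Real.pi_pos
  have h1 := Complex.neg_pi_lt_arg (cay s)
  have h2 := Complex.arg_le_pi (cay s)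
  by_cases h0 : 0 ≤ (cay s).arg
  · have hu : (cay s).arg / (2 * Real.pi) ∈ unitInterval :=
      ⟨by positivity, by rw [div_le_one (by positivity)]; linarith⟩
    refine ⟨⟨_, hu⟩, cay_inj ?_⟩
    show cay (e _) = _
    rw [he]
    conv_rhs => rw [← harg]
    congr 1
    push_cast
    have : (Real.pi : ℂ) ≠ 0 := by exact_mod_cast hpi.ne'
    field_simp
  · push Not at h0
    have hu : (cay s).arg / (2 * Real.pi) + 1 ∈ unitInterval := by
      have h3 : -1 ≤ (cay s).arg / (2 * Real.pi) := by
        rw [le_div_iff₀ (by positivity)]; linarith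
      have h4 : (cay s).arg / (2 * Real.pi) ≤ 0 := div_nonpos_of_nonpos_of_nonneg h0.le (by positivity)
      exact ⟨by linarith, by linarith⟩
    refine ⟨⟨_, hu⟩, cay_inj ?_⟩
    show cay (e _) = _
    rw [he]
    conv_rhs => rw [← harg]
    have : (Real.pi : ℂ) ≠ 0 := by exact_mod_cast hpi.ne'
    have h5 : (2 * Real.pi * Complex.I * (((cay s).arg / (2 * Real.pi) + 1 : ℝ) : ℂ)) =
        (cay s).arg * Complex.I + 2 * Real.pi * Complex.I := by
      push_cast
      field_simp
    exact (congrArg Complex.exp h5).trans (by rw [Complex.exp_add, Complex.exp_two_pi_mul_I, mul_one])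

theorem log_exists {Y : Type*} [TopologicalSpace Y] [PreconnectedSpace Y] (Λ : C(Y × OnePoint ℝ, ℂ))
    (h0 : ∀ p, Λ p ≠ 0) (h1 : ∀ y, Λ (y, OnePoint.infty) = 1) :
    ∃ (n : ℤ) (κ : C(Y × OnePoint ℝ, ℂ)), (∀ y, κ (y, OnePoint.infty) = 0) ∧
      ∀ y s, Λ (y, s) = Complex.exp (κ (y, s)) * cay s ^ n := by
  obtain ⟨e, hes, he⟩ := exists_param
  have he0 : e 0 = OnePoint.infty := cay_inj (by rw [he, cay_infty]; simp)
  have he1 : e 1 = OnePoint.infty := cay_inj (by rw [he, cay_infty]; simp [Complex.exp_two_pi_mul_I])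
  let H : C(unitInterval × Y, {z : ℂ // z ≠ 0}) := ⟨fun q => ⟨Λ (q.2, e q.1), h0 _⟩, by fun_prop⟩
  have cov := Complex.isCoveringMap_exp
  have H0 : ∀ y, H (0, y) = (fun z : ℂ ↦ (⟨_, z.exp_ne_zero⟩ : {z : ℂ // z ≠ 0})) ((ContinuousMap.const Y (0 : ℂ)) y) := by
    intro y
    apply Subtype.ext
    show Λ (y, e 0) = Complex.exp 0
    rw [he0, h1, Complex.exp_zero]
  let L : C(unitInterval × Y, ℂ) := cov.liftHomotopy H (ContinuousMap.const Y 0) H0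
  have hL0 : ∀ y, L (0, y) = 0 := fun y => cov.liftHomotopy_zero H _ H0 y
  have hL : ∀ u y, Complex.exp (L (u, y)) = Λ (y, e u) := by
    intro u y
    exact congrArg Subtype.val (congrFun (cov.liftHomotopy_lifts H _ H0) (u, y))
  obtain ⟨n, hn⟩ : ∃ n : ℤ, ∀ y, L (1, y) = n * (2 * Real.pi * Complex.I) := by
    rcases isEmpty_or_nonempty Y with hY | ⟨⟨y₀⟩⟩
    · exact ⟨0, fun y => (hY.false y).elim⟩
    have h2 : Complex.exp (L (1, y₀)) = 1 := by rw [hL, he1, h1]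
    obtain ⟨n, hn⟩ := Complex.exp_eq_one_iff.1 h2
    refine ⟨n, fun y => ?_⟩
    rw [← hn]
    have hc : Continuous fun y => L (1, y) := by fun_prop
    exact cov.const_of_comp hc (fun a b => Subtype.ext (by
      show Complex.exp (L (1, a)) = Complex.exp (L (1, b))
      rw [hL, hL, he1, h1, h1])) y y₀
  let h : Y × unitInterval → ℂ := fun p => L (p.2, p.1) - n * (2 * Real.pi * Complex.I) * (p.2 : ℝ)
  have hc : Continuous h := by fun_prop
  have hh0 : ∀ y, h (y, 0) = 0 := by intro y; simp [h, hL0]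
  have hh1 : ∀ y, h (y, 1) = 0 := by intro y; simp [h, hn]
  have hfib : ∀ y u v, e u = e v → h (y, u) = h (y, v) := by
    intro y u v huv
    have h2 := congrArg cay huv
    rw [he, he, Complex.exp_eq_exp_iff_exists_int] at h2
    obtain ⟨m, hm⟩ := h2
    have h3 : (u : ℝ) = v + m := by
      have h2pi : (2 * Real.pi * Complex.I : ℂ) ≠ 0 := Complex.two_pi_I_ne_zero
      have h4 : ((u : ℝ) : ℂ) = ((v : ℝ) : ℂ) + m := mul_left_cancel₀ h2pi (by rw [hm]; ring)
      exact_mod_cast h4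
    have hu := u.2
    have hv := v.2
    have hm1 : -1 ≤ (m : ℝ) := by linarith [hu.1, hv.2]
    have hm2 : (m : ℝ) ≤ 1 := by linarith [hu.2, hv.1]
    have hm1' : -1 ≤ m := by exact_mod_cast hm1
    have hm2' : m ≤ 1 := by exact_mod_cast hm2
    have hcase : m = -1 ∨ m = 0 ∨ m = 1 := by omega
    rcases hcase with rfl | rfl | rfl
    · push_cast at h3
      have a1 : u = 0 := Subtype.ext (by show (u : ℝ) = 0; linarith [hu.1, hv.2])
      have a2 : v = 1 := Subtype.ext (by show (v : ℝ) = 1; linarith [hu.1, hv.2])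
      rw [a1, a2, hh0, hh1]
    · have : u = v := Subtype.ext (by simpa using h3)
      rw [this]
    · push_cast at h3
      have a1 : u = 1 := Subtype.ext (by show (u : ℝ) = 1; linarith [hu.2, hv.1])
      have a2 : v = 0 := Subtype.ext (by show (v : ℝ) = 0; linarith [hu.2, hv.1])
      rw [a1, a2, hh0, hh1]
  choose ρ hρ using hes
  let κ : Y × OnePoint ℝ → ℂ := fun p => h (p.1, ρ p.2)
  have hκ : ∀ y u, κ (y, e u) = h (y, u) := fun y u => hfib y _ _ (hρ (e u))
  have hq : Topology.IsQuotientMap (Prod.map (id : Y → Y) e) := by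
    have hp : IsProperMap e := e.continuous.isProperMap
    refine ((Homeomorph.refl Y).isProperMap.prodMap hp).isClosedMap.isQuotientMap ?_ ?_
    · exact continuous_id.prodMap e.continuous
    · exact Function.surjective_id.prodMap fun s => ⟨ρ s, hρ s⟩
  have hκc : Continuous κ := by
    rw [hq.continuous_iff]
    have : κ ∘ Prod.map (id : Y → Y) e = h := by funext p; exact hκ p.1 p.2
    rw [this]; exact hc
  refine ⟨n, ⟨κ, hκc⟩, fun y => ?_, fun y s => ?_⟩
  · show κ (y, OnePoint.infty) = 0
    rw [← he0, hκ, hh0]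
  · show _ = Complex.exp (κ (y, s)) * _
    rw [← hρ s, hκ, ← hL, he, ← Complex.exp_int_mul, ← Complex.exp_add]
    congr 1
    simp only [h]
    ring

end T8
end ModT8

section ModT9
open scoped Topology

section T9
variable {n r : ℕ}

lemma cay_ne_zero (s : OnePoint ℝ) : cay s ≠ 0 := by
  intro h
  have := norm_cay s
  rw [h] at this; simp at this

lemma tendsto_cay : Filter.Tendsto (fun t : ℝ => cay (t : OnePoint ℝ)) (Filter.cocompact ℝ) (𝓝 1) := by
  have h := (tendsto_tpi_inv.const_mul (2 * Complex.I)).const_sub 1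
  simp only [cay_coe]
  simpa using h

lemma contDiff_cay (n : ℤ) : ContDiff ℝ 1 (fun t : ℝ => cay (t : OnePoint ℝ) ^ n) := by
  have h1 : ContDiff ℝ 1 (fun t : ℝ => cay (t : OnePoint ℝ)) := by
    simp only [cay_coe]
    exact contDiff_const.sub (contDiff_const.mul contDiff_tpi_inv)
  rcases n with n | n
  · simp only [Int.ofNat_eq_natCast, zpow_natCast]; exact h1.pow n
  · simp only [zpow_negSucc]
    exact (h1.pow (n + 1)).inv fun t => pow_ne_zero _ (cay_ne_zero _)

lemma gdata_cay (n : ℤ) (d : ℕ) :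
    GData d (fun t : ℝ => cay (t : OnePoint ℝ) ^ n * ((t : ℂ) + Complex.I)⁻¹ ^ d) where
  contDiff := (contDiff_cay n).mul (gdata_inv d).contDiff
  ne_zero := fun t => mul_ne_zero (zpow_ne_zero _ (cay_ne_zero _)) ((gdata_inv d).ne_zero t)
  tendsto := by
    have h1 := (tendsto_cay.zpow₀ n (Or.inl one_ne_zero)).mul (gdata_inv d).tendsto
    simp only [one_zpow, mul_one] at h1
    refine h1.congr fun t => ?_
    ring

lemma pgS_cay (n : ℤ) (d : ℕ) (u : Fin d → ℂ) (s : OnePoint ℝ) :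
    (gdata_cay n d).pgS u s = cay s ^ n * (gdata_inv d).pgS u s := by
  induction s using OnePoint.rec with
  | infty => simp [cay_infty]
  | coe t => rw [GData.pgS_coe, GData.pgS_coe]; ring

lemma mem_UK_mul {K : Set (Finset (Fin r))} {x c : Fin r → ℂ} (hx : x ∈ UK K) (hc : ∀ k, c k ≠ 0)
    {z : Fin r → ℂ} (hz : ∀ k, x k ≠ 0 → z k = c k * x k) : z ∈ UK K := by
  rw [mem_UK] at hx ⊢
  intro σ hσ
  obtain ⟨i, hi, hne⟩ := hx σ hσ
  exact ⟨i, hi, by rw [hz i hne]; exact mul_ne_zero (hc i) hne⟩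

attribute [local irreducible] toPoly GData.pgS

theorem comp_final {K : Set (Finset (Fin r))} {D : Fin r → ℕ} (R : ℕ) (hR : 1 ≤ R)
    (hK : ∀ σ, σ ∉ K → R + 1 ≤ σ.card) (m : ℕ) (hm : ∀ i, m + 1 ≤ 2 * R * D i)
    (G : C(↥(PolSp K D) × OnePoint ℝ, ↥(UK K)))
    (Λ : Fin r → C(↥(PolSp K D) × OnePoint ℝ, ℂ)) (h0 : ∀ k p, Λ k p ≠ 0)
    (h1 : ∀ k f, Λ k (f, OnePoint.infty) = 1)
    (hG : ∀ f s k, (G (f, s)).1 k = Λ k (f, s) * (gdata_inv (D k)).pgS (f.1 k) s) : Comp m G := by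
  haveI : PreconnectedSpace ↥(PolSp K D) := polSp_connected (fun σ hσ => by have := hK σ hσ; omega) D
  choose nn κ hκ0 hκ using fun k => log_exists (Λ k) (h0 k) (h1 k)
  have hbase : ∀ p : ↥(PolSp K D) × OnePoint ℝ, (fun k => (gdata_inv (D k)).pgS (p.1.1 k) p.2) ∈ UK K := by
    intro p
    refine mem_UK_mul (G p).2 (c := fun k => (Λ k p)⁻¹) (fun k => inv_ne_zero (h0 k p)) fun k _ => ?_
    rw [hG p.1 p.2 k]
    exact (inv_mul_cancel_left₀ (h0 k p) _).symm
  let V : unitInterval × (↥(PolSp K D) × OnePoint ℝ) → Fin r → ℂ := fun q k =>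
    Complex.exp ((1 - (q.1 : ℝ)) * κ k q.2) * cay q.2.2 ^ nn k * (gdata_inv (D k)).pgS (q.2.1.1 k) q.2.2
  have hVm : ∀ q, V q ∈ UK K := fun q =>
    mem_UK_mul (hbase q.2) (c := fun k => Complex.exp ((1 - (q.1 : ℝ)) * κ k q.2) * cay q.2.2 ^ nn k)
      (fun k => mul_ne_zero (Complex.exp_ne_zero _) (zpow_ne_zero _ (cay_ne_zero _))) fun k _ => rfl
  have hVc : Continuous V := by
    refine continuous_pi fun k => ?_
    have a1 : Continuous fun q : unitInterval × (↥(PolSp K D) × OnePoint ℝ) =>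
        Complex.exp ((1 - (q.1 : ℝ)) * κ k q.2) := by fun_prop
    have a2 : Continuous fun q : unitInterval × (↥(PolSp K D) × OnePoint ℝ) => cay q.2.2 ^ nn k :=
      (cay.continuous.comp (continuous_snd.comp continuous_snd)).zpow₀ _ fun q => Or.inl (cay_ne_zero _)
    have a3 : Continuous fun q : unitInterval × (↥(PolSp K D) × OnePoint ℝ) =>
        (gdata_inv (D k)).pgS (q.2.1.1 k) q.2.2 :=
      (continuous_base (K := K) (D := D) (gdata_inv (D k))).comp continuous_snd
    exact (a1.mul a2).mul a3
  let Vc : C(unitInterval × (↥(PolSp K D) × OnePoint ℝ), ↥(UK K)) := ⟨fun q => ⟨V q, hVm q⟩, hVc.subtype_mk _⟩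
  let G₁ : C(↥(PolSp K D) × OnePoint ℝ, ↥(UK K)) := ⟨fun p => Vc (1, p), by fun_prop⟩
  have hV0 : ∀ p, Vc (0, p) = G p := by
    rintro ⟨f, s⟩
    apply Subtype.ext
    funext k
    rw [hG, hκ]
    show Complex.exp ((1 - ((0 : unitInterval) : ℝ)) * κ k (f, s)) * cay s ^ nn k * (gdata_inv (D k)).pgS (f.1 k) s = _
    simp
  refine comp_homotopic (G₁ := G₁) ?_ ?_ ?_
  · intro f k
    rw [hG, h1, GData.pgS_infty, mul_one]
  · refine ⟨⟨⟨Vc, hV0, fun p => rfl⟩, ?_⟩⟩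
    rintro u ⟨f, s⟩ hs
    simp only [Set.mem_ofPred_eq] at hs
    subst hs
    show Vc (u, (f, OnePoint.infty)) = G (f, OnePoint.infty)
    apply Subtype.ext
    funext k
    rw [hG, h1, GData.pgS_infty, mul_one]
    show Complex.exp ((1 - (u : ℝ)) * κ k (f, OnePoint.infty)) * cay OnePoint.infty ^ nn k *
      (gdata_inv (D k)).pgS (f.1 k) OnePoint.infty = 1
    rw [hκ0, GData.pgS_infty, cay_infty]; simp
  · refine comp_of_gdata R hR hK m hm _ (fun k => gdata_cay (nn k) (D k)) G₁ fun f s k => ?_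
    rw [pgS_cay]
    show Complex.exp ((1 - ((1 : unitInterval) : ℝ)) * κ k (f, s)) * cay s ^ nn k * (gdata_inv (D k)).pgS (f.1 k) s = _
    simp

lemma singleton_mem_KC (F : Fan n) (N : Fin r → Fin n → ℤ) (hPG : IsPrimGens F N) (k : Fin r) :
    {k} ∈ KC F N := by
  show coneIdx N {k} ∈ F.cones
  have : coneIdx N {k} = ray (zr (N k)) := by
    ext x
    constructor
    · rintro ⟨lam, h, rfl⟩
      exact ⟨lam k, h k, by simp⟩
    · rintro ⟨t, ht, rfl⟩
      exact ⟨fun _ => t, fun _ => ht, by simp⟩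
  rw [this]; exact hPG.ray_mem k

lemma exists_primitive {K : Set (Finset (Fin r))} (σ : Finset (Fin r)) (hσ : σ ∉ K) :
    ∃ τ ⊆ σ, PrimitiveSet K τ := by
  induction σ using Finset.strongInduction with
  | H σ ih =>
    by_cases h : ∀ t ⊂ σ, t ∈ K
    · exact ⟨σ, le_rfl, hσ, h⟩
    · push Not at h
      obtain ⟨t, ht, htK⟩ := h
      obtain ⟨τ, h1, h2⟩ := ih t ht htK
      exact ⟨τ, h1.trans ht.subset, h2⟩

lemma rmin_le {K : Set (Finset (Fin r))} (σ : Finset (Fin r)) (hσ : σ ∉ K) : rmin K ≤ σ.card := by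
  obtain ⟨τ, h1, h2⟩ := exists_primitive σ hσ
  have h3 : rmin K ≤ τ.card := Nat.sInf_le (s := {m | ∃ s : Finset (Fin r), PrimitiveSet K s ∧ s.card = m}) ⟨τ, h2, rfl⟩
  exact h3.trans (Finset.card_le_card h1)

theorem main_aux (F : Fan n) (N : Fin r → Fin n → ℤ)
    (hPG : IsPrimGens F N) (hNS : F.NonSingular)
    (D D' : Fin r → ℕ) (hD : ∀ k, D k ≤ D' k)
    (φ : ℂ → ℂ) (hφ : AdmissiblePhi ((∑ k, D k : ℕ) : ℝ) φ)
    (xpt : Fin r → ℂ) (hx : ∀ k, ((∑ k, D k : ℕ) : ℝ) < (xpt k).re)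
    (hxinj : Function.Injective xpt)
    (j₀ : C(↥(PolSp (KC F N) D'),
        Loop ↥(UK (KC F N)) (onesUK (empty_mem_KC F N))))
    (hj₀ : IsLiftOfID N (KC F N) (empty_mem_KC F N) D' ⇑j₀)
    (s₀ : C(↥(PolSp (KC F N) D), ↥(PolSp (KC F N) D')))
    (hs₀ : StabSpec (KC F N) φ xpt D D' ⇑s₀) :
    HomotopyEquivThrough (j₀.comp s₀) (dBound (KC F N) D) := by
  intro x q hq
  have hK2 : ∀ σ, σ ∉ KC F N → 2 ≤ σ.card := by
    intro σ hσ
    by_contra hc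
    have : σ.card = 0 ∨ σ.card = 1 := by omega
    rcases this with h | h
    · rw [Finset.card_eq_zero] at h
      exact hσ (h ▸ empty_mem_KC F N)
    · obtain ⟨k, rfl⟩ := Finset.card_eq_one.1 h
      exact hσ (singleton_mem_KC F N hPG k)
  have hd : ∀ i, dmin D ≤ D i := fun i => Nat.sInf_le ⟨i, rfl⟩
  unfold dBound at hq
  obtain ⟨R, hR⟩ : ∃ R : ℕ, rmin (KC F N) = R + 1 := by
    rcases h : rmin (KC F N) with _ | R
    · rw [h] at hq; push_cast at hq
      have : (0 : ℤ) ≤ dmin D := by positivity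
      linarith [Int.natCast_nonneg q]
    · exact ⟨R, rfl⟩
  rw [hR] at hq
  have hq' : q + 2 ≤ 2 * R * dmin D := by
    zify
    push_cast at hq
    linarith
  have hR1 : 1 ≤ R := by
    rcases Nat.eq_zero_or_pos R with h | h
    · rw [h] at hq'; simp at hq'
    · exact h
  obtain ⟨m, hm⟩ : ∃ m, 2 * R * dmin D = m + 1 := ⟨2 * R * dmin D - 1, by omega⟩
  obtain ⟨y, hy, T, hT, hred⟩ := reduce1 (empty_mem_KC F N) hK2 hD φ hφ xpt hx hxinj j₀ s₀ hs₀
  refine bij_of_comp (empty_mem_KC F N) (j₀.comp s₀) m q (by omega) (hred m ?_) x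
  obtain ⟨Λ, h0, h1, hΛ⟩ := lambda_exists F N hNS hPG (empty_mem_KC F N) j₀ hj₀ y hy T hT
  refine comp_final R hR1 (fun σ hσ => hR ▸ rmin_le σ hσ) m (fun i => ?_) _ Λ h0 h1 hΛ
  rw [← hm]
  exact Nat.mul_le_mul_left _ (hd i)

end T9
end ModT9

/-- When `∑ d_k n_k ≠ 0`, the composite
`j_D = j_{D₀} ∘ s_{D,D₀} : Pol*_D(S¹,X_Σ) → Ω U(K_Σ)` (for `D₀ = m₀ D*` as in (2.9.1))
is a homotopy equivalence through dimension `d(D,Σ)`. -/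
theorem polSpace_jD_composite_homotopyEquiv_through
    {n r : ℕ} (F : Fan n) (N : Fin r → Fin n → ℤ)
    (hPG : IsPrimGens F N) (hNS : F.NonSingular)
    (h1 : Cond1 N) (h2 : Cond2 N)
    (D : Fin r → ℕ) (hD : ∀ k, 0 < D k)
    (hsum : ∑ k, (D k : ℤ) • N k ≠ 0)
    (dstar : Fin r → ℕ) (hds : ∀ k, 0 < dstar k)
    (hdsum : ∑ k, (dstar k : ℤ) • N k = 0)
    (m₀ : ℕ) (hm₀ : ∀ k, D k < m₀ * dstar k)
    (φ : ℂ → ℂ) (hφ : AdmissiblePhi ((∑ k, D k : ℕ) : ℝ) φ)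
    (xpt : Fin r → ℂ) (hx : ∀ k, ((∑ k, D k : ℕ) : ℝ) < (xpt k).re)
    (hxinj : Function.Injective xpt)
    (j₀ : C(↥(PolSp (KC F N) fun k => m₀ * dstar k),
        Loop ↥(UK (KC F N)) (onesUK (empty_mem_KC F N))))
    (hj₀ : IsLiftOfID N (KC F N) (empty_mem_KC F N) (fun k => m₀ * dstar k) ⇑j₀)
    (s₀ : C(↥(PolSp (KC F N) D), ↥(PolSp (KC F N) fun k => m₀ * dstar k)))
    (hs₀ : StabSpec (KC F N) φ xpt D (fun k => m₀ * dstar k) ⇑s₀) :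
    HomotopyEquivThrough (j₀.comp s₀) (dBound (KC F N) D) := by
  exact main_aux F N hPG hNS D (fun k => m₀ * dstar k) (fun k => (hm₀ k).le) φ hφ xpt hx hxinj j₀ hj₀ s₀ hs₀

end Toric
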